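/- arXiv:1504.05275 — 3 statements merged into one kernel-verified Lean document; each statement's English description precedes it below -/
import Mathlib

section
/- Let f be an injective continuous map on a Polish space (X,d) and K a compact f-invariant set with f(K) = K. If the topological entropy h_top(f,K) > 0, then there exists a full horseshoe {U₁,U₂} for (f,K). -/
/-!
The horseshoe is found at a single scale around a single centre `p`: `U₁` and `U₂` consist of the
points of `K` near `p` and far from `p`.

Fix `ε` such that for arbitrarily large `n` there is an `(n, ε)`-separated set `E ⊆ K` with more
than `exp (h n)` points, and cover `K` by finitely many balls of radius `ε / 4`. For a time `k < n`
and a centre `p`, give `x` the symbol `A` if `f^k x` is within `ε / 4` of `p`, the symbol `B` if it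
is at distance at least `3 ε / 4`, and no symbol otherwise. Two distinct points of `E` then receive
opposite symbols at some coordinate `(k, p)`.

A variant of the Sauer–Shelah lemma for such partial words
(`card_le_of_card_shatteredFamilies_lt`) says that if `E` shatters fewer than `2 ^ m` families of
coordinates, then `|E| ≤ ∑_{i < m} C(N, i)`, where `N` is the number of coordinates. Exponential
size of `E` therefore forces exponentially many shattered families, hence a shattered family
containing a positive proportion of the coordinates (`exists_shatters_of_exp_lt_card`). The
pigeonhole principle over the centres gives one `p` for which, for infinitely many `n`, the interval
`[0, n)` contains an independence set of at least `c n` times (`exists_center_of_pos_entropy`).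

Independence sets form a hereditary, shift-invariant family determined by its finite members (by
compactness of `K`). For such a family the maximal number of elements in `[0, n)` is subadditive;
let `L ≥ c` be its limiting proportion. If every member had a prefix of bounded length with density
below `L' < L`, concatenating such prefixes would contradict the definition of `L`. So there are
members with all prefix densities up to any length almost `L`, and a limit along an ultrafilter has
all prefix densities at least `L`, hence density exactly `L` (`exists_density`).
-/

open MeasureTheory Filter Set Topology

section Deterministic

variable {X : Type*}

/-- `r_n(K, ε, f)`: the maximal cardinality of an `(n,ε)`-separated subset of `K`
for the Bowen–Dinaburg metrics `d_n(x,y) = max_{0 ≤ k ≤ n-1} d(f^k x, f^k y)`. -/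
noncomputable def detSepNum [PseudoMetricSpace X] (f : X → X) (K : Set X)
    (n : ℕ) (ε : ℝ) : ℕ :=
  sSup {m : ℕ | ∃ E : Finset X, ↑E ⊆ K ∧ E.card = m ∧
    ∀ x ∈ E, ∀ y ∈ E, x ≠ y → ∃ k < n, ε < dist (f^[k] x) (f^[k] y)}

/-- The Bowen–Dinaburg topological entropy
`h_top(f, K) = lim_{ε→0} limsup_n (1/n) log r_n(K, ε, f)`
(the limit as `ε → 0` is realized, by monotonicity in `ε`, as the supremum over `ε > 0`). -/
noncomputable def detTopEntropy [PseudoMetricSpace X] (f : X → X) (K : Set X) : EReal :=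
  ⨆ (ε : ℝ) (_ : 0 < ε), Filter.atTop.limsup (fun n : ℕ =>
    (((1 / (n : ℝ)) * Real.log (detSepNum f K n ε) : ℝ) : EReal))

/-- `{U₁, U₂}` is a full horseshoe (of two symbols) for `(f, K)`. -/
def DetFullHorseshoe [PseudoMetricSpace X] (f : X → X) (K : Set X) (U₁ U₂ : Set X) : Prop :=
  (U₁.Nonempty ∧ U₂.Nonempty ∧ IsClosed U₁ ∧ IsClosed U₂ ∧
    Bornology.IsBounded U₁ ∧ Bornology.IsBounded U₂ ∧
    ∃ δ : ℝ, 0 < δ ∧ ∀ x ∈ U₁, ∀ y ∈ U₂, δ ≤ dist x y) ∧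
  ∃ b : ℝ, 0 < b ∧ ∃ J : Set ℕ, ∃ c : ℝ, b ≤ c ∧
    Tendsto (fun m : ℕ => ((J ∩ Set.Iio m).ncard : ℝ) / m) atTop (𝓝 c) ∧
    ∀ s : ℕ → Fin 2, ∃ x ∈ K, ∀ j ∈ J,
      f^[j] x ∈ (if s j = 0 then U₁ else U₂) ∩ K

end Deterministic

/-! ### Shattering for partially defined two-symbol words -/

section Combinatorics

/-- A family of coordinates `W` is shattered by `E` if every assignment of the symbols `A`, `B` to
the elements of `W` is realized by a point of `E`. The sets `A z` and `B z` need not cover the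
whole space, so that a point may carry no symbol at `z`. -/
def PartialShatters {α ζ : Type*} (A B : ζ → Set α) (E : Finset α) (W : Finset ζ) : Prop :=
  ∀ T : Set ζ, ∃ x ∈ E, ∀ z ∈ W, (z ∈ T → x ∈ A z) ∧ (z ∉ T → x ∈ B z)

/-- The subfamilies of `Z` shattered by `E`. -/
noncomputable def shatteredFamilies {α ζ : Type*} (A B : ζ → Set α) (E : Finset α)
    (Z : Finset ζ) : Finset (Finset ζ) :=
  open Classical in Z.powerset.filter (PartialShatters A B E)

theorem mem_shatteredFamilies {α ζ : Type*} {A B : ζ → Set α} {E : Finset α}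
    {Z W : Finset ζ} :
    W ∈ shatteredFamilies A B E Z ↔ W ⊆ Z ∧ PartialShatters A B E W := by
  simp [shatteredFamilies]

theorem PartialShatters.mono {α ζ : Type*} {A B : ζ → Set α} {E E' : Finset α}
    {W : Finset ζ} (h : PartialShatters A B E W) (hE : E ⊆ E') : PartialShatters A B E' W := by
  intro T
  obtain ⟨x, hx, h'⟩ := h T
  exact ⟨x, hE hx, h'⟩

theorem eq_empty_of_card_shatteredFamilies {α ζ : Type*} {A B : ζ → Set α} {E : Finset α}
    {Z : Finset ζ} (h : (shatteredFamilies A B E Z).card = 0) : E = ∅ := by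
  by_contra hne
  obtain ⟨x, hx⟩ := Finset.nonempty_iff_ne_empty.mpr hne
  rw [Finset.card_eq_zero] at h
  have : (∅ : Finset ζ) ∈ shatteredFamilies A B E Z :=
    mem_shatteredFamilies.mpr ⟨by simp, fun T => ⟨x, hx, by simp⟩⟩
  simp [h] at this

/-- A family shattered by both halves of `E` stays shattered by `E` after adding `z`, so counting
the union and the intersection of the two collections of shattered families gives the bound. -/
theorem card_shatteredFamilies_add_le {α ζ : Type*} [DecidableEq ζ] {A B : ζ → Set α}
    {E EA EB : Finset α} {Z : Finset ζ} {z : ζ} (hz : z ∉ Z)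
    (hA : EA ⊆ E) (hB : EB ⊆ E) (hA' : ∀ x ∈ EA, x ∈ A z) (hB' : ∀ x ∈ EB, x ∈ B z) :
    (shatteredFamilies A B EA Z).card + (shatteredFamilies A B EB Z).card
      ≤ (shatteredFamilies A B E (insert z Z)).card := by
  rw [← Finset.card_union_add_card_inter]
  set P := shatteredFamilies A B EA Z
  set Q := shatteredFamilies A B EB Z
  have hinj : Set.InjOn (fun W : Finset ζ => insert z W) (P ∩ Q : Finset (Finset ζ)) := by
    intro W hW W' hW' h
    have h1 : z ∉ W := fun h =>
      hz ((mem_shatteredFamilies.mp (Finset.mem_inter.mp (Finset.mem_coe.mp hW)).1).1 h)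
    have h2 : z ∉ W' := fun h =>
      hz ((mem_shatteredFamilies.mp (Finset.mem_inter.mp (Finset.mem_coe.mp hW')).1).1 h)
    have := congrArg (fun V => Finset.erase V z) h
    simpa [Finset.erase_insert h1, Finset.erase_insert h2] using this
  rw [← Finset.card_image_of_injOn hinj, ← Finset.card_union_of_disjoint]
  · apply Finset.card_le_card
    intro W hW
    rw [Finset.mem_union, Finset.mem_union, Finset.mem_image] at hW
    rcases hW with (h | h) | ⟨V, hV, rfl⟩
    · obtain ⟨h1, h2⟩ := mem_shatteredFamilies.mp h
      exact mem_shatteredFamilies.mpr ⟨h1.trans (Finset.subset_insert _ _), h2.mono hA⟩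
    · obtain ⟨h1, h2⟩ := mem_shatteredFamilies.mp h
      exact mem_shatteredFamilies.mpr ⟨h1.trans (Finset.subset_insert _ _), h2.mono hB⟩
    · obtain ⟨hVP, hVQ⟩ := Finset.mem_inter.mp hV
      obtain ⟨h1, h2⟩ := mem_shatteredFamilies.mp hVP
      obtain ⟨-, h3⟩ := mem_shatteredFamilies.mp hVQ
      refine mem_shatteredFamilies.mpr ⟨Finset.insert_subset_insert _ h1, fun T => ?_⟩
      by_cases hT : z ∈ T
      · obtain ⟨x, hx, h⟩ := h2 T
        refine ⟨x, hA hx, fun y hy => ?_⟩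
        rcases Finset.mem_insert.mp hy with rfl | hy
        · exact ⟨fun _ => hA' x hx, fun h => absurd hT h⟩
        · exact h y hy
      · obtain ⟨x, hx, h⟩ := h3 T
        refine ⟨x, hB hx, fun y hy => ?_⟩
        rcases Finset.mem_insert.mp hy with rfl | hy
        · exact ⟨fun h => absurd h hT, fun _ => hB' x hx⟩
        · exact h y hy
  · rw [Finset.disjoint_left]
    intro W hW hW'
    obtain ⟨V, -, rfl⟩ := Finset.mem_image.mp hW'
    have : z ∈ Z := by
      rcases Finset.mem_union.mp hW with h | h
      · exact (mem_shatteredFamilies.mp h).1 (Finset.mem_insert_self _ _)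
      · exact (mem_shatteredFamilies.mp h).1 (Finset.mem_insert_self _ _)
    exact hz this

theorem shatteredFamilies_card_le_insert {α ζ : Type*} [DecidableEq ζ] {A B : ζ → Set α}
    {E E' : Finset α} {Z : Finset ζ} {z : ζ} (hE : E' ⊆ E) :
    (shatteredFamilies A B E' Z).card ≤ (shatteredFamilies A B E (insert z Z)).card := by
  apply Finset.card_le_card
  intro W hW
  obtain ⟨h1, h2⟩ := mem_shatteredFamilies.mp hW
  exact mem_shatteredFamilies.mpr ⟨h1.trans (Finset.subset_insert _ _), h2.mono hE⟩

/-- Sauer–Shelah type bound for pairwise separated families of partially defined two-symbol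
words. At each coordinate one of the two symbols is carried by a part of `E` that shatters at
most half of the families; splitting off that part matches Pascal's rule. -/
theorem card_le_of_card_shatteredFamilies_lt {α ζ : Type*} {A B : ζ → Set α}
    (hAB : ∀ z, Disjoint (A z) (B z)) (Z : Finset ζ) :
    ∀ (m : ℕ) (E : Finset α),
      (∀ x ∈ E, ∀ y ∈ E, x ≠ y → ∃ z ∈ Z, (x ∈ A z ∧ y ∈ B z) ∨ (x ∈ B z ∧ y ∈ A z)) →
      (shatteredFamilies A B E Z).card < 2 ^ m →
      E.card ≤ ∑ i ∈ Finset.range m, Z.card.choose i := by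
  classical
  induction Z using Finset.induction_on with
  | empty =>
    intro m E hsep hsh
    rcases m with _ | m
    · have : E = ∅ := eq_empty_of_card_shatteredFamilies (by simpa using hsh)
      simp [this]
    · have h1 : E.card ≤ 1 := by
        rw [Finset.card_le_one]
        intro x hx y hy
        by_contra hne
        simpa using hsep x hx y hy hne
      rw [Finset.sum_range_succ']
      simp only [Finset.card_empty, Nat.choose_zero_right]
      omega
  | insert z Z hz ih =>
    intro m E hsep hsh
    rcases m with _ | m
    · have : E = ∅ := eq_empty_of_card_shatteredFamilies (by simpa using hsh)
      simp [this]
    -- `C` is the symbol at `z` carried by the part with fewer shattered families.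
    have key : ∀ C : Set α, (C = A z ∨ C = B z) →
        (shatteredFamilies A B (E.filter (· ∈ C)) Z).card < 2 ^ m →
        E.card ≤ ∑ i ∈ Finset.range (m + 1), (insert z Z).card.choose i := by
      intro C hC hlt
      have h1 := ih m (E.filter (· ∈ C)) (by
        intro x hx y hy hne
        rw [Finset.mem_filter] at hx hy
        obtain ⟨w, hw, h⟩ := hsep x hx.1 y hy.1 hne
        rcases Finset.mem_insert.mp hw with rfl | hw
        · exfalso
          have hd := Set.disjoint_left.mp (hAB w)
          rcases hC with rfl | rfl
          · rcases h with h | h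
            · exact hd hy.2 h.2
            · exact hd hx.2 h.1
          · rcases h with h | h
            · exact hd h.1 hx.2
            · exact hd h.2 hy.2
        · exact ⟨w, hw, h⟩) hlt
      have h2 := ih (m + 1) (E.filter (¬ · ∈ C)) (by
        intro x hx y hy hne
        rw [Finset.mem_filter] at hx hy
        obtain ⟨w, hw, h⟩ := hsep x hx.1 y hy.1 hne
        rcases Finset.mem_insert.mp hw with rfl | hw
        · exfalso
          rcases hC with rfl | rfl
          · rcases h with h | h
            · exact hx.2 h.1
            · exact hy.2 h.2
          · rcases h with h | h
            · exact hy.2 h.2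
            · exact hx.2 h.1
        · exact ⟨w, hw, h⟩)
        (lt_of_le_of_lt (shatteredFamilies_card_le_insert (Finset.filter_subset _ _)) hsh)
      rw [← Finset.card_filter_add_card_filter_not (s := E) (· ∈ C),
        Finset.card_insert_of_notMem hz, Finset.sum_range_succ']
      rw [Finset.sum_range_succ'] at h2
      simp only [Nat.choose_succ_succ', Finset.sum_add_distrib, Nat.choose_zero_right] at h2 ⊢
      omega
    have hadd := card_shatteredFamilies_add_le (A := A) (B := B) (E := E)
      (EA := E.filter (· ∈ A z)) (EB := E.filter (· ∈ B z)) hz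
      (Finset.filter_subset _ _) (Finset.filter_subset _ _) (by simp) (by simp)
    rcases lt_or_ge (shatteredFamilies A B (E.filter (· ∈ A z)) Z).card (2 ^ m) with h | h
    · exact key _ (Or.inl rfl) h
    · refine key _ (Or.inr rfl) ?_
      rw [pow_succ] at hsh
      omega

theorem exists_sum_choose_le_exp {η : ℝ} (hη : 0 < η) :
    ∃ c : ℝ, 0 < c ∧ ∀ n d : ℕ, (d : ℝ) ≤ c * n →
      ((∑ i ∈ Finset.range (d + 1), n.choose i : ℕ) : ℝ) ≤ Real.exp (η * n) := by
  -- Chernoff bound: multiply the sum by `t ^ d` and compare with `(1 + t) ^ n`,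
  -- where `t = exp (-a)`.
  obtain ⟨a, ha, hat⟩ : ∃ a : ℝ, 0 < a ∧ Real.exp (-a) ≤ η / 2 := by
    refine ⟨max 1 (-Real.log (η / 2)), by positivity, ?_⟩
    rw [← Real.le_log_iff_exp_le (by positivity)]
    linarith [le_max_right 1 (-Real.log (η / 2))]
  refine ⟨η / (2 * a), by positivity, fun n d hd => ?_⟩
  set t := Real.exp (-a) with ht
  have ht0 : 0 < t := Real.exp_pos _
  have ht1 : t ≤ 1 := Real.exp_le_one_iff.mpr (by linarith)
  have h1 : ((∑ i ∈ Finset.range (d + 1), n.choose i : ℕ) : ℝ) * t ^ d ≤ (1 + t) ^ n := by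
    push_cast
    rw [Finset.sum_mul, add_comm 1 t, add_pow]
    have h2 : ∀ i ∈ Finset.range (d + 1), (n.choose i : ℝ) * t ^ d ≤ t ^ i * n.choose i := by
      intro i hi
      rw [mul_comm]
      gcongr ?_ * _
      exact pow_le_pow_of_le_one ht0.le ht1 (by simpa [Nat.lt_succ_iff] using hi)
    refine (Finset.sum_le_sum h2).trans ?_
    simp only [one_pow, mul_one]
    -- The case `n < d` is covered by passing through `range (max d n + 1)`: the additional
    -- binomials vanish.
    calc ∑ i ∈ Finset.range (d + 1), t ^ i * (n.choose i : ℝ)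
        ≤ ∑ i ∈ Finset.range (max d n + 1), t ^ i * (n.choose i : ℝ) := by
          apply Finset.sum_le_sum_of_subset_of_nonneg
          · intro i hi
            simp only [Finset.mem_range] at hi ⊢
            omega
          · intros; positivity
      _ = ∑ i ∈ Finset.range (n + 1), t ^ i * (n.choose i : ℝ) := by
          symm
          apply Finset.sum_subset
          · intro i hi
            simp only [Finset.mem_range] at hi ⊢
            omega
          · intro i _ hi
            rw [Nat.choose_eq_zero_of_lt (by simpa using hi)]
            simp
  have h3 : (1 + t) ^ n ≤ Real.exp (t * n) := by
    rw [mul_comm, Real.exp_nat_mul]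
    gcongr
    linarith [Real.add_one_le_exp t]
  have h4 : t ^ d = Real.exp (-(a * d)) := by
    rw [ht, ← Real.exp_nat_mul]; congr 1; ring
  have h5 : ((∑ i ∈ Finset.range (d + 1), n.choose i : ℕ) : ℝ)
      ≤ Real.exp (t * n) * Real.exp (a * d) := by
    have h6 := h1.trans h3
    rw [h4, Real.exp_neg, ← div_eq_mul_inv, div_le_iff₀ (Real.exp_pos _)] at h6
    exact h6
  refine h5.trans ?_
  rw [← Real.exp_add, Real.exp_le_exp]
  have h7 : a * d ≤ η / 2 * n := by
    calc a * d ≤ a * (η / (2 * a) * n) := by gcongr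
      _ = η / 2 * n := by field_simp
  have h8 : t * n ≤ η / 2 * n := by gcongr
  linarith

/-- An exponentially large pairwise separated set shatters a positive proportion of the
coordinates. -/
theorem exists_shatters_of_exp_lt_card {η : ℝ} (hη : 0 < η) :
    ∃ c : ℝ, 0 < c ∧ ∀ {α ζ : Type _} (A B : ζ → Set α), (∀ z, Disjoint (A z) (B z)) →
      ∀ (Z : Finset ζ) (E : Finset α),
      (∀ x ∈ E, ∀ y ∈ E, x ≠ y → ∃ z ∈ Z, (x ∈ A z ∧ y ∈ B z) ∨ (x ∈ B z ∧ y ∈ A z)) →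
      Real.exp (η * Z.card) < E.card →
      ∃ W ⊆ Z, PartialShatters A B E W ∧ c * Z.card ≤ W.card := by
  obtain ⟨c₁, hc₁, h₁⟩ := exists_sum_choose_le_exp hη
  obtain ⟨c₂, hc₂, h₂⟩ := exists_sum_choose_le_exp (mul_pos hc₁ (Real.log_pos one_lt_two))
  refine ⟨c₂, hc₂, fun A B hAB Z E hsep hcard => ?_⟩
  have hm := h₁ Z.card ⌊c₁ * Z.card⌋₊ (Nat.floor_le (by positivity))
  have hsh : 2 ^ (⌊c₁ * Z.card⌋₊ + 1) ≤ (shatteredFamilies A B E Z).card := by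
    by_contra hlt
    have h := card_le_of_card_shatteredFamilies_lt hAB Z _ E hsep (not_le.mp hlt)
    have h' : (E.card : ℝ) ≤ _ := Nat.cast_le.mpr h
    linarith
  by_contra hno
  push Not at hno
  have hd := h₂ Z.card ⌊c₂ * Z.card⌋₊ (Nat.floor_le (by positivity))
  have hle : (shatteredFamilies A B E Z).card
      ≤ ∑ i ∈ Finset.range (⌊c₂ * Z.card⌋₊ + 1), Z.card.choose i := by
    classical
    have hsub : shatteredFamilies A B E Z
        ⊆ (Finset.range (⌊c₂ * Z.card⌋₊ + 1)).biUnion (fun i => Z.powersetCard i) := by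
      intro W hW
      obtain ⟨hW1, hW2⟩ := mem_shatteredFamilies.mp hW
      simp only [Finset.mem_biUnion, Finset.mem_range, Finset.mem_powersetCard]
      exact ⟨W.card, Nat.lt_succ_of_le (Nat.le_floor (hno W hW1 hW2).le), hW1, rfl⟩
    refine (Finset.card_le_card hsub).trans (Finset.card_biUnion_le.trans ?_)
    simp
  have h3 : ((2 : ℝ) ^ (⌊c₁ * Z.card⌋₊ + 1)) ≤ Real.exp (c₁ * Real.log 2 * Z.card) := by
    refine le_trans ?_ hd
    calc ((2 : ℝ) ^ (⌊c₁ * Z.card⌋₊ + 1)) = ((2 ^ (⌊c₁ * Z.card⌋₊ + 1) : ℕ) : ℝ) := by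
          push_cast; rfl
      _ ≤ _ := Nat.cast_le.mpr (hsh.trans hle)
  have h4 : Real.exp (c₁ * Real.log 2 * Z.card) < (2 : ℝ) ^ (⌊c₁ * Z.card⌋₊ + 1) := by
    rw [← Real.lt_log_iff_exp_lt (by positivity), Real.log_pow]
    have h5 := Nat.lt_floor_add_one (c₁ * (Z.card : ℝ))
    have h6 := Real.log_pos one_lt_two
    push_cast
    nlinarith
  linarith

end Combinatorics

/-! ### Densities in shift-invariant families of sets of naturals -/

section Density

/-- The number of elements of `J` below `n`. -/
noncomputable def prefixCount (J : Set ℕ) (n : ℕ) : ℕ := (J ∩ Set.Iio n).ncard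

theorem prefixCount_le (J : Set ℕ) (n : ℕ) : prefixCount J n ≤ n := by
  have := Set.ncard_le_ncard (Set.inter_subset_right : J ∩ Set.Iio n ⊆ Set.Iio n)
    (Set.finite_Iio n)
  simpa [prefixCount, Set.ncard_eq_toFinset_card'] using this

theorem prefixCount_add (J : Set ℕ) (m n : ℕ) :
    prefixCount J (m + n) = prefixCount J m + prefixCount {j | j + m ∈ J} n := by
  unfold prefixCount
  have h : J ∩ Set.Iio (m + n)
      = (J ∩ Set.Iio m) ∪ (fun j => j + m) '' ({j | j + m ∈ J} ∩ Set.Iio n) := by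
    ext j
    simp only [Set.mem_inter_iff, Set.mem_Iio, Set.mem_union, Set.mem_image, Set.mem_ofPred_eq]
    constructor
    · rintro ⟨h1, h2⟩
      rcases lt_or_ge j m with h | h
      · exact Or.inl ⟨h1, h⟩
      · refine Or.inr ⟨j - m, ⟨?_, by omega⟩, by omega⟩
        rwa [Nat.sub_add_cancel h]
    · rintro (⟨h1, h2⟩ | ⟨i, ⟨h1, h2⟩, rfl⟩)
      · exact ⟨h1, by omega⟩
      · exact ⟨h1, by omega⟩
  rw [h, Set.ncard_union_eq]
  · rw [Set.ncard_image_of_injective _ (add_left_injective m)]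
  · rw [Set.disjoint_left]
    rintro _ ⟨-, h1⟩ ⟨i, -, rfl⟩
    simp only [Set.mem_Iio] at h1
    omega

theorem shift_mem_of_shift_one {P : Set (Set ℕ)}
    (hshift : ∀ J ∈ P, {j | j + 1 ∈ J} ∈ P) (k : ℕ) : ∀ J ∈ P, {j | j + k ∈ J} ∈ P := by
  induction k with
  | zero => intro J hJ; simpa using hJ
  | succ k ih =>
    intro J hJ
    have := hshift _ (ih J hJ)
    simpa [add_assoc, add_comm 1 k] using this

/-- The maximal number of elements below `n` of a member of `P`. -/
noncomputable def maxPrefixCount (P : Set (Set ℕ)) (n : ℕ) : ℕ :=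
  sSup ((fun J => prefixCount J n) '' P)

theorem prefixCount_le_max {P : Set (Set ℕ)} {J : Set ℕ} (hJ : J ∈ P) (n : ℕ) :
    prefixCount J n ≤ maxPrefixCount P n :=
  le_csSup ⟨n, by rintro _ ⟨J, -, rfl⟩; exact prefixCount_le J n⟩ ⟨J, hJ, rfl⟩

theorem subadditive_maxPrefixCount {P : Set (Set ℕ)} (hne : P.Nonempty)
    (hshift : ∀ J ∈ P, {j | j + 1 ∈ J} ∈ P) :
    Subadditive (fun n => (maxPrefixCount P n : ℝ)) := by
  intro m n
  have : maxPrefixCount P (m + n) ≤ maxPrefixCount P m + maxPrefixCount P n := by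
    apply csSup_le (hne.image _)
    rintro _ ⟨J, hJ, rfl⟩
    simp only [prefixCount_add]
    exact add_le_add (prefixCount_le_max hJ m)
      (prefixCount_le_max (shift_mem_of_shift_one hshift m J hJ) n)
  simp only
  exact_mod_cast this

/-- If every member of `P` has a short prefix of density below `L`, then cutting such prefixes
off repeatedly bounds all prefix counts. -/
theorem prefixCount_le_of_forall_exists {P : Set (Set ℕ)}
    (hshift : ∀ J ∈ P, {j | j + 1 ∈ J} ∈ P) {L : ℝ} (hL : 0 ≤ L) {m : ℕ}
    (h : ∀ J ∈ P, ∃ k ≤ m, (prefixCount J k : ℝ) < L * k) (n : ℕ) :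
    ∀ J ∈ P, (prefixCount J n : ℝ) ≤ L * n + m := by
  induction n using Nat.strong_induction_on with
  | _ n ih =>
    intro J hJ
    obtain ⟨k, hkm, hk⟩ := h J hJ
    have hk0 : k ≠ 0 := by
      rintro rfl
      simp only [Nat.cast_zero, mul_zero] at hk
      exact absurd hk (not_lt.mpr (Nat.cast_nonneg _))
    rcases lt_or_ge n k with hn | hn
    · have h1 : (prefixCount J n : ℝ) ≤ n := by exact_mod_cast prefixCount_le J n
      have h2 : (n : ℝ) ≤ m := by exact_mod_cast (by omega : n ≤ m)
      have : 0 ≤ L * n := by positivity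
      linarith
    · obtain ⟨r, rfl⟩ := Nat.exists_eq_add_of_le hn
      have h1 := ih r (by omega) _ (shift_mem_of_shift_one hshift k J hJ)
      rw [prefixCount_add]
      push_cast
      linarith

/-- A shift-invariant hereditary family of sets of naturals that is determined by its finite
members, and that has members of proportion at least `c` in arbitrarily long initial intervals, contains a set whose density exists and is at least `c`. The density obtained is the
Fekete limit `L` of `maxPrefixCount P n / n`: some member has all its prefix densities at
least `L`. -/
theorem exists_density {P : Set (Set ℕ)}
    (hmono : ∀ J ∈ P, ∀ J' ⊆ J, J' ∈ P)
    (hshift : ∀ J ∈ P, {j | j + 1 ∈ J} ∈ P)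
    (hfin : ∀ J : Set ℕ, (∀ F : Finset ℕ, ↑F ⊆ J → ↑F ∈ P) → J ∈ P)
    {c : ℝ} (hc : 0 < c)
    (hfreq : ∃ᶠ n : ℕ in atTop, 0 < n ∧ ∃ J ∈ P, c * n ≤ prefixCount J n) :
    ∃ J ∈ P, ∃ L : ℝ, c ≤ L ∧
      Tendsto (fun m : ℕ => (prefixCount J m : ℝ) / m) atTop (𝓝 L) := by
  have hne : P.Nonempty := by
    obtain ⟨n, -, J, hJ, -⟩ := hfreq.exists
    exact ⟨J, hJ⟩
  have hsub := subadditive_maxPrefixCount hne hshift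
  have hbdd : BddBelow (Set.range fun n : ℕ => (maxPrefixCount P n : ℝ) / n) :=
    ⟨0, by rintro _ ⟨n, rfl⟩; positivity⟩
  have hlim := hsub.tendsto_lim hbdd
  set L := hsub.lim with hLdef
  have hcL : c ≤ L := by
    refine ge_of_tendsto_of_frequently hlim (hfreq.mono ?_)
    rintro n ⟨hn, J, hJ, h⟩
    rw [le_div_iff₀ (by exact_mod_cast hn)]
    exact h.trans (by exact_mod_cast prefixCount_le_max hJ n)
  have hlow : ∀ m : ℕ, ∀ L' : ℝ, 0 ≤ L' → L' < L →
      ∃ J ∈ P, ∀ k ≤ m, L' * k ≤ (prefixCount J k : ℝ) := by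
    intro m L' hL' hlt
    by_contra hno
    push Not at hno
    have h1 := prefixCount_le_of_forall_exists hshift hL' hno
    have h2 : ∀ n : ℕ, 0 < n → (maxPrefixCount P n : ℝ) / n ≤ L' + m / n := by
      intro n hn
      have hn' : (0 : ℝ) < n := by exact_mod_cast hn
      have hmem : maxPrefixCount P n ∈ (fun J => prefixCount J n) '' P :=
        Nat.sSup_mem (hne.image _) ⟨n, by rintro _ ⟨J, -, rfl⟩; exact prefixCount_le J n⟩
      obtain ⟨J, hJ, hJn⟩ := hmem
      rw [← hJn, div_le_iff₀ hn', add_mul, div_mul_cancel₀ _ hn'.ne']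
      exact h1 n J hJ
    have h3 : Tendsto (fun n : ℕ => L' + (m : ℝ) / n) atTop (𝓝 (L' + 0)) :=
      tendsto_const_nhds.add (tendsto_const_div_atTop_nhds_zero_nat _)
    have := le_of_tendsto_of_tendsto hlim h3 (by
      filter_upwards [eventually_gt_atTop 0] with n hn using h2 n hn)
    linarith
  have hpos : 0 < L := hc.trans_le hcL
  have hseq : ∀ m : ℕ, ∃ J ∈ P, ∀ k ≤ m,
      (L - L / ((m : ℝ) + 1)) * k ≤ (prefixCount J k : ℝ) := by
    intro m
    refine hlow m _ ?_ ?_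
    · rw [sub_nonneg, div_le_iff₀ (by positivity)]
      nlinarith [Nat.cast_nonneg (α := ℝ) m]
    · have : 0 < L / ((m : ℝ) + 1) := by positivity
      linarith
  choose Js hJsP hJs using hseq
  -- The limit of the sets `Js m` along a nonprincipal ultrafilter.
  let u : Ultrafilter ℕ := Filter.hyperfilter ℕ
  have hu : (u : Filter ℕ) ≤ atTop := by
    have := Filter.hyperfilter_le_cofinite (α := ℕ)
    rwa [Nat.cofinite_eq_atTop] at this
  let J : Set ℕ := {j | ∀ᶠ m in (u : Filter ℕ), j ∈ Js m}
  have hJev : ∀ j, ∀ᶠ m in (u : Filter ℕ), (j ∈ Js m ↔ j ∈ J) := by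
    intro j
    by_cases hj : j ∈ J
    · filter_upwards [(show ∀ᶠ m in (u : Filter ℕ), j ∈ Js m from hj)] with m hm
      exact ⟨fun _ => hj, fun _ => hm⟩
    · have hj' : ∀ᶠ m in (u : Filter ℕ), j ∉ Js m := Ultrafilter.eventually_not.mpr hj
      filter_upwards [hj'] with m hm
      exact ⟨fun h => absurd h hm, fun h => absurd h hj⟩
  have hJfin : ∀ k, ∀ᶠ m in (u : Filter ℕ), ∀ j ∈ Finset.range k, (j ∈ Js m ↔ j ∈ J) := by
    intro k
    rw [Filter.eventually_all_finset]
    exact fun j _ => hJev j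
  have hJP : J ∈ P := by
    apply hfin
    intro F hF
    have : ∀ᶠ m in (u : Filter ℕ), ∀ j ∈ F, j ∈ Js m := by
      rw [Filter.eventually_all_finset]
      exact fun j hj => hF hj
    obtain ⟨m, hm⟩ := this.exists
    exact hmono _ (hJsP m) _ hm
  have hJlow : ∀ k : ℕ, L * k ≤ (prefixCount J k : ℝ) := by
    intro k
    have h1 : ∀ᶠ m : ℕ in (u : Filter ℕ),
        (L - L / ((m : ℝ) + 1)) * k ≤ (prefixCount J k : ℝ) := by
      filter_upwards [hJfin k, hu (eventually_ge_atTop k)] with m hm hkm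
      have : prefixCount J k = prefixCount (Js m) k := by
        unfold prefixCount
        congr 1
        ext j
        simp only [Set.mem_inter_iff, Set.mem_Iio]
        constructor
        · rintro ⟨h, hj⟩; exact ⟨(hm j (Finset.mem_range.mpr hj)).mpr h, hj⟩
        · rintro ⟨h, hj⟩; exact ⟨(hm j (Finset.mem_range.mpr hj)).mp h, hj⟩
      rw [this]
      exact hJs m k hkm
    have h2 : Tendsto (fun m : ℕ => (L - L / ((m : ℝ) + 1)) * k) atTop (𝓝 ((L - 0) * k)) := by
      refine Tendsto.mul_const _ (tendsto_const_nhds.sub ?_)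
      have := (tendsto_one_div_add_atTop_nhds_zero_nat (𝕜 := ℝ)).const_mul L
      simpa only [mul_one_div, mul_zero] using this
    have := le_of_tendsto (h2.mono_left hu) h1
    simpa using this
  refine ⟨J, hJP, L, hcL, tendsto_of_tendsto_of_tendsto_of_le_of_le' tendsto_const_nhds hlim ?_ ?_⟩
  · filter_upwards [eventually_gt_atTop 0] with n hn
    rw [le_div_iff₀ (by exact_mod_cast hn)]
    exact hJlow n
  · filter_upwards with n
    gcongr
    exact prefixCount_le_max hJP n

end Density

/-! ### Independence sets and entropy -/

section Dynamics

variable {X : Type*}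

/-- The sets of times `J` along which every itinerary in `{U₁, U₂}` is realized in `K`. -/
def independenceSets (f : X → X) (K U₁ U₂ : Set X) : Set (Set ℕ) :=
  {J | ∀ s : ℕ → Fin 2, ∃ x ∈ K, ∀ j ∈ J, f^[j] x ∈ (if s j = 0 then U₁ else U₂) ∩ K}

theorem independenceSets_shift {f : X → X} {K U₁ U₂ : Set X} (hK : f '' K = K) :
    ∀ J ∈ independenceSets f K U₁ U₂, {j | j + 1 ∈ J} ∈ independenceSets f K U₁ U₂ := by
  intro J hJ s
  obtain ⟨x, hx, h⟩ := hJ (fun j => s (j - 1))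
  refine ⟨f x, hK ▸ Set.mem_image_of_mem f hx, fun j hj => ?_⟩
  have := h (j + 1) hj
  simpa [Function.iterate_succ_apply] using this

variable [MetricSpace X]

theorem independenceSets_of_finite {f : X → X} (hf : Continuous f) {K U₁ U₂ : Set X}
    (hK : IsCompact K) (h₁ : IsClosed U₁) (h₂ : IsClosed U₂) (J : Set ℕ)
    (hJ : ∀ F : Finset ℕ, ↑F ⊆ J → ↑F ∈ independenceSets f K U₁ U₂) :
    J ∈ independenceSets f K U₁ U₂ := by
  classical
  intro s
  have hne := hK.inter_iInter_nonempty
    (fun j : J => f^[(j : ℕ)] ⁻¹' ((if s j = 0 then U₁ else U₂) ∩ K)) (by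
      intro j
      refine IsClosed.preimage (hf.iterate _) (IsClosed.inter ?_ hK.isClosed)
      split_ifs <;> assumption) (by
      intro u
      obtain ⟨x, hx, h⟩ := hJ (u.image Subtype.val) (by
        intro j hj
        simp only [Finset.coe_image, Set.mem_image] at hj
        obtain ⟨i, -, rfl⟩ := hj
        exact i.2) s
      refine ⟨x, hx, ?_⟩
      simp only [Set.mem_iInter]
      intro j hj
      exact h j (by simpa using hj))
  obtain ⟨x, hx, h⟩ := hne
  simp only [Set.mem_iInter] at h
  exact ⟨x, hx, fun j hj => h ⟨j, hj⟩⟩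

/-- Positive entropy yields, at some scale, exponentially large separated sets. An unbounded set
of cardinalities would make `detSepNum` zero and hence its logarithm zero, so it does not occur
for the times selected here. -/
theorem exists_separated_of_pos_entropy {f : X → X} {K : Set X} (hpos : 0 < detTopEntropy f K) :
    ∃ ε : ℝ, 0 < ε ∧ ∃ h : ℝ, 0 < h ∧ ∃ᶠ n : ℕ in atTop, 0 < n ∧
      ∃ E : Finset X, ↑E ⊆ K ∧ Real.exp (h * n) < E.card ∧
        ∀ x ∈ E, ∀ y ∈ E, x ≠ y → ∃ k < n, ε < dist (f^[k] x) (f^[k] y) := by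
  unfold detTopEntropy at hpos
  simp only [lt_iSup_iff] at hpos
  obtain ⟨ε, hε, hlim⟩ := hpos
  obtain ⟨h, hh, hlt⟩ := EReal.lt_iff_exists_real_btwn.mp hlim
  have hh0 : 0 < h := by exact_mod_cast hh
  refine ⟨ε, hε, h, hh0, (Filter.frequently_lt_of_lt_limsup (by isBoundedDefault) hlt).mono ?_⟩
  intro n hn
  have hn' : h < (1 / (n : ℝ)) * Real.log (detSepNum f K n ε) := by exact_mod_cast hn
  have hn0 : 0 < n := by
    rcases Nat.eq_zero_or_pos n with rfl | h0
    · simp at hn'; linarith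
    · exact h0
  have hnR : (0 : ℝ) < n := by exact_mod_cast hn0
  have hlog : h * n < Real.log (detSepNum f K n ε) := by
    rwa [one_div, inv_mul_eq_div, lt_div_iff₀ hnR] at hn'
  have hr0 : detSepNum f K n ε ≠ 0 := by
    intro h0
    rw [h0] at hlog
    simp only [Nat.cast_zero, Real.log_zero] at hlog
    linarith [mul_pos hh0 hnR]
  have hexp : Real.exp (h * n) < detSepNum f K n ε :=
    (Real.lt_log_iff_exp_lt (by exact_mod_cast Nat.pos_of_ne_zero hr0)).mp hlog
  refine ⟨hn0, ?_⟩
  have hmem : detSepNum f K n ε ∈ {m : ℕ | ∃ E : Finset X, ↑E ⊆ K ∧ E.card = m ∧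
    ∀ x ∈ E, ∀ y ∈ E, x ≠ y → ∃ k < n, ε < dist (f^[k] x) (f^[k] y)} := by
    apply Nat.sSup_mem
    · exact ⟨0, ∅, by simp⟩
    · by_contra hb
      exact hr0 (Nat.sSup_of_not_bddAbove hb)
  obtain ⟨E, hEK, hEc, hE⟩ := hmem
  exact ⟨E, hEK, by rw [hEc]; exact hexp, hE⟩

/-- Positive entropy yields a centre `p` such that points of `K` near `p` and points of `K` far
from `p` have independence sets of proportion at least `c` in arbitrarily long initial
intervals. -/
theorem exists_center_of_pos_entropy {f : X → X} {K : Set X} (hK : IsCompact K)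
    (hKinv : f '' K = K) (hpos : 0 < detTopEntropy f K) :
    ∃ ε : ℝ, 0 < ε ∧ ∃ p : X, ∃ c : ℝ, 0 < c ∧ ∃ᶠ n : ℕ in atTop, 0 < n ∧
      ∃ J ∈ independenceSets f K ({x | dist x p ≤ ε / 4} ∩ K) ({x | ε * 3 / 4 ≤ dist x p} ∩ K),
        c * n ≤ prefixCount J n := by
  classical
  obtain ⟨ε, hε, h, hh, hfreq⟩ := exists_separated_of_pos_entropy hpos
  have hit : ∀ k : ℕ, ∀ x ∈ K, f^[k] x ∈ K := fun k x hx =>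
    (show Set.MapsTo f K K from fun y hy => hKinv ▸ Set.mem_image_of_mem f hy).iterate k hx
  obtain ⟨t, htfin, ht⟩ := Metric.totallyBounded_iff.mp hK.totallyBounded (ε / 4) (by positivity)
  lift t to Finset X using htfin
  have ht0 : 0 < t.card := by
    obtain ⟨n, -, E, hEK, hEc, -⟩ := hfreq.exists
    have hE0 : 0 < E.card := by
      have := (Real.exp_pos _).trans hEc
      exact_mod_cast this
    obtain ⟨x, hx⟩ := Finset.card_pos.mp hE0
    obtain ⟨p, hp, -⟩ := Set.mem_iUnion₂.mp (ht (hEK hx))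
    exact Finset.card_pos.mpr ⟨p, hp⟩
  have htR : (0 : ℝ) < t.card := by exact_mod_cast ht0
  obtain ⟨c, hc, hcomb⟩ := exists_shatters_of_exp_lt_card (div_pos hh htR)
  refine ⟨ε, hε, ?_⟩
  suffices hsuff : ∃ᶠ n : ℕ in atTop, ∃ p ∈ t, 0 < n ∧
      ∃ J ∈ independenceSets f K ({x | dist x p ≤ ε / 4} ∩ K) ({x | ε * 3 / 4 ≤ dist x p} ∩ K),
        c * n ≤ prefixCount J n by
    by_contra hno
    push Not at hno
    apply hsuff
    have hev : ∀ p ∈ t, ∀ᶠ n : ℕ in atTop, ¬ (0 < n ∧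
      ∃ J ∈ independenceSets f K ({x | dist x p ≤ ε / 4} ∩ K) ({x | ε * 3 / 4 ≤ dist x p} ∩ K),
        c * n ≤ prefixCount J n) := by
      intro p _
      have := hno p c hc
      simpa using this
    filter_upwards [(Filter.eventually_all_finset t).mpr hev] with n hn
    rintro ⟨p, hp, h'⟩
    exact hn p hp h'
  refine hfreq.mono ?_
  rintro n ⟨hn, E, hEK, hEc, hE⟩
  let A : ℕ × X → Set X := fun z => {x | dist (f^[z.1] x) z.2 ≤ ε / 4}
  let B : ℕ × X → Set X := fun z => {x | ε * 3 / 4 ≤ dist (f^[z.1] x) z.2}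
  obtain ⟨W, hWZ, hW, hWc⟩ := hcomb A B (by
      intro z
      rw [Set.disjoint_left]
      intro x h1 h2
      simp only [A, B, Set.mem_ofPred_eq] at h1 h2
      linarith) (Finset.range n ×ˢ t) E (by
      intro x hx y hy hne
      obtain ⟨k, hk, hd⟩ := hE x hx y hy hne
      obtain ⟨p, hp, hxp⟩ := Set.mem_iUnion₂.mp (ht (hit k x (hEK hx)))
      refine ⟨(k, p), Finset.mem_product.mpr ⟨Finset.mem_range.mpr hk, hp⟩, Or.inl ⟨?_, ?_⟩⟩
      · exact (Metric.mem_ball.mp hxp).le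
      · have h1 := dist_triangle_right (f^[k] x) (f^[k] y) p
        have h2 := Metric.mem_ball.mp hxp
        simp only [B, Set.mem_ofPred_eq]
        linarith) (by
      rw [Finset.card_product, Finset.card_range]
      push_cast
      rwa [show h / (t.card : ℝ) * (n * t.card) = h * n by field_simp])
  rw [Finset.card_product, Finset.card_range] at hWc
  push_cast at hWc
  -- Pigeonhole over the finitely many centres.
  have hsum : W.card = ∑ p ∈ t, (W.filter (fun z => z.2 = p)).card :=
    Finset.card_eq_sum_card_fiberwise (fun z hz => (Finset.mem_product.mp (hWZ hz)).2)
  obtain ⟨p, hp, hpc⟩ : ∃ p ∈ t, c * n ≤ ((W.filter (fun z => z.2 = p)).card : ℝ) := by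
    apply Finset.exists_le_of_sum_le (Finset.card_pos.mp ht0)
    rw [Finset.sum_const, nsmul_eq_mul]
    rw [hsum] at hWc
    push_cast at hWc
    linarith
  refine ⟨p, hp, hn, {k | (k, p) ∈ W}, ?_, ?_⟩
  · intro s
    obtain ⟨x, hx, h'⟩ := hW {z | s z.1 = 0}
    refine ⟨x, hEK hx, fun j hj => ?_⟩
    obtain ⟨hA, hB⟩ := h' (j, p) hj
    have hjK := hit j x (hEK hx)
    refine ⟨?_, hjK⟩
    split_ifs with hs
    · exact ⟨hA hs, hjK⟩
    · exact ⟨hB hs, hjK⟩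
  · refine hpc.trans (le_of_eq ?_)
    congr 1
    unfold prefixCount
    rw [← Set.ncard_coe_finset]
    symm
    have : (({k | (k, p) ∈ W} ∩ Set.Iio n : Set ℕ)) =
        Prod.fst '' ((W.filter (fun z => z.2 = p) : Finset (ℕ × X)) : Set (ℕ × X)) := by
      ext k
      simp only [Set.mem_inter_iff, Set.mem_ofPred_eq, Set.mem_Iio, Set.mem_image,
        Finset.coe_filter, Prod.exists]
      constructor
      · rintro ⟨h1, h2⟩
        exact ⟨k, p, ⟨h1, rfl⟩, rfl⟩
      · rintro ⟨a, b, ⟨h1, rfl⟩, rfl⟩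
        exact ⟨h1, Finset.mem_range.mp (Finset.mem_product.mp (hWZ h1)).1⟩
    rw [this]
    apply Set.InjOn.ncard_image
    rintro ⟨a, b⟩ hab ⟨a', b'⟩ hab' hh'
    simp only [Finset.coe_filter, Set.mem_ofPred_eq] at hab hab' hh'
    exact Prod.ext hh' (hab.2.trans hab'.2.symm)

end Dynamics

/-- **Corollary (full horseshoe for deterministic systems).**
Let `f` be an injective continuous map on a Polish space `(X,d)` and `K` a compact
`f`-invariant set with `f(K) = K`. If `h_top(f, K) > 0`, then there exists a full
horseshoe `{U₁, U₂}` for `(f, K)`. -/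
theorem det_full_horseshoe_of_pos_entropy
    {X : Type*} [MetricSpace X] [TopologicalSpace.SeparableSpace X] [CompleteSpace X]
    (f : X → X) (hfcont : Continuous f) (hfinj : Function.Injective f)
    (K : Set X) (hKcomp : IsCompact K) (hKinv : f '' K = K)
    (hpos : 0 < detTopEntropy f K) :
    ∃ U₁ U₂ : Set X, DetFullHorseshoe f K U₁ U₂ := by
  obtain ⟨ε, hε, p, c, hc, hfreq⟩ := exists_center_of_pos_entropy hKcomp hKinv hpos
  set U₁ : Set X := {x | dist x p ≤ ε / 4} ∩ K with hU₁
  set U₂ : Set X := {x | ε * 3 / 4 ≤ dist x p} ∩ K with hU₂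
  have hc₁ : IsClosed U₁ :=
    (isClosed_le (by fun_prop) continuous_const).inter hKcomp.isClosed
  have hc₂ : IsClosed U₂ :=
    (isClosed_le continuous_const (by fun_prop)).inter hKcomp.isClosed
  obtain ⟨J, hJ, L, hcL, hlim⟩ := exists_density (P := independenceSets f K U₁ U₂)
    (fun J hJ J' hJ' s => by
      obtain ⟨x, hx, h⟩ := hJ s
      exact ⟨x, hx, fun j hj => h j (hJ' hj)⟩)
    (independenceSets_shift hKinv)
    (independenceSets_of_finite hfcont hKcomp hc₁ hc₂) hc hfreq
  have hJne : J.Nonempty := by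
    by_contra hne
    rw [Set.not_nonempty_iff_eq_empty] at hne
    subst hne
    have h0 : L = 0 := tendsto_nhds_unique hlim (by simp [prefixCount])
    linarith
  obtain ⟨j, hj⟩ := hJne
  refine ⟨U₁, U₂, ⟨?_, ?_, hc₁, hc₂, hKcomp.isBounded.subset Set.inter_subset_right,
    hKcomp.isBounded.subset Set.inter_subset_right, ε / 2, by positivity, ?_⟩,
    c, hc, J, L, hcL, hlim, hJ⟩
  · obtain ⟨x, -, h⟩ := hJ (fun _ => 0)
    exact ⟨f^[j] x, by simpa using (h j hj).1⟩
  · obtain ⟨x, -, h⟩ := hJ (fun _ => 1)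
    exact ⟨f^[j] x, by simpa using (h j hj).1⟩
  · rintro x ⟨hx, -⟩ y ⟨hy, -⟩
    simp only [Set.mem_ofPred_eq] at hx hy
    have := dist_triangle_left y p x
    linarith
end

section
/- (Relative Pinsker formula) Let (X,B,μ,T) be an invertible Lebesgue system and A a sub-σ-algebra of B with T⁻¹A = A. Then for any finite measurable partitions α, β of X, h_μ(T, α∨β | A) = h_μ(T, β | A) + h_μ(T, α | β^T ∨ A), where β^T = ⋁_{i∈ℤ} T^{-i}β and α∨β = {A∩B : A ∈ α, B ∈ β}. -/
/-! A partition is handled as the family of fibres of a finite-valued function, and `H(f | C)` is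
the conditional entropy of that family. Three facts carry the proof: the chain rule
`H(f, g | C) = H(g | C) + H(f | σ(g) ∨ C)`, the monotonicity of `H(f | C)` in `C` (conditional
Jensen), and its continuity along increasing σ-algebras (Lévy's upward theorem). The chain rule
rests on the formula `P(s | σ(g) ∨ C) = P(s ∩ {g = j} | C) / P(g = j | C)` on `{g = j}`.

Let `f`, `g` encode `α`, `β`, let `C` be the invariant σ-algebra `A`, and write `f_0^n`, `g_0^n`
for itineraries of length `n`. The dynamical entropy is the infimum over `n` of
`H(f_0^n | C) / n`.

*Lower bound.* `σ(g_0^n) ∨ C` is contained in `β^T ∨ C`, so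
`H(f_0^n, g_0^n | C) ≥ H(g_0^n | C) + H(f_0^n | β^T ∨ C)` for every `n`, and each summand is at
least `n` times the corresponding dynamical entropy.

*Upper bound.* Take `n = q r p`. By invariance `(f, g)_0^n` may be replaced by its shift by `N`, so
that `H((f, g)_0^n | C) ≤ H(g_0^{n + 2N} | C) + H(f_0^n ∘ T^N | σ(g_0^{n + 2N}) ∨ C)`. Cutting the
first term into blocks of length `r` and the second into blocks of length `p`, and shifting each
block to the origin, bounds the right side by
`q p H(g_0^r | C) + H(g_0^{2N} | C) + q r H(f_0^p | W_N)`, where `W_N` is generated by `C` and the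
coordinates of `g` in `[-N, N)`. After dividing by `n`, the limit `q → ∞` removes the boundary term,
the limit `N → ∞` turns `W_N` into `β^T ∨ C`, and infima over `p` and `r` give the two entropies.
The infimum over all `n` on the left is used only through its values at multiples of `r p`, so
the existence of the limit of `H(f_0^n | C) / n` is never needed. -/

open MeasureTheory Filter Set Topology

section EntropyCore

variable {X : Type*}

/-- Conditional entropy `H_μ(α | C)` of a finite family of sets given a sub-σ-algebra `C`. -/
noncomputable def condH {m0 : MeasurableSpace X} (μ : Measure X) {ι : Type*} [Fintype ι]
    (α : ι → Set X) (C : MeasurableSpace X) : ℝ :=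
  ∑ i, ∫ x, Real.negMulLog ((μ[(α i).indicator (fun _ => (1:ℝ)) | C]) x) ∂μ

/-- Plain entropy `H_μ(α)` of a finite family of sets. -/
noncomputable def plainH {m0 : MeasurableSpace X} (μ : Measure X) {ι : Type*} [Fintype ι]
    (α : ι → Set X) : ℝ :=
  ∑ i, Real.negMulLog (μ (α i)).toReal

/-- Atoms of the dynamical join `⋁_{i=0}^{n-1} T^{-i} α`. -/
def joinAtoms (T : X → X) {ι : Type*} (α : ι → Set X) (n : ℕ) : (Fin n → ι) → Set X :=
  fun s => ⋂ i : Fin n, (T^[(i : ℕ)]) ⁻¹' α (s i)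

/-- Conditional dynamical entropy `h_μ(T, α | C)` of a finite family `α`
(as the infimum, which coincides with the defining limit, of `(1/n) H_μ(⋁_{i<n} T^{-i}α | C)`). -/
noncomputable def hPartCond {m0 : MeasurableSpace X} (μ : Measure X) (T : X → X)
    {ι : Type*} [Fintype ι] (α : ι → Set X) (C : MeasurableSpace X) : ℝ :=
  ⨅ n : ℕ, (1 / (n + 1 : ℝ)) * condH μ (joinAtoms T α (n + 1)) C

/-- Dynamical entropy `h_μ(T, α)` of a finite family `α`. -/
noncomputable def hPart {m0 : MeasurableSpace X} (μ : Measure X) (T : X → X)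
    {ι : Type*} [Fintype ι] (α : ι → Set X) : ℝ :=
  ⨅ n : ℕ, (1 / (n + 1 : ℝ)) * plainH μ (joinAtoms T α (n + 1))

/-- A finite measurable partition of `X` (with respect to the σ-algebra `m`). -/
structure FinPart (X : Type*) (m : MeasurableSpace X) where
  k : ℕ
  atom : Fin k → Set X
  meas : ∀ i, MeasurableSet[m] (atom i)
  disj : ∀ i j, i ≠ j → Disjoint (atom i) (atom j)
  cover : ⋃ i, atom i = Set.univ

/-- Conditional (measure-theoretic) entropy `h_μ(T | C)`. -/
noncomputable def hCond {m0 : MeasurableSpace X} (μ : Measure X) (T : X → X)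
    (C : MeasurableSpace X) : ℝ :=
  ⨆ α : FinPart X m0, hPartCond μ T α.atom C

end EntropyCore

/-- The `ℤ`-iterates of an invertible map `T` (with inverse `Tinv`). -/
def zIter {X : Type*} (T Tinv : X → X) : ℤ → X → X
  | Int.ofNat n => T^[n]
  | Int.negSucc n => Tinv^[n + 1]

/-! ### Conditional entropy of finite-valued functions -/

section Core

variable {X : Type*}

/-- Conditional probability of the set `s` given the σ-algebra `C`. -/
noncomputable def condPr {mX : MeasurableSpace X} (μ : Measure X) (C : MeasurableSpace X)
    (s : Set X) : X → ℝ :=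
  μ[s.indicator (fun _ => (1 : ℝ)) | C]

/-- The σ-algebra generated by a function into a discrete space. -/
abbrev sig {κ : Type*} (g : X → κ) : MeasurableSpace X := MeasurableSpace.comap g ⊤

/-- Conditional entropy of a finite-valued function, that is, of the partition into its fibres. -/
noncomputable def funH {mX : MeasurableSpace X} (μ : Measure X) {ι : Type*} [Fintype ι]
    (f : X → ι) (C : MeasurableSpace X) : ℝ :=
  condH μ (fun i => f ⁻¹' {i}) C

lemma sig_le {κ : Type*} [Countable κ] {g : X → κ} {m : MeasurableSpace X} :
    sig g ≤ m ↔ ∀ j, MeasurableSet[m] (g ⁻¹' {j}) := by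
  constructor
  · intro h j
    exact h _ ⟨{j}, trivial, rfl⟩
  · rintro h _ ⟨s, -, rfl⟩
    rw [← Set.biUnion_preimage_singleton]
    exact MeasurableSet.biUnion s.to_countable (fun j _ => h j)

lemma sig_fiber {κ : Type*} (g : X → κ) (j : κ) : MeasurableSet[sig g] (g ⁻¹' {j}) :=
  ⟨{j}, trivial, rfl⟩

lemma comap_sig {κ : Type*} (g : X → κ) (S : X → X) :
    MeasurableSpace.comap S (sig g) = sig (g ∘ S) :=
  MeasurableSpace.comap_comp

variable {C D mX : MeasurableSpace X} {μ : Measure X}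

lemma funH_eq {ι : Type*} [Fintype ι] (f : X → ι) :
    funH μ f C = ∑ i, ∫ x, Real.negMulLog (condPr μ C (f ⁻¹' {i}) x) ∂μ := rfl

lemma integral_comp_of_measurePreserving {μ ν : Measure X} {S : X → X}
    (hS : MeasurePreserving S μ ν) {F : X → ℝ} (hF : StronglyMeasurable F) :
    ∫ x, F (S x) ∂μ = ∫ x, F x ∂ν := by
  have h := integral_map (μ := μ) (f := F) hS.measurable.aemeasurable hF.aestronglyMeasurable
  rw [hS.map_eq] at h
  exact h.symm

lemma stronglyMeasurable_condPr (s : Set X) : StronglyMeasurable[C] (condPr μ C s) :=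
  stronglyMeasurable_condExp

lemma condPr_nonneg (s : Set X) : ∀ᵐ x ∂μ, 0 ≤ condPr μ C s x :=
  condExp_nonneg (ae_of_all _ fun _ => Set.indicator_nonneg (fun _ _ => zero_le_one) _)

lemma condPr_le_one (s : Set X) : ∀ᵐ x ∂μ, condPr μ C s x ≤ 1 :=
  condExp_le_nonneg_const zero_le_one (ae_of_all _ fun x => by
    by_cases h : x ∈ s <;> simp [h])

lemma negMulLog_bound {t : ℝ} (h0 : 0 ≤ t) (h1 : t ≤ 1) : ‖Real.negMulLog t‖ ≤ 1 := by
  rw [Real.norm_of_nonneg (Real.negMulLog_nonneg h0 h1)]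
  linarith [Real.negMulLog_le_one_sub_self h0]

lemma negMulLog_condPr_bound (s : Set X) : ∀ᵐ x ∂μ, ‖Real.negMulLog (condPr μ C s x)‖ ≤ 1 := by
  filter_upwards [condPr_nonneg (C := C) (μ := μ) s, condPr_le_one (C := C) (μ := μ) s]
    with x h0 h1 using negMulLog_bound h0 h1

lemma funH_nonneg {ι : Type*} [Fintype ι] (f : X → ι) : 0 ≤ funH μ f C := by
  rw [funH_eq]
  refine Finset.sum_nonneg fun i _ => integral_nonneg_of_ae ?_
  filter_upwards [condPr_nonneg (C := C) (μ := μ) (f ⁻¹' {i}),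
    condPr_le_one (C := C) (μ := μ) (f ⁻¹' {i})] with x h0 h1 using Real.negMulLog_nonneg h0 h1

lemma stronglyMeasurable_ratio (s t : Set X) :
    StronglyMeasurable[C] (fun x => condPr μ C s x / condPr μ C t x) :=
  ((stronglyMeasurable_condPr s).measurable.div
    (stronglyMeasurable_condPr t).measurable).stronglyMeasurable

lemma integrable_condPr (s : Set X) : Integrable (condPr μ C s) μ := integrable_condExp

/-- Entropy does not change under an injective relabelling of the values. -/
lemma funH_injective {ι κ : Type*} [Fintype ι] [Fintype κ] {e : ι → κ}
    (he : Function.Injective e) (f : X → ι) : funH μ (e ∘ f) C = funH μ f C := by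
  rw [funH_eq, funH_eq]
  have h1 : ∀ i, (e ∘ f) ⁻¹' {e i} = f ⁻¹' {i} := by
    intro i; ext x; simp [he.eq_iff]
  simp_rw [← h1]
  symm
  refine Fintype.sum_of_injective e he _ _ ?_ fun i => rfl
  intro j hj
  have h2 : (e ∘ f) ⁻¹' {j} = ∅ := by
    ext x
    simp only [Set.mem_preimage, Function.comp_apply, Set.mem_singleton_iff,
      Set.mem_empty_iff_false, iff_false]
    exact fun h => hj ⟨f x, h⟩
  have h3 : condPr μ C ∅ = 0 := by
    unfold condPr
    rw [Set.indicator_empty]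
    exact condExp_zero
  simp [h2, h3]

variable [IsProbabilityMeasure μ]

lemma integrable_ind {s : Set X} (hs : MeasurableSet s) :
    Integrable (s.indicator (fun _ => (1 : ℝ))) μ :=
  (integrable_const _).indicator hs

lemma condPr_mono {s t : Set X} (hs : MeasurableSet s) (ht : MeasurableSet t) (h : s ⊆ t) :
    ∀ᵐ x ∂μ, condPr μ C s x ≤ condPr μ C t x :=
  condExp_mono (integrable_ind hs) (integrable_ind ht)
    (ae_of_all _ (Set.indicator_le_indicator_of_subset h fun _ => zero_le_one))

lemma sum_condPr {ι : Type*} [Fintype ι] {f : X → ι} (hf : sig f ≤ mX) {s : Set X}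
    (hs : MeasurableSet s) :
    ∀ᵐ x ∂μ, ∑ i, condPr μ C (f ⁻¹' {i} ∩ s) x = condPr μ C s x := by
  classical
  have h := condExp_finsetSum (m := C) (μ := μ) (s := Finset.univ)
    (f := fun i => (f ⁻¹' {i} ∩ s).indicator (fun _ => (1 : ℝ)))
    (fun i _ => integrable_ind ((sig_le.1 hf i).inter hs))
  have e : ∑ i, (f ⁻¹' {i} ∩ s).indicator (fun _ => (1 : ℝ)) = s.indicator (fun _ => (1 : ℝ)) := by
    ext x
    by_cases hx : x ∈ s <;> simp [Finset.sum_apply, Set.indicator_apply, hx]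
  rw [e] at h
  filter_upwards [h] with x hx
  simpa [condPr, Finset.sum_apply] using hx.symm

/-- The pull-out property in integrated form: a bounded `C`-measurable weight integrates over `s`
as it does against the conditional probability of `s`. -/
lemma integral_mul_condPr (hC : C ≤ mX) {φ : X → ℝ} {K : ℝ} (hφ : StronglyMeasurable[C] φ)
    (hb : ∀ᵐ x ∂μ, ‖φ x‖ ≤ K) {s : Set X} (hs : MeasurableSet s) :
    ∫ x, φ x * condPr μ C s x ∂μ = ∫ x, φ x * s.indicator (fun _ => (1 : ℝ)) x ∂μ := by
  have hi : Integrable (φ * s.indicator (fun _ => (1 : ℝ))) μ :=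
    (integrable_ind hs).bdd_mul (hφ.mono hC).aestronglyMeasurable hb
  have h := condExp_mul_of_stronglyMeasurable_left hφ hi (integrable_ind hs)
  calc _ = ∫ x, (μ[φ * s.indicator (fun _ => (1 : ℝ)) | C]) x ∂μ := integral_congr_ae h.symm
    _ = _ := integral_condExp hC

lemma integrable_negMulLog_condPr (hC : C ≤ mX) (s : Set X) :
    Integrable (fun x => Real.negMulLog (condPr μ C s x)) μ :=
  Integrable.of_bound
    (Real.continuous_negMulLog.comp_stronglyMeasurable
      ((stronglyMeasurable_condPr s).mono hC)).aestronglyMeasurable 1 (negMulLog_condPr_bound s)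

/-- Conditioning on more information decreases entropy, by conditional Jensen for the concave
function `t ↦ -t log t`. -/
lemma funH_anti {ι : Type*} [Fintype ι] (f : X → ι) (hCD : C ≤ D) (hD : D ≤ mX) :
    funH μ f D ≤ funH μ f C := by
  rw [funH_eq, funH_eq]
  refine Finset.sum_le_sum fun i _ => ?_
  set s := f ⁻¹' {i}
  have hJ := Real.concaveOn_negMulLog.condExp_map_le (μ := μ) (hCD.trans hD)
    (Real.continuous_negMulLog.upperSemicontinuous.upperSemicontinuousOn _)
    (f := condPr μ D s) (condPr_nonneg s) isClosed_Ici integrable_condExp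
    (integrable_negMulLog_condPr hD s)
  have hT : μ[condPr μ D s | C] =ᵐ[μ] condPr μ C s := condExp_condExp_of_le hCD hD
  calc ∫ x, Real.negMulLog (condPr μ D s x) ∂μ
      = ∫ x, (μ[Real.negMulLog ∘ condPr μ D s | C]) x ∂μ :=
        (integral_condExp (hCD.trans hD)).symm
    _ ≤ ∫ x, Real.negMulLog (condPr μ C s x) ∂μ := by
        refine integral_mono_ae integrable_condExp
          (integrable_negMulLog_condPr (hCD.trans hD) s) ?_
        filter_upwards [hJ, hT] with x h1 h2
        simpa [h2] using h1

/-- Entropy is invariant when a measure-preserving map pulls back both the function and the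
conditioning σ-algebra. -/
lemma funH_comp (hC : C ≤ mX) {S : X → X} (hS : MeasurePreserving S μ μ) {ι : Type*} [Fintype ι]
    {f : X → ι} (hf : sig f ≤ mX) :
    funH μ (f ∘ S) (MeasurableSpace.comap S C) = funH μ f C := by
  rw [funH_eq, funH_eq]
  refine Finset.sum_congr rfl fun i _ => ?_
  set s := f ⁻¹' {i} with hs_def
  have hs : MeasurableSet s := sig_le.1 hf i
  have hle : MeasurableSpace.comap S C ≤ mX := by
    rintro _ ⟨t, ht, rfl⟩
    exact hS.measurable (hC t ht)
  have hm : Measurable[MeasurableSpace.comap S C, C] S := comap_measurable S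
  have hsm : StronglyMeasurable (condPr μ C s) := (stronglyMeasurable_condPr s).mono hC
  have key : condPr μ C s ∘ S =ᵐ[μ] condPr μ (MeasurableSpace.comap S C) (f ∘ S ⁻¹' {i}) := by
    refine ae_eq_condExp_of_forall_setIntegral_eq hle
      (integrable_ind (hS.measurable hs)) ?_ ?_ ?_
    · intro t _ _
      exact ((hS.integrable_comp hsm.aestronglyMeasurable).2 integrable_condExp).integrableOn
    · rintro _ ⟨t, ht, rfl⟩ _
      have h1 : ∀ F : X → ℝ, StronglyMeasurable F →
          ∫ x in S ⁻¹' t, F (S x) ∂μ = ∫ x in t, F x ∂μ := fun F hF =>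
        integral_comp_of_measurePreserving (hS.restrict_preimage (hC t ht)) hF
      have h2 := h1 _ hsm
      have h3 := h1 (s.indicator fun _ => (1 : ℝ)) (stronglyMeasurable_const.indicator hs)
      have h4 : ∫ x in t, condPr μ C s x ∂μ = ∫ x in t, s.indicator (fun _ => (1 : ℝ)) x ∂μ :=
        setIntegral_condExp hC (integrable_ind hs) ht
      exact h2.trans (h4.trans h3.symm)
    · exact ((stronglyMeasurable_condPr s).comp_measurable hm).aestronglyMeasurable
  calc _ = ∫ x, Real.negMulLog (condPr μ C s (S x)) ∂μ := by
        refine integral_congr_ae ?_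
        filter_upwards [key] with x hx
        rw [← hx]; rfl
    _ = ∫ x, Real.negMulLog (condPr μ C s x) ∂μ :=
        integral_comp_of_measurePreserving hS
          (Real.continuous_negMulLog.comp_stronglyMeasurable hsm)

/-- Continuity of entropy along increasing σ-algebras, from Lévy's upward theorem. -/
lemma tendsto_funH {ι : Type*} [Fintype ι] (f : X → ι) (F : Filtration ℕ mX) :
    Tendsto (fun n => funH μ f (F n)) atTop (𝓝 (funH μ f (⨆ n, F n))) := by
  simp only [funH_eq]
  refine tendsto_finsetSum _ fun i _ => ?_
  refine tendsto_integral_of_dominated_convergence (fun _ => 1)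
    (fun n => (integrable_negMulLog_condPr (F.le n) _).aestronglyMeasurable)
    (integrable_const _) (fun n => negMulLog_condPr_bound _) ?_
  filter_upwards [tendsto_ae_condExp (ℱ := F) (μ := μ)
    ((f ⁻¹' {i}).indicator (fun _ => (1 : ℝ)))] with x hx
  exact (Real.continuous_negMulLog.tendsto _).comp hx

/-- A set in `σ(g) ∨ C` is described, on each fibre of `g`, by a set in `C`. -/
lemma exists_of_measurableSet_sup {κ : Type*} {g : X → κ} {t : Set X}
    (ht : MeasurableSet[sig g ⊔ C] t) :
    ∃ c : κ → Set X, (∀ j, MeasurableSet[C] (c j)) ∧ t = {x | x ∈ c (g x)} := by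
  let M : MeasurableSpace X :=
    { MeasurableSet' := fun t => ∃ c : κ → Set X, (∀ j, MeasurableSet[C] (c j)) ∧
        t = {x | x ∈ c (g x)}
      measurableSet_empty := ⟨fun _ => ∅, fun _ => MeasurableSet.empty, by simp⟩
      measurableSet_compl := by
        rintro _ ⟨c, hc, rfl⟩
        exact ⟨fun j => (c j)ᶜ, fun j => (hc j).compl, by ext; simp⟩
      measurableSet_iUnion := by
        intro f hf
        choose c hc hfc using hf
        refine ⟨fun j => ⋃ n, c n j, fun j => MeasurableSet.iUnion fun n => hc n j, ?_⟩
        ext x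
        simp [hfc] }
  have hM : sig g ⊔ C ≤ M := by
    refine sup_le ?_ ?_
    · rintro _ ⟨u, -, rfl⟩
      classical
      refine ⟨fun j => if j ∈ u then Set.univ else ∅, fun j => ?_, ?_⟩
      · dsimp only
        split_ifs
        · exact @MeasurableSet.univ _ C
        · exact @MeasurableSet.empty _ C
      · ext x
        by_cases h : g x ∈ u <;> simp [h]
    · intro u hu
      exact ⟨fun _ => u, fun _ => hu, by simp⟩
  exact hM t ht

/-- The ratio `P(s ∩ t | C) / P(t | C)` is a.e. a probability, and multiplying by `P(t | C)`
recovers the numerator even where `P(t | C) = 0`, because the numerator then vanishes too. -/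
lemma condPr_ratio {s : Set X} (hs : MeasurableSet s) {t : Set X} (ht : MeasurableSet t) :
    ∀ᵐ x ∂μ, 0 ≤ condPr μ C (s ∩ t) x / condPr μ C t x ∧
      condPr μ C (s ∩ t) x / condPr μ C t x ≤ 1 ∧
      condPr μ C (s ∩ t) x / condPr μ C t x * condPr μ C t x = condPr μ C (s ∩ t) x := by
  filter_upwards [condPr_nonneg (C := C) (μ := μ) (s ∩ t), condPr_nonneg (C := C) (μ := μ) t,
    condPr_mono (C := C) (μ := μ) (hs.inter ht) ht Set.inter_subset_right] with x h0 h1 h2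
  refine ⟨div_nonneg h0 h1, div_le_one_of_le₀ h2 h1, ?_⟩
  rcases h1.eq_or_lt with h | h
  · rw [← h] at h2 ⊢
    simp [le_antisymm h2 h0]
  · exact div_mul_cancel₀ _ h.ne'

/-! ### The chain rule -/

lemma sum_fiber {κ : Type*} [Fintype κ] (g : X → κ) (a : κ → ℝ) (x : X) :
    ∑ j, a j * (g ⁻¹' {j}).indicator (fun _ => (1 : ℝ)) x = a (g x) := by
  classical
  simp [Set.indicator_apply]

/-- On the fibre `{g = j}`, conditioning on `σ(g) ∨ C` is given by the elementary ratio of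
`C`-conditional probabilities `P(s ∩ {g = j} | C) / P(g = j | C)`. -/
lemma condPr_sup {κ : Type*} [Fintype κ] (hC : C ≤ mX) {g : X → κ} (hg : sig g ≤ mX)
    {s : Set X} (hs : MeasurableSet s) :
    (fun x => ∑ j, condPr μ C (s ∩ g ⁻¹' {j}) x / condPr μ C (g ⁻¹' {j}) x *
      (g ⁻¹' {j}).indicator (fun _ => (1 : ℝ)) x) =ᵐ[μ] condPr μ (sig g ⊔ C) s := by
  have hG : ∀ j, MeasurableSet (g ⁻¹' {j}) := sig_le.1 hg
  have hr : ∀ j, ∀ᵐ x ∂μ, ‖condPr μ C (s ∩ g ⁻¹' {j}) x / condPr μ C (g ⁻¹' {j}) x‖ ≤ 1 := by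
    intro j
    filter_upwards [condPr_ratio (C := C) (μ := μ) hs (hG j)] with x hx
    rw [Real.norm_of_nonneg hx.1]
    exact hx.2.1
  have hrm := fun j => stronglyMeasurable_ratio (C := C) (μ := μ) (s ∩ g ⁻¹' {j}) (g ⁻¹' {j})
  have hi : ∀ j, Integrable (fun x => condPr μ C (s ∩ g ⁻¹' {j}) x / condPr μ C (g ⁻¹' {j}) x *
      (g ⁻¹' {j}).indicator (fun _ => (1 : ℝ)) x) μ := fun j =>
    (integrable_ind (hG j)).bdd_mul ((hrm j).mono hC).aestronglyMeasurable (hr j)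
  refine ae_eq_condExp_of_forall_setIntegral_eq (sup_le hg hC) (integrable_ind hs) ?_ ?_ ?_
  · intro t _ _
    exact (integrable_finsetSum _ fun j _ => hi j).integrableOn
  · intro t ht _
    have htm : MeasurableSet t := sup_le hg hC t ht
    obtain ⟨c, hc, rfl⟩ := exists_of_measurableSet_sup ht
    rw [← integral_indicator htm, ← integral_indicator htm]
    have hcr : ∀ j, StronglyMeasurable[C] ((c j).indicator
        fun x => condPr μ C (s ∩ g ⁻¹' {j}) x / condPr μ C (g ⁻¹' {j}) x) :=
      fun j => (hrm j).indicator (hc j)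
    have hcb : ∀ j, ∀ᵐ x ∂μ, ‖(c j).indicator
        (fun x => condPr μ C (s ∩ g ⁻¹' {j}) x / condPr μ C (g ⁻¹' {j}) x) x‖ ≤ 1 := by
      intro j
      filter_upwards [hr j] with x hx
      exact (norm_indicator_le_norm_self _ _).trans hx
    have h1m : ∀ j, StronglyMeasurable[C] ((c j).indicator fun _ => (1 : ℝ)) :=
      fun j => stronglyMeasurable_const.indicator (hc j)
    have h1b : ∀ j, ∀ᵐ x ∂μ, ‖(c j).indicator (fun _ => (1 : ℝ)) x‖ ≤ 1 := fun j =>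
      ae_of_all _ fun x => (norm_indicator_le_norm_self _ _).trans (by simp)
    calc ∫ x, {x | x ∈ c (g x)}.indicator (fun x => ∑ j, condPr μ C (s ∩ g ⁻¹' {j}) x /
            condPr μ C (g ⁻¹' {j}) x * (g ⁻¹' {j}).indicator (fun _ => (1 : ℝ)) x) x ∂μ
        = ∫ x, ∑ j, (c j).indicator
            (fun x => condPr μ C (s ∩ g ⁻¹' {j}) x / condPr μ C (g ⁻¹' {j}) x) x *
              (g ⁻¹' {j}).indicator (fun _ => (1 : ℝ)) x ∂μ := by
          refine integral_congr_ae (ae_of_all _ fun x => ?_)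
          dsimp only
          rw [sum_fiber g (fun j => (c j).indicator
            (fun x => condPr μ C (s ∩ g ⁻¹' {j}) x / condPr μ C (g ⁻¹' {j}) x) x) x]
          by_cases hx : x ∈ c (g x)
          · rw [Set.indicator_of_mem (s := {x | x ∈ c (g x)}) hx, Set.indicator_of_mem hx]
            exact sum_fiber g
              (fun j => condPr μ C (s ∩ g ⁻¹' {j}) x / condPr μ C (g ⁻¹' {j}) x) x
          · rw [Set.indicator_of_notMem (s := {x | x ∈ c (g x)}) hx, Set.indicator_of_notMem hx]
      _ = ∑ j, ∫ x, (c j).indicator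
            (fun x => condPr μ C (s ∩ g ⁻¹' {j}) x / condPr μ C (g ⁻¹' {j}) x) x *
              (g ⁻¹' {j}).indicator (fun _ => (1 : ℝ)) x ∂μ :=
          integral_finsetSum _ fun j _ => (integrable_ind (hG j)).bdd_mul
            ((hcr j).mono hC).aestronglyMeasurable (hcb j)
      _ = ∑ j, ∫ x, (c j).indicator (fun _ => (1 : ℝ)) x *
              (s ∩ g ⁻¹' {j}).indicator (fun _ => (1 : ℝ)) x ∂μ := by
          refine Finset.sum_congr rfl fun j _ => ?_
          rw [← integral_mul_condPr hC (hcr j) (hcb j) (hG j),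
            ← integral_mul_condPr hC (h1m j) (h1b j) (hs.inter (hG j))]
          refine integral_congr_ae ?_
          filter_upwards [condPr_ratio (C := C) (μ := μ) hs (hG j)] with x hx
          by_cases h : x ∈ c j
          · simp only [Set.indicator_of_mem h, one_mul]
            exact hx.2.2
          · simp only [Set.indicator_of_notMem h, zero_mul]
      _ = ∫ x, ∑ j, (c j).indicator (fun _ => (1 : ℝ)) x *
              (s ∩ g ⁻¹' {j}).indicator (fun _ => (1 : ℝ)) x ∂μ :=
          (integral_finsetSum _ fun j _ => (integrable_ind (hs.inter (hG j))).bdd_mul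
            ((h1m j).mono hC).aestronglyMeasurable (h1b j)).symm
      _ = _ := by
          refine integral_congr_ae (ae_of_all _ fun x => ?_)
          have e : ∀ j, (c j).indicator (fun _ => (1 : ℝ)) x *
              (s ∩ g ⁻¹' {j}).indicator (fun _ => (1 : ℝ)) x =
              ((c j).indicator (fun _ => (1 : ℝ)) x * s.indicator (fun _ => (1 : ℝ)) x) *
                (g ⁻¹' {j}).indicator (fun _ => (1 : ℝ)) x := by
            intro j
            by_cases h1 : x ∈ s <;> by_cases h2 : g x = j <;> simp [h1, h2]
          dsimp only
          simp_rw [e]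
          rw [sum_fiber g (fun j => (c j).indicator (fun _ => (1 : ℝ)) x *
            s.indicator (fun _ => (1 : ℝ)) x) x]
          by_cases hx : x ∈ c (g x)
          · rw [Set.indicator_of_mem (s := {x | x ∈ c (g x)}) hx, Set.indicator_of_mem hx, one_mul]
          · rw [Set.indicator_of_notMem (s := {x | x ∈ c (g x)}) hx, Set.indicator_of_notMem hx,
              zero_mul]
  · refine (Finset.stronglyMeasurable_fun_sum _ fun j _ => ?_).aestronglyMeasurable
    have hj : MeasurableSet[sig g ⊔ C] (g ⁻¹' {j}) :=
      (le_sup_left : sig g ≤ sig g ⊔ C) _ (sig_fiber g j)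
    have hjm : StronglyMeasurable[sig g ⊔ C] ((g ⁻¹' {j}).indicator fun _ => (1 : ℝ)) :=
      stronglyMeasurable_const.indicator hj
    exact ((hrm j).mono (le_sup_right : C ≤ sig g ⊔ C)).mul hjm

/-- The grouping identity behind the chain rule, for the probabilities `p i / q`. -/
lemma sum_negMulLog_div {ι : Type*} [Fintype ι] {p : ι → ℝ} {q : ℝ} (hp : ∀ i, 0 ≤ p i)
    (hq : ∑ i, p i = q) :
    ∑ i, Real.negMulLog (p i / q) * q = ∑ i, Real.negMulLog (p i) - Real.negMulLog q := by
  rcases eq_or_ne q 0 with h0 | h0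
  · have hz : ∀ i, p i = 0 := fun i =>
      (Finset.sum_eq_zero_iff_of_nonneg fun i _ => hp i).1 (hq.trans h0) i (Finset.mem_univ i)
    simp [h0, hz]
  · have e : ∀ i, Real.negMulLog (p i / q) * q = Real.negMulLog (p i) + p i * Real.log q := by
      intro i
      rcases eq_or_ne (p i) 0 with h | h
      · simp [h]
      · rw [Real.negMulLog, Real.negMulLog, Real.log_div h h0]
        field_simp
        ring
    simp_rw [e]
    rw [Finset.sum_add_distrib, ← Finset.sum_mul, hq, Real.negMulLog]
    ring

/-- Chain rule for conditional entropy: `H(f, g | C) = H(g | C) + H(f | σ(g) ∨ C)`. -/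
lemma funH_chain {ι κ : Type*} [Fintype ι] [Fintype κ] (hC : C ≤ mX) {f : X → ι} {g : X → κ}
    (hf : sig f ≤ mX) (hg : sig g ≤ mX) :
    funH μ (fun x => (f x, g x)) C = funH μ g C + funH μ f (sig g ⊔ C) := by
  have hF : ∀ i, MeasurableSet (f ⁻¹' {i}) := sig_le.1 hf
  have hG : ∀ j, MeasurableSet (g ⁻¹' {j}) := sig_le.1 hg
  have hφm : ∀ i j, StronglyMeasurable[C] (fun x => Real.negMulLog
      (condPr μ C (f ⁻¹' {i} ∩ g ⁻¹' {j}) x / condPr μ C (g ⁻¹' {j}) x)) := fun i j =>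
    Real.continuous_negMulLog.comp_stronglyMeasurable (stronglyMeasurable_ratio _ _)
  have hφb : ∀ i j, ∀ᵐ x ∂μ, ‖Real.negMulLog
      (condPr μ C (f ⁻¹' {i} ∩ g ⁻¹' {j}) x / condPr μ C (g ⁻¹' {j}) x)‖ ≤ 1 := by
    intro i j
    filter_upwards [condPr_ratio (C := C) (μ := μ) (hF i) (hG j)] with x hx
    exact negMulLog_bound hx.1 hx.2.1
  have hpair : funH μ (fun x => (f x, g x)) C =
      ∑ j, ∑ i, ∫ x, Real.negMulLog (condPr μ C (f ⁻¹' {i} ∩ g ⁻¹' {j}) x) ∂μ := by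
    rw [funH_eq, Fintype.sum_prod_type_right]
    refine Finset.sum_congr rfl fun j _ => Finset.sum_congr rfl fun i _ => ?_
    have e : (fun x => (f x, g x)) ⁻¹' {(i, j)} = f ⁻¹' {i} ∩ g ⁻¹' {j} := by
      ext x; simp
    rw [e]
  have hcond : funH μ f (sig g ⊔ C) = ∑ i, ∑ j, ∫ x, Real.negMulLog
      (condPr μ C (f ⁻¹' {i} ∩ g ⁻¹' {j}) x / condPr μ C (g ⁻¹' {j}) x) *
        condPr μ C (g ⁻¹' {j}) x ∂μ := by
    rw [funH_eq]
    refine Finset.sum_congr rfl fun i _ => ?_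
    calc ∫ x, Real.negMulLog (condPr μ (sig g ⊔ C) (f ⁻¹' {i}) x) ∂μ
        = ∫ x, ∑ j, Real.negMulLog
            (condPr μ C (f ⁻¹' {i} ∩ g ⁻¹' {j}) x / condPr μ C (g ⁻¹' {j}) x) *
              (g ⁻¹' {j}).indicator (fun _ => (1 : ℝ)) x ∂μ := by
          refine integral_congr_ae ?_
          filter_upwards [condPr_sup (μ := μ) hC hg (hF i)] with x hx
          rw [← hx, sum_fiber g (fun j => condPr μ C (f ⁻¹' {i} ∩ g ⁻¹' {j}) x /
              condPr μ C (g ⁻¹' {j}) x) x,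
            sum_fiber g (fun j => Real.negMulLog (condPr μ C (f ⁻¹' {i} ∩ g ⁻¹' {j}) x /
              condPr μ C (g ⁻¹' {j}) x)) x]
      _ = ∑ j, ∫ x, Real.negMulLog
            (condPr μ C (f ⁻¹' {i} ∩ g ⁻¹' {j}) x / condPr μ C (g ⁻¹' {j}) x) *
              (g ⁻¹' {j}).indicator (fun _ => (1 : ℝ)) x ∂μ :=
          integral_finsetSum _ fun j _ => (integrable_ind (hG j)).bdd_mul
            ((hφm i j).mono hC).aestronglyMeasurable (hφb i j)
      _ = _ := Finset.sum_congr rfl fun j _ =>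
          (integral_mul_condPr hC (hφm i j) (hφb i j) (hG j)).symm
  rw [hpair, hcond, Finset.sum_comm (s := (Finset.univ : Finset ι)), funH_eq,
    ← Finset.sum_add_distrib]
  refine Finset.sum_congr rfl fun j _ => ?_
  rw [← integral_finsetSum _ fun i _ => integrable_negMulLog_condPr hC _,
    ← integral_finsetSum _ fun i _ => Integrable.bdd_mul (c := 1) (integrable_condPr (g ⁻¹' {j}))
      ((hφm i j).mono hC).aestronglyMeasurable (hφb i j),
    ← sub_eq_iff_eq_add', ← integral_sub
      (integrable_finsetSum _ fun i _ => integrable_negMulLog_condPr hC _)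
      (integrable_negMulLog_condPr hC _)]
  refine integral_congr_ae ?_
  filter_upwards [ae_all_iff.2 fun i => condPr_nonneg (C := C) (μ := μ) (f ⁻¹' {i} ∩ g ⁻¹' {j}),
    sum_condPr (C := C) (μ := μ) hf (hG j)] with x h0 h1
  exact (sum_negMulLog_div h0 h1).symm

/-- Entropy decreases under functions of the variable. -/
lemma funH_factor {ι κ : Type*} [Fintype ι] [Fintype κ] (hC : C ≤ mX) {f : X → ι} {g : X → κ}
    (hg : sig g ≤ mX) (φ : κ → ι) (h : ∀ x, f x = φ (g x)) :
    funH μ f C ≤ funH μ g C := by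
  have hf : sig f ≤ mX := by
    obtain rfl : f = φ ∘ g := funext h
    refine le_trans ?_ hg
    rintro _ ⟨s, -, rfl⟩
    exact ⟨φ ⁻¹' s, trivial, rfl⟩
  have e1 : funH μ (fun x => (g x, f x)) C = funH μ g C := by
    have he : Function.Injective (fun k : κ => (k, φ k)) := fun a b hab => (Prod.ext_iff.1 hab).1
    have h2 : (fun x => (g x, f x)) = (fun k : κ => (k, φ k)) ∘ g := by
      ext x
      · rfl
      · exact h x
    rw [h2, funH_injective he]
  have e2 := funH_chain (μ := μ) hC hg hf
  have e3 : 0 ≤ funH μ g (sig f ⊔ C) := funH_nonneg _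
  linarith

lemma funH_pair_le {ι κ : Type*} [Fintype ι] [Fintype κ] (hC : C ≤ mX) {f : X → ι} {g : X → κ}
    (hf : sig f ≤ mX) (hg : sig g ≤ mX) :
    funH μ (fun x => (f x, g x)) C ≤ funH μ g C + funH μ f C := by
  rw [funH_chain hC hf hg]
  gcongr
  exact funH_anti f le_sup_right (sup_le hg hC)

end Core

/-! ### Itineraries and the dynamics -/

section Dynamics

variable {X : Type*} {C mX : MeasurableSpace X} {μ : Measure X}

/-- The `T`-itinerary of length `n` seen through `f`; its fibres are the atoms of
`⋁_{i<n} T^{-i} α` when `α` is the partition into fibres of `f`. -/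
def itin {ι : Type*} (T : X → X) (f : X → ι) (n : ℕ) : X → (Fin n → ι) :=
  fun x i => f (T^[(i : ℕ)] x)

lemma sig_comp_le {ι κ : Type*} (φ : κ → ι) (g : X → κ) : sig (φ ∘ g) ≤ sig g := by
  rintro _ ⟨s, -, rfl⟩
  exact ⟨φ ⁻¹' s, trivial, rfl⟩

lemma sig_comp_le_of_measurable {ι : Type*} {f : X → ι} (hf : sig f ≤ mX) {S : X → X}
    (hS : Measurable S) : sig (f ∘ S) ≤ mX := by
  rw [← comap_sig]
  exact (MeasurableSpace.comap_mono hf).trans hS.comap_le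

lemma sig_itin_comp_le {ι : Type*} [Fintype ι] {T S : X → X} {f : X → ι} {n : ℕ}
    {m : MeasurableSpace X} :
    sig (itin T f n ∘ S) ≤ m ↔ ∀ i < n, sig (f ∘ T^[i] ∘ S) ≤ m := by
  constructor
  · intro h i hi
    exact (sig_comp_le (fun v : Fin n → ι => v ⟨i, hi⟩) (itin T f n ∘ S)).trans h
  · intro h
    refine sig_le.2 fun s => ?_
    have e : itin T f n ∘ S ⁻¹' {s} = ⋂ i : Fin n, (f ∘ T^[(i : ℕ)] ∘ S) ⁻¹' {s i} := by
      ext x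
      simp [itin, funext_iff]
    rw [e]
    exact MeasurableSet.iInter fun i => sig_le.1 (h i i.2) (s i)

lemma sig_itin_le {ι : Type*} [Fintype ι] {T : X → X} (hT : Measurable T) {f : X → ι}
    (hf : sig f ≤ mX) (n : ℕ) : sig (itin T f n) ≤ mX :=
  sig_itin_comp_le (S := id).2 fun i _ => sig_comp_le_of_measurable hf (hT.iterate i)

lemma condH_joinAtoms {ι : Type*} [Fintype ι] (T : X → X) (f : X → ι) (n : ℕ) :
    condH μ (joinAtoms T (fun i => f ⁻¹' {i}) n) C = funH μ (itin T f n) C := by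
  have e : joinAtoms T (fun i => f ⁻¹' {i}) n = fun s => itin T f n ⁻¹' {s} := by
    ext s x
    simp [joinAtoms, itin, funext_iff]
  rw [e, funH]

lemma mul_hPartCond_le {ι : Type*} [Fintype ι] (T : X → X) (f : X → ι) (n : ℕ) :
    n * hPartCond μ T (fun i => f ⁻¹' {i}) C ≤ funH μ (itin T f n) C := by
  rcases n with _ | n
  · simpa using funH_nonneg _
  · have h : hPartCond μ T (fun i => f ⁻¹' {i}) C ≤
        (1 / (n + 1 : ℝ)) * funH μ (itin T f (n + 1)) C := by
      rw [← condH_joinAtoms]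
      refine ciInf_le (f := fun n : ℕ => (1 / (n + 1 : ℝ)) *
        condH μ (joinAtoms T (fun i => f ⁻¹' {i}) (n + 1)) C) ⟨0, ?_⟩ n
      rintro _ ⟨k, rfl⟩
      dsimp only
      rw [condH_joinAtoms]
      exact mul_nonneg (by positivity) (funH_nonneg _)
    have hn : (0 : ℝ) < n + 1 := by positivity
    rw [one_div, ← div_eq_inv_mul, le_div_iff₀ hn] at h
    push_cast
    linarith

lemma le_hPartCond {ι : Type*} [Fintype ι] (T : X → X) (f : X → ι) {c : ℝ}
    (h : ∀ n : ℕ, 0 < n → n * c ≤ funH μ (itin T f n) C) :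
    c ≤ hPartCond μ T (fun i => f ⁻¹' {i}) C := by
  refine le_ciInf fun n => ?_
  have hn : (0 : ℝ) < n + 1 := by positivity
  have := h (n + 1) n.succ_pos
  push_cast at this
  rw [condH_joinAtoms, one_div, ← div_eq_inv_mul, le_div_iff₀ hn]
  linarith

lemma funH_of_subsingleton [IsProbabilityMeasure μ] {ι : Type*} [Fintype ι] [Subsingleton ι]
    (hC : C ≤ mX) (f : X → ι) : funH μ f C = 0 := by
  rw [funH_eq]
  refine Finset.sum_eq_zero fun i _ => ?_
  have h : f ⁻¹' {i} = Set.univ := by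
    ext x; simp [eq_iff_true_of_subsingleton]
  simp [condPr, h, condExp_const hC]

lemma funH_itin_add_le [IsProbabilityMeasure μ] {ι : Type*} [Fintype ι] (hC : C ≤ mX)
    {T S : X → X} (hT : Measurable T) (hS : Measurable S) {f : X → ι} (hf : sig f ≤ mX)
    (m p : ℕ) :
    funH μ (itin T f (m + p) ∘ S) C ≤
      funH μ (itin T f m ∘ S) C + funH μ (itin T f p ∘ (T^[m] ∘ S)) C := by
  have h1 := sig_comp_le_of_measurable (sig_itin_le hT hf m) hS
  have h2 := sig_comp_le_of_measurable (sig_itin_le hT hf p) ((hT.iterate m).comp hS)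
  refine le_trans ?_ (funH_pair_le hC h2 h1)
  refine funH_factor hC ?_
    (fun v i => if h : (i : ℕ) < m then v.2 ⟨i, h⟩ else v.1 ⟨i - m, by omega⟩) ?_
  · refine sig_le.2 fun v => ?_
    have e : (fun x => ((itin T f p ∘ (T^[m] ∘ S)) x, (itin T f m ∘ S) x)) ⁻¹' {v} =
        (itin T f p ∘ (T^[m] ∘ S)) ⁻¹' {v.1} ∩ (itin T f m ∘ S) ⁻¹' {v.2} := by
      ext x; simp [Prod.ext_iff]
    rw [e]
    exact (sig_le.1 h2 _).inter (sig_le.1 h1 _)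
  · intro x
    ext i
    by_cases h : (i : ℕ) < m
    · simp [itin, h]
    · have hi : (i : ℕ) - m + m = i := by omega
      simp only [itin, Function.comp_apply, h, dite_false]
      rw [← Function.iterate_add_apply, hi]

/-- An itinerary of length `q * p` splits into `q` blocks of length `p`. -/
lemma funH_itin_mul_le [IsProbabilityMeasure μ] {ι : Type*} [Fintype ι] (hC : C ≤ mX)
    {T S : X → X} (hT : Measurable T) (hS : Measurable S) {f : X → ι} (hf : sig f ≤ mX)
    (p : ℕ) {h : ℝ} (q : ℕ)
    (H : ∀ j < q, funH μ (itin T f p ∘ (T^[j * p] ∘ S)) C ≤ h) :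
    funH μ (itin T f (q * p) ∘ S) C ≤ q * h := by
  induction q with
  | zero =>
    have : Subsingleton (Fin (0 * p) → ι) := by
      rw [Nat.zero_mul]; infer_instance
    rw [funH_of_subsingleton hC]
    simp
  | succ q ih =>
    have h1 := ih fun j hj => H j (hj.trans q.lt_succ_self)
    have h2 := H q q.lt_succ_self
    have h3 := funH_itin_add_le (μ := μ) hC hT hS hf (q * p) p
    rw [Nat.succ_mul]
    push_cast
    linarith

lemma comap_iterate_eq {T : X → X} (hTA : MeasurableSpace.comap T C = C) (n : ℕ) :
    MeasurableSpace.comap T^[n] C = C := by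
  induction n with
  | zero => simp
  | succ n ih => rw [Function.iterate_succ', ← MeasurableSpace.comap_comp, hTA, ih]

lemma funH_comp_iterate [IsProbabilityMeasure μ] (hC : C ≤ mX) {T : X → X}
    (hT : MeasurePreserving T μ μ) (hTC : MeasurableSpace.comap T C = C) {κ : Type*} [Fintype κ]
    {u : X → κ} (hu : sig u ≤ mX) (l : ℕ) : funH μ (u ∘ T^[l]) C = funH μ u C := by
  have h := funH_comp hC (hT.iterate l) hu
  rwa [comap_iterate_eq hTC] at h

lemma iterate_comp_iterate_inv {T Tinv : X → X} (hinv : Function.RightInverse Tinv T)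
    (i N : ℕ) : T^[i] ∘ Tinv^[N] = zIter T Tinv ((i : ℤ) - N) := by
  have hc : ∀ k, T^[k] ∘ Tinv^[k] = id := fun k => (hinv.iterate k).comp_eq_id
  rcases le_or_gt N i with h | h
  · obtain ⟨k, rfl⟩ := Nat.exists_eq_add_of_le' h
    have e : ((k + N : ℕ) : ℤ) - N = Int.ofNat k := by simp
    rw [e, Function.iterate_add, Function.comp_assoc, hc]
    rfl
  · obtain ⟨k, rfl⟩ := Nat.exists_eq_add_of_lt h
    have e : (i : ℤ) - ((i + k + 1 : ℕ) : ℤ) = Int.negSucc k := by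
      rw [Int.negSucc_eq]; push_cast; ring
    rw [e, add_assoc, Function.iterate_add, ← Function.comp_assoc, hc]
    rfl

/-- The σ-algebra `⋁_{-N ≤ i < N} T^{-i} σ(g) ∨ C`, written as a pullback of a one-sided window. -/
abbrev window {κ : Type*} (T Tinv : X → X) (g : X → κ) (C : MeasurableSpace X) (N : ℕ) :
    MeasurableSpace X :=
  MeasurableSpace.comap Tinv^[N] (sig (itin T g (2 * N)) ⊔ C)

section Invertible

variable {T Tinv : X → X} {κ : Type*} [Fintype κ] {g : X → κ}

lemma comap_inv_iterate_eq (hinv₂ : Function.RightInverse Tinv T)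
    (hTC : MeasurableSpace.comap T C = C) (N : ℕ) : MeasurableSpace.comap Tinv^[N] C = C := by
  conv_lhs => rw [← comap_iterate_eq hTC N]
  rw [MeasurableSpace.comap_comp, (hinv₂.iterate N).comp_eq_id, MeasurableSpace.comap_id]

lemma window_le (hinv₂ : Function.RightInverse Tinv T)
    (hTC : MeasurableSpace.comap T C = C) {N : ℕ} {m : MeasurableSpace X} :
    window T Tinv g C N ≤ m ↔
      (∀ i < 2 * N, sig (g ∘ zIter T Tinv ((i : ℤ) - N)) ≤ m) ∧ C ≤ m := by
  rw [window, MeasurableSpace.comap_sup, comap_sig, comap_inv_iterate_eq hinv₂ hTC, sup_le_iff,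
    sig_itin_comp_le]
  simp_rw [iterate_comp_iterate_inv hinv₂]

lemma window_mono (hinv₂ : Function.RightInverse Tinv T)
    (hTC : MeasurableSpace.comap T C = C) : Monotone (window T Tinv g C) := by
  refine monotone_nat_of_le_succ fun N => (window_le hinv₂ hTC).2 ?_
  have h := (window_le (g := g) (N := N + 1) hinv₂ hTC).1 le_rfl
  refine ⟨fun i hi => ?_, h.2⟩
  have h1 := h.1 (i + 1) (by omega)
  have e : ((i + 1 : ℕ) : ℤ) - ((N + 1 : ℕ) : ℤ) = (i : ℤ) - N := by push_cast; ring
  rwa [e] at h1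

lemma iSup_window (hinv₂ : Function.RightInverse Tinv T)
    (hTC : MeasurableSpace.comap T C = C) :
    ⨆ N, window T Tinv g C N = MeasurableSpace.generateFrom
      {s : Set X | ∃ (i : ℤ) (j : κ), s = zIter T Tinv i ⁻¹' (g ⁻¹' {j})} ⊔ C := by
  refine le_antisymm (iSup_le fun N => (window_le hinv₂ hTC).2 ⟨fun i _ => ?_, le_sup_right⟩)
    (sup_le (MeasurableSpace.generateFrom_le ?_) ?_)
  · refine le_trans (sig_le.2 fun j => ?_) le_sup_left
    exact MeasurableSpace.measurableSet_generateFrom ⟨_, j, rfl⟩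
  · rintro _ ⟨z, j, rfl⟩
    -- the index `z` lies in the window of radius `|z| + 1`
    have h := (window_le (g := g) (N := z.natAbs + 1) hinv₂ hTC).1 (le_iSup _ _)
    have h1 := h.1 (z + (z.natAbs + 1 : ℕ)).toNat (by omega)
    have e : (((z + (z.natAbs + 1 : ℕ)).toNat : ℕ) : ℤ) - ((z.natAbs + 1 : ℕ) : ℤ) = z := by
      omega
    rw [e] at h1
    exact sig_le.1 h1 j
  · exact ((window_le (g := g) (N := 0) hinv₂ hTC).1 (le_iSup _ _)).2

lemma window_le_ambient (hT : Measurable T) (hTinv : Measurable Tinv) (hC : C ≤ mX)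
    (hg : sig g ≤ mX) (N : ℕ) : window T Tinv g C N ≤ mX :=
  (MeasurableSpace.comap_mono (sup_le (sig_itin_le hT hg _) hC)).trans (hTinv.iterate N).comap_le

variable {ι : Type*} [Fintype ι] {f : X → ι} [IsProbabilityMeasure μ]

/-- The finite estimate behind the upper bound. The itinerary of `f` is shifted by `N` so that
each of its `q * r` blocks of length `p` sees `N` symbols of `g` on either side of its start. -/
lemma funH_itin_pair_le (hT : MeasurePreserving T μ μ) (hTinv : Measurable Tinv)
    (hinv₁ : Function.LeftInverse Tinv T) (hC : C ≤ mX) (hTC : MeasurableSpace.comap T C = C)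
    (hf : sig f ≤ mX) (hg : sig g ≤ mX) (p q r N : ℕ) :
    funH μ (itin T (fun x => (f x, g x)) (q * r * p)) C ≤
      (q * p) * funH μ (itin T g r) C + funH μ (itin T g (2 * N)) C +
        (q * r) * funH μ (itin T f p) (window T Tinv g C N) := by
  have hTm := hT.measurable
  set n := q * r * p with hn
  have hpm : sig (fun x => (f x, g x)) ≤ mX := by
    refine sig_le.2 fun v => ?_
    have e : (fun x => (f x, g x)) ⁻¹' {v} = f ⁻¹' {v.1} ∩ g ⁻¹' {v.2} := by
      ext x; simp [Prod.ext_iff]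
    rw [e]
    exact (sig_le.1 hf _).inter (sig_le.1 hg _)
  have hfm := sig_comp_le_of_measurable (sig_itin_le hTm hf n) (hTm.iterate N)
  have hgm := sig_itin_le hTm hg (n + 2 * N)
  have hjm : sig (fun x => ((itin T f n ∘ T^[N]) x, itin T g (n + 2 * N) x)) ≤ mX := by
    refine sig_le.2 fun v => ?_
    have e : (fun x => ((itin T f n ∘ T^[N]) x, itin T g (n + 2 * N) x)) ⁻¹' {v} =
        (itin T f n ∘ T^[N]) ⁻¹' {v.1} ∩ itin T g (n + 2 * N) ⁻¹' {v.2} := by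
      ext x; simp [Prod.ext_iff]
    rw [e]
    exact (sig_le.1 hfm _).inter (sig_le.1 hgm _)
  have h1 : funH μ (itin T (fun x => (f x, g x)) n) C ≤
      funH μ (fun x => ((itin T f n ∘ T^[N]) x, itin T g (n + 2 * N) x)) C := by
    rw [← funH_comp_iterate hC hT hTC (sig_itin_le hTm hpm n) N]
    refine funH_factor hC hjm (fun v i => (v.1 i, v.2 ⟨i + N, by omega⟩)) fun x => ?_
    ext i
    · rfl
    · simp [itin, Function.iterate_add_apply]
  have h2 := funH_chain (μ := μ) hC hfm hgm
  have h3 : funH μ (itin T g (n + 2 * N)) C ≤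
      (q * p) * funH μ (itin T g r) C + funH μ (itin T g (2 * N)) C := by
    have h31 := funH_itin_add_le (μ := μ) (S := id) hC hTm measurable_id hg n (2 * N)
    have h32 := funH_itin_mul_le (μ := μ) (S := id) hC hTm measurable_id hg r (q * p)
      (fun j _ => (funH_comp_iterate hC hT hTC (sig_itin_le hTm hg r) (j * r)).le)
    have e : q * p * r = n := by rw [hn]; ring
    rw [e] at h32
    simp only [Function.comp_id] at h31 h32
    rw [funH_comp_iterate hC hT hTC (sig_itin_le hTm hg _)] at h31
    push_cast at h32
    linarith
  have h4 : funH μ (itin T f n ∘ T^[N]) (sig (itin T g (n + 2 * N)) ⊔ C) ≤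
      (q * r) * funH μ (itin T f p) (window T Tinv g C N) := by
    have h41 := funH_itin_mul_le (μ := μ) (C := sig (itin T g (n + 2 * N)) ⊔ C)
      (h := funH μ (itin T f p) (window T Tinv g C N)) (sup_le hgm hC) hTm (hTm.iterate N) hf p
      (q * r) ?_
    · push_cast at h41
      exact h41
    intro j hj
    have hjp : j * p + p ≤ n := by
      rw [hn, ← Nat.succ_mul]
      exact Nat.mul_le_mul_right p hj
    rw [← funH_comp (window_le_ambient hTm hTinv hC hg N)
      ((hT.iterate (j * p)).comp (hT.iterate N)) (sig_itin_le hTm hf p)]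
    refine funH_anti _ ?_ (sup_le hgm hC)
    have e : Tinv^[N] ∘ T^[j * p] ∘ T^[N] = T^[j * p] := by
      rw [← Function.iterate_add, Nat.add_comm, Function.iterate_add, ← Function.comp_assoc,
        (hinv₁.iterate N).comp_eq_id, Function.id_comp]
    rw [window, MeasurableSpace.comap_comp, e, MeasurableSpace.comap_sup, comap_sig,
      comap_iterate_eq hTC]
    refine sup_le_sup_right ?_ _
    refine le_trans (le_of_eq (congrArg sig ?_)) (sig_comp_le
      (fun (v : Fin (n + 2 * N) → κ) (i : Fin (2 * N)) => v ⟨i + j * p, by omega⟩) _)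
    ext x i
    simp [itin, Function.iterate_add_apply]
  linarith

/-- The relative Pinsker formula for finite-valued functions. -/
lemma hPartCond_pair (hT : MeasurePreserving T μ μ) (hTinv : Measurable Tinv)
    (hinv₁ : Function.LeftInverse Tinv T) (hinv₂ : Function.RightInverse Tinv T)
    (hC : C ≤ mX) (hTC : MeasurableSpace.comap T C = C)
    (hf : sig f ≤ mX) (hg : sig g ≤ mX) :
    hPartCond μ T (fun v => (fun x => (f x, g x)) ⁻¹' {v}) C =
      hPartCond μ T (fun j => g ⁻¹' {j}) C +
        hPartCond μ T (fun i => f ⁻¹' {i}) (⨆ N, window T Tinv g C N) := by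
  have hTm := hT.measurable
  have hle : ⨆ N, window T Tinv g C N ≤ mX :=
    iSup_le fun N => window_le_ambient hTm hTinv hC hg N
  apply le_antisymm
  · set L := hPartCond μ T (fun v => (fun x => (f x, g x)) ⁻¹' {v}) C with hL
    -- letting `q → ∞` removes the boundary term `H(g_0^{2N} | C)`
    have h1 : ∀ p r N : ℕ, 0 < p → 0 < r →
        L ≤ funH μ (itin T g r) C / r + funH μ (itin T f p) (window T Tinv g C N) / p := by
      intro p r N hp hr
      have hp' : (0 : ℝ) < p := Nat.cast_pos.2 hp
      have hr' : (0 : ℝ) < r := Nat.cast_pos.2 hr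
      by_contra! hlt
      set G := funH μ (itin T g r) C
      set F := funH μ (itin T f p) (window T Tinv g C N)
      have hd : 0 < (r * p : ℝ) * (L - (G / r + F / p)) :=
        mul_pos (mul_pos hr' hp') (sub_pos.2 hlt)
      obtain ⟨q, hq⟩ := exists_nat_gt
        (funH μ (itin T g (2 * N)) C / ((r * p : ℝ) * (L - (G / r + F / p))))
      rw [div_lt_iff₀ hd] at hq
      have h2 := mul_hPartCond_le (μ := μ) (C := C) T (fun x => (f x, g x)) (q * r * p)
      rw [← hL] at h2
      have h3 := funH_itin_pair_le hT hTinv hinv₁ hC hTC hf hg p q r N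
      have e : (q : ℝ) * ((r * p : ℝ) * (L - (G / r + F / p))) =
          q * r * p * L - (q * p * G + q * r * F) := by
        field_simp
      push_cast at h2
      linarith
    -- Lévy's theorem lets the window exhaust `β^T`
    have h2 : ∀ p r : ℕ, 0 < p → 0 < r →
        L ≤ funH μ (itin T g r) C / r +
          funH μ (itin T f p) (⨆ N, window T Tinv g C N) / p := by
      intro p r hp hr
      have ht := tendsto_funH (μ := μ) (itin T f p)
        { seq := window T Tinv g C
          mono' := window_mono hinv₂ hTC
          le' := window_le_ambient hTm hTinv hC hg }
      exact ge_of_tendsto ((ht.div_const (p : ℝ)).const_add (funH μ (itin T g r) C / r))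
        (Filter.Eventually.of_forall fun N => h1 p r N hp hr)
    have h3 : ∀ r : ℕ, 0 < r → L - funH μ (itin T g r) C / r ≤
        hPartCond μ T (fun i => f ⁻¹' {i}) (⨆ N, window T Tinv g C N) := by
      intro r hr
      refine le_hPartCond T f fun p hp => ?_
      have hp' : (0 : ℝ) < p := Nat.cast_pos.2 hp
      have := h2 p r hp hr
      rw [mul_comm, ← le_div_iff₀ hp']
      linarith
    have h4 : L - hPartCond μ T (fun i => f ⁻¹' {i}) (⨆ N, window T Tinv g C N) ≤
        hPartCond μ T (fun j => g ⁻¹' {j}) C := by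
      refine le_hPartCond T g fun r hr => ?_
      have hr' : (0 : ℝ) < r := Nat.cast_pos.2 hr
      have := h3 r hr
      rw [mul_comm, ← le_div_iff₀ hr']
      linarith
    linarith
  · refine le_hPartCond T _ fun n _ => ?_
    have hfm := sig_itin_le hTm hf n
    have hgm := sig_itin_le hTm hg n
    have h1 : funH μ (itin T (fun x => (f x, g x)) n) C =
        funH μ (fun x => (itin T f n x, itin T g n x)) C := by
      have he : Function.Injective
          (fun (w : Fin n → ι × κ) => ((fun i => (w i).1, fun i => (w i).2) :
            (Fin n → ι) × (Fin n → κ))) := by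
        intro w w' h
        have h1 := Prod.ext_iff.1 h
        funext i
        exact Prod.ext (congrFun h1.1 i) (congrFun h1.2 i)
      exact (funH_injective he (itin T (fun x => (f x, g x)) n)).symm
    have h2 := funH_chain (μ := μ) hC hfm hgm
    have h3 : funH μ (itin T f n) (⨆ N, window T Tinv g C N) ≤
        funH μ (itin T f n) (sig (itin T g n) ⊔ C) := by
      refine funH_anti _ (sup_le ?_ ?_) hle
      · refine (sig_itin_comp_le (S := id)).2 fun i hi => ?_
        -- time `i` is the index `i + n` of the window of radius `n`
        have h := ((window_le (g := g) (N := n) hinv₂ hTC).1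
          (le_iSup (window T Tinv g C) n)).1 (i + n) (by omega)
        have e : ((i + n : ℕ) : ℤ) - n = Int.ofNat i := by simp
        rw [e] at h
        exact h
      · exact ((window_le (g := g) (N := 0) hinv₂ hTC).1 (le_iSup _ _)).2
    have h4 := mul_hPartCond_le (μ := μ) (C := C) T g n
    have h5 := mul_hPartCond_le (μ := μ) (C := ⨆ N, window T Tinv g C N) T f n
    rw [mul_add]
    linarith

end Invertible

/-- A finite partition is the family of fibres of the function giving the index of the atom. -/
lemma FinPart.exists_fun (α : FinPart X mX) :
    ∃ a : X → Fin α.k, (∀ i, α.atom i = a ⁻¹' {i}) ∧ sig a ≤ mX := by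
  have h : ∀ x, ∃ i, x ∈ α.atom i := fun x => Set.mem_iUnion.1 (α.cover ▸ Set.mem_univ x)
  choose a ha using h
  have e : ∀ i, α.atom i = a ⁻¹' {i} := by
    intro i
    ext x
    refine ⟨fun hx => ?_, fun hx => (show a x = i from hx) ▸ ha x⟩
    by_contra hne
    exact Set.disjoint_left.1 (α.disj _ _ hne) (ha x) hx
  exact ⟨a, e, sig_le.2 fun i => e i ▸ α.meas i⟩

end Dynamics

/-- **Relative Pinsker formula.**
Let `(X,B,μ,T)` be an invertible Lebesgue system and `A` a sub-σ-algebra of `B` with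
`T⁻¹A = A`. Then for any finite measurable partitions `α, β` of `X`,
`h_μ(T, α∨β | A) = h_μ(T, β | A) + h_μ(T, α | β^T ∨ A)`,
where `β^T = ⋁_{i∈ℤ} T^{-i}β`. -/
theorem relative_pinsker_formula
    {X : Type*} [mX : MeasurableSpace X] [StandardBorelSpace X]
    (μ : Measure X) [IsProbabilityMeasure μ]
    (T Tinv : X → X) (hTmeas : Measurable T) (hTinvmeas : Measurable Tinv)
    (hinv₁ : Function.LeftInverse Tinv T) (hinv₂ : Function.RightInverse Tinv T)
    (hTmp : MeasurePreserving T μ μ)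
    (A : MeasurableSpace X) (hA : A ≤ mX) (hTA : MeasurableSpace.comap T A = A)
    (α β : FinPart X mX) :
    hPartCond μ T (fun p : Fin α.k × Fin β.k => α.atom p.1 ∩ β.atom p.2) A =
      hPartCond μ T β.atom A +
        hPartCond μ T α.atom
          ((MeasurableSpace.generateFrom
              {s : Set X | ∃ (i : ℤ) (j : Fin β.k), s = zIter T Tinv i ⁻¹' β.atom j}) ⊔ A) := by
  obtain ⟨a, ha, ham⟩ := α.exists_fun
  obtain ⟨b, hb, hbm⟩ := β.exists_fun
  have e1 : (fun p : Fin α.k × Fin β.k => α.atom p.1 ∩ β.atom p.2) =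
      fun v => (fun x => (a x, b x)) ⁻¹' {v} := by
    ext v x
    simp [ha, hb, Prod.ext_iff]
  have e2 : β.atom = fun j => b ⁻¹' {j} := funext hb
  have e3 : α.atom = fun i => a ⁻¹' {i} := funext ha
  rw [e1, e2, e3, ← iSup_window hinv₂ hTA]
  exact hPartCond_pair hTmp hTinvmeas hinv₁ hinv₂ hA hTA ham hbm
end

section
/- Let π: (X,B,μ,T) → (Z,A,λ,R) be a factor map between invertible Lebesgue systems, let π₁: (X,B,μ,T) → (Y,D,ν,S) be the Pinsker factor of (X,B,μ,T) with respect to π, and let μ = ∫_Y μ_y dν(y) be the disintegration of μ over (Y,D,ν,S). If (X,B,μ,T) is ergodic and h_μ(T|π) > 0, then: (1) μ_y is non-atomic (μ_y({x}) = 0 for every x ∈ X) for ν-a.e. y ∈ Y; (2) the relative product system (X×X, B×B, μ×_Yμ, T×T) is ergodic. -/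
/-!
Write `p = π₁`, `C = π⁻¹(A)`, with entropy always understood relative to `C`. By
`measurableSet_relPinsker_iff` the sets `D` for which `{D, Dᶜ}` has zero entropy form a σ-algebra,
namely the relative Pinsker σ-algebra; so, modulo null sets, they are exactly the `p`-measurable
sets, and only this property of `p` is used.

*Ergodicity of the relative product* (`relProd_ergodic`). Let `B ⊆ X × X` be invariant under `T × T`,
with sections `B_x`, let `A ⊆ X` be measurable and put `g x = μ_{p x}(B_x ∩ A)`. The main point is
that `g` is `p`-measurable modulo null sets, that is, that the superlevel sets `D = {g > t}` have
zero entropy for all but countably many `t` (`zeroEnt_superlevel`). Since `B` is invariant and the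
disintegration is equivariant, `g (T^i x) = μ_{p x}(B_x ∩ T^{-i} A)`. Replace `B` by a finite union
of rectangles close to it; then `B_x` is replaced by one of finitely many sets `A_{c(x)}`, with a
small error in most fibres that does not depend on `i`. Hence every translate `T^{-i} D` is
approximated, uniformly in `i`, by a set glued along the finite partition `c` from the `p`-measurable
sets `{x | μ_{p x}(A_j ∩ T^{-i} A) > t}`. Given these zero-entropy sets, the `D`-name of length `n` is
determined up to a small proportion of errors by the single symbol `c(x)`, so coding it costs a
bounded amount plus `n` times a small constant, and `D` has zero entropy
(`exists_condHF_word_bit_le`, based on the Gibbs inequality `sum_negMulLog_le_of_code` applied to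
independent noisy guesses of the bits).

Being `p`-measurable, `g` is determined by its integrals over the sets `p⁻¹ F`. Exchanging the two
coordinates of the relative product turns these into integrals over `p⁻¹ F ∩ A` of the measures of
the sections of `B` in the other direction, a `T`-invariant function and so a constant `c`. Therefore
`g x = c μ_{p x}(A)`; as `A` is arbitrary, the restriction of the relative product to `B` is `c` times
the relative product, and evaluating both at `Bᶜ` shows that `B` is null or conull.

*Non-atomicity* (`ae_noAtom_or_ae_eq_preimage`). The diagonal of `X × X` is an invariant set, hence
null or conull. If it is null, almost every `μ_y` has no atoms. If it is conull, almost every `μ_y` is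
a point mass, so that every measurable set is `p`-measurable modulo null sets and `h_μ(T|π) = 0`.
-/

open MeasureTheory Filter Set Topology

section Pinsker

variable {X : Type*}

/-- Two σ-algebras agree mod `μ` if every set of one differs from a set
of the other by a `μ`-null set. -/
def EqModMeasure {m0 : MeasurableSpace X} (μ : Measure X)
    (m₁ m₂ : MeasurableSpace X) : Prop :=
  (∀ s : Set X, MeasurableSet[m₁] s →
    ∃ t : Set X, MeasurableSet[m₂] t ∧ μ ((s \ t) ∪ (t \ s)) = 0) ∧
  (∀ s : Set X, MeasurableSet[m₂] s →
    ∃ t : Set X, MeasurableSet[m₁] t ∧ μ ((s \ t) ∪ (t \ s)) = 0)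

/-- The relative Pinsker σ-algebra `P_μ(π)` of `(X,B,μ,T)` relative to a sub-σ-algebra `C`:
the smallest sub-σ-algebra containing every finite partition `α` with `h_μ(T, α | C) = 0`. -/
noncomputable def relPinsker {m0 : MeasurableSpace X} (μ : Measure X) (T : X → X)
    (C : MeasurableSpace X) : MeasurableSpace X :=
  MeasurableSpace.generateFrom
    {s : Set X | ∃ α : FinPart X m0, hPartCond μ T α.atom C = 0 ∧ ∃ i, α.atom i = s}

end Pinsker

section

open ProbabilityTheory

/-! ### Entropy of finite-valued functions and the Gibbs inequality -/

section FiniteEntropy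

/-- The Shannon entropy `H_ρ(f)` of the partition of `X` into the level sets of a finite-valued
function `f`. -/
noncomputable def levelH {X : Type*} [MeasurableSpace X] (ρ : Measure X)
    {ι : Type*} [Fintype ι] (f : X → ι) : ℝ :=
  ∑ i, Real.negMulLog (ρ.real (f ⁻¹' {i}))

theorem negMulLog_sum_le {κ : Type*} (s : Finset κ) (p : κ → ℝ) (hp : ∀ j ∈ s, 0 ≤ p j) :
    Real.negMulLog (∑ j ∈ s, p j) ≤ ∑ j ∈ s, Real.negMulLog (p j) := by
  simp only [Real.negMulLog, neg_mul]
  rw [Finset.sum_neg_distrib, neg_le_neg_iff, Finset.sum_mul]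
  refine Finset.sum_le_sum fun j hj => ?_
  rcases (hp j hj).eq_or_lt with h | h
  · simp [← h]
  · exact mul_le_mul_of_nonneg_left
      (Real.log_le_log h (Finset.single_le_sum (f := p) hp hj)) h.le

/-- The Gibbs inequality: a code with sub-probability weights `r (·, j)` for the symbol `i` given
the side information `j` costs at least the entropy of `i` given `j`. -/
theorem sum_negMulLog_le_of_code {ι κ : Type*} [Fintype ι] [Fintype κ] (p r : ι → κ → ℝ)
    (hp : ∀ i j, 0 ≤ p i j) (hr : ∀ i j, 0 ≤ r i j) (hr1 : ∀ j, ∑ i, r i j ≤ 1)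
    (hpr : ∀ i j, p i j ≠ 0 → r i j ≠ 0) :
    ∑ i, ∑ j, Real.negMulLog (p i j) ≤
      ∑ j, Real.negMulLog (∑ i, p i j) + ∑ i, ∑ j, p i j * (-Real.log (r i j)) := by
  rw [Finset.sum_comm, Finset.sum_comm (f := fun i j => p i j * (-Real.log (r i j))),
    ← Finset.sum_add_distrib]
  refine Finset.sum_le_sum fun j _ => ?_
  set P := ∑ i, p i j with hP
  have hle : ∀ i, p i j ≤ P := fun i =>
    Finset.single_le_sum (f := fun i => p i j) (fun i _ => hp i j) (Finset.mem_univ i)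
  have hP0 : 0 ≤ P := Finset.sum_nonneg fun i _ => hp i j
  have key : ∀ i, Real.negMulLog (p i j) ≤
      p i j * (-Real.log P) + p i j * (-Real.log (r i j)) + (r i j * P - p i j) := by
    intro i
    rcases (hp i j).eq_or_lt with h | h
    · simp only [← h, Real.negMulLog_zero]
      nlinarith [mul_nonneg (hr i j) hP0]
    · have hPp : 0 < P := h.trans_le (hle i)
      have hrp : 0 < r i j := (hr i j).lt_of_ne' (hpr i j h.ne')
      have h1 := Real.log_le_sub_one_of_pos (div_pos (mul_pos hrp hPp) h)
      rw [Real.log_div (mul_pos hrp hPp).ne' h.ne', Real.log_mul hrp.ne' hPp.ne'] at h1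
      have h2 := mul_le_mul_of_nonneg_left h1 h.le
      have h3 : p i j * (r i j * P / p i j - 1) = r i j * P - p i j := by
        field_simp
      rw [h3] at h2
      simp only [Real.negMulLog]
      linarith
  refine (Finset.sum_le_sum fun i _ => key i).trans ?_
  rw [Finset.sum_add_distrib, Finset.sum_add_distrib, ← Finset.sum_mul, Finset.sum_sub_distrib,
    ← Finset.sum_mul]
  have := mul_le_mul_of_nonneg_right (hr1 j) hP0
  simp only [Real.negMulLog, ← hP]
  linarith

variable {X : Type*} [MeasurableSpace X]

theorem levelH_mono (ρ : Measure X) [IsProbabilityMeasure ρ]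
    {ι κ : Type*} [Fintype ι] [Fintype κ] [MeasurableSpace κ]
    [MeasurableSingletonClass κ] {f : X → ι} {g : X → κ} (hg : Measurable g)
    (hfg : f.FactorsThrough g) : levelH ρ f ≤ levelH ρ g := by
  classical
  have : Nonempty X := nonempty_of_isProbabilityMeasure ρ
  have : Nonempty ι := ⟨f (Classical.arbitrary X)⟩
  obtain ⟨φ, rfl⟩ := (Function.factorsThrough_iff f).1 hfg
  unfold levelH
  have h : ∀ i, ρ.real (φ ∘ g ⁻¹' {i}) = ∑ j with φ j = i, ρ.real (g ⁻¹' {j}) := by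
    intro i
    rw [← measureReal_biUnion_finset]
    · congr 1
      ext x
      simp
    · intro a _ b _ hab
      exact Disjoint.preimage _ (by simpa using hab)
    · intro b _
      exact hg (measurableSet_singleton b)
  calc _ ≤ ∑ i, ∑ j with φ j = i, Real.negMulLog (ρ.real (g ⁻¹' {j})) := by
        refine Finset.sum_le_sum fun i _ => ?_
        rw [h]
        exact negMulLog_sum_le _ _ fun _ _ => measureReal_nonneg
    _ = _ := Finset.sum_fiberwise _ _ _

theorem sum_measureReal_prod_left (ρ : Measure X) [IsFiniteMeasure ρ]
    {ι κ : Type*} [Fintype ι] [MeasurableSpace ι] [MeasurableSingletonClass ι]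
    [MeasurableSpace κ] [MeasurableSingletonClass κ] {f : X → ι} {w : X → κ}
    (hf : Measurable f) (hw : Measurable w) (j : κ) :
    ∑ i, ρ.real ((fun x => (f x, w x)) ⁻¹' {(i, j)}) = ρ.real (w ⁻¹' {j}) := by
  classical
  rw [← measureReal_biUnion_finset]
  · congr 1
    ext x
    simp
  · intro a _ b _ hab
    exact Disjoint.preimage _ (by simp [hab])
  · intro b _
    exact (hf.prodMk hw) (measurableSet_singleton _)

theorem sum_measureReal_prod_right (ρ : Measure X) [IsFiniteMeasure ρ]
    {ι κ : Type*} [Fintype κ] [MeasurableSpace ι] [MeasurableSingletonClass ι]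
    [MeasurableSpace κ] [MeasurableSingletonClass κ] {f : X → ι} {w : X → κ}
    (hf : Measurable f) (hw : Measurable w) (i : ι) :
    ∑ j, ρ.real ((fun x => (f x, w x)) ⁻¹' {(i, j)}) = ρ.real (f ⁻¹' {i}) := by
  classical
  rw [← measureReal_biUnion_finset]
  · congr 1
    ext x
    simp [eq_comm]
  · intro a _ b _ hab
    exact Disjoint.preimage _ (by simp [hab])
  · intro b _
    exact (hf.prodMk hw) (measurableSet_singleton _)

theorem levelH_prod_le_code (ρ : Measure X) [IsProbabilityMeasure ρ]
    {ι κ : Type*} [Fintype ι] [Fintype κ] [MeasurableSpace ι] [MeasurableSingletonClass ι]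
    [MeasurableSpace κ] [MeasurableSingletonClass κ] {f : X → ι} {w : X → κ}
    (hf : Measurable f) (hw : Measurable w) (r : ι → κ → ℝ)
    (hr : ∀ i j, 0 < r i j) (hr1 : ∀ j, ∑ i, r i j ≤ 1) :
    levelH ρ (fun x => (f x, w x)) ≤ levelH ρ w +
      ∑ i, ∑ j, ρ.real ((fun x => (f x, w x)) ⁻¹' {(i, j)}) * (-Real.log (r i j)) := by
  have := sum_negMulLog_le_of_code
    (fun i j => ρ.real ((fun x => (f x, w x)) ⁻¹' {(i, j)})) r
    (fun _ _ => measureReal_nonneg) (fun i j => (hr i j).le) hr1 (fun i j _ => (hr i j).ne')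
  simp only [sum_measureReal_prod_left ρ hf hw] at this
  unfold levelH
  rwa [Fintype.sum_prod_type]

theorem levelH_prod_le (ρ : Measure X) [IsProbabilityMeasure ρ]
    {ι κ : Type*} [Fintype ι] [Fintype κ] [MeasurableSpace ι] [MeasurableSingletonClass ι]
    [MeasurableSpace κ] [MeasurableSingletonClass κ] {f : X → ι} {w : X → κ}
    (hf : Measurable f) (hw : Measurable w) :
    levelH ρ (fun x => (f x, w x)) ≤ levelH ρ f + levelH ρ w := by
  classical
  -- The side information is ignored: the code of `i` has weights `ρ(f = i)`.
  have := sum_negMulLog_le_of_code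
    (fun i j => ρ.real ((fun x => (f x, w x)) ⁻¹' {(i, j)})) (fun i _ => ρ.real (f ⁻¹' {i}))
    (fun _ _ => measureReal_nonneg) (fun i j => measureReal_nonneg) (fun j => by
      rw [← measureReal_biUnion_finset]
      · exact measureReal_le_one
      · intro a _ b _ hab
        exact Disjoint.preimage _ (by simpa using hab)
      · intro b _
        exact hf (measurableSet_singleton b)) (fun i j h h0 => h (by
      refine le_antisymm ?_ measureReal_nonneg
      rw [← h0]
      refine measureReal_mono ?_
      intro x hx
      simp only [mem_preimage, mem_singleton_iff, Prod.mk.injEq] at hx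
      exact hx.1))
  simp only [sum_measureReal_prod_left ρ hf hw, ← Finset.sum_mul,
    sum_measureReal_prod_right ρ hf hw] at this
  unfold levelH
  rw [Fintype.sum_prod_type]
  refine this.trans_eq ?_
  rw [add_comm]
  simp [Real.negMulLog]

end FiniteEntropy

/-! ### Conditional entropy -/

section CondEntropy

/-- The conditional entropy `H_μ(f | C)` of the partition of `X` into the level sets of `f`. -/
noncomputable def condHF {X : Type*} {mX : MeasurableSpace X} (μ : Measure X) (C : MeasurableSpace X)
    {ι : Type*} [Fintype ι] (f : X → ι) : ℝ :=
  condH μ (fun i => f ⁻¹' {i}) C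

/-- The `f`-name of length `n` of a point: its level sets generate `⋁_{i<n} T^{-i} f`. -/
def word {X ι : Type*} (T : X → X) (f : X → ι) (n : ℕ) : X → (Fin n → ι) :=
  fun x i => f (T^[(i : ℕ)] x)

theorem joinAtoms_eq_word {X ι : Type*} (T : X → X) (f : X → ι) (n : ℕ) :
    joinAtoms T (fun i => f ⁻¹' {i}) n = fun s => word T f n ⁻¹' {s} := by
  ext s x
  simp [joinAtoms, word, funext_iff]

variable {X : Type*} {C : MeasurableSpace X} [mX : MeasurableSpace X]

theorem hPartCond_eq_iInf {μ : Measure X} (T : X → X) {ι : Type*} [Fintype ι] (f : X → ι) :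
    hPartCond μ T (fun i => f ⁻¹' {i}) C =
      ⨅ n : ℕ, (1 / (n + 1 : ℝ)) * condHF μ C (word T f (n + 1)) := by
  simp only [hPartCond, joinAtoms_eq_word, condHF]

theorem measurable_word {ι : Type*} [MeasurableSpace ι] {T : X → X} (hT : Measurable T) {f : X → ι}
    (hf : Measurable f) (n : ℕ) : Measurable (word T f n) :=
  measurable_pi_lambda _ fun i => hf.comp (hT.iterate i)

variable {μ : Measure X} [IsProbabilityMeasure μ]
variable {ι κ : Type*} [Fintype ι] [Fintype κ] [MeasurableSpace ι] [MeasurableSingletonClass ι]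
    [MeasurableSpace κ] [MeasurableSingletonClass κ]

theorem integral_fintype_comp {f : X → ι} (hf : Measurable f) (a : ι → ℝ) :
    ∫ x, a (f x) ∂μ = ∑ i, μ.real (f ⁻¹' {i}) * a i := by
  have := Measure.isProbabilityMeasure_map (μ := μ) hf.aemeasurable
  rw [← integral_map (φ := f) hf.aemeasurable
    (Measurable.of_discrete (f := a)).aestronglyMeasurable]
  rw [integral_fintype (Integrable.of_finite)]
  refine Finset.sum_congr rfl fun i _ => ?_
  rw [map_measureReal_apply hf (measurableSet_singleton i), smul_eq_mul]

theorem condExp_preimage_ae_eq (hC : C ≤ mX) {T : X → X} (hT : MeasurePreserving T μ μ)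
    (hTe : MeasurableEmbedding T) (hCT : C.comap T = C) {s : Set X} (hs : MeasurableSet s) :
    (fun x => (μ[s.indicator (fun _ => (1 : ℝ)) | C]) (T x)) =ᵐ[μ]
      μ[(T ⁻¹' s).indicator (fun _ => (1 : ℝ)) | C] := by
  have hTC : Measurable[C, C] T := by
    rw [measurable_iff_comap_le, hCT]
  have hi : Integrable (fun x => (μ[s.indicator (fun _ => (1 : ℝ)) | C]) (T x)) μ :=
    (hT.integrable_comp integrable_condExp.aestronglyMeasurable).2 integrable_condExp
  refine ae_eq_condExp_of_forall_setIntegral_eq hC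
    ((integrable_const _).indicator (hT.measurable hs)) (fun _ _ _ => hi.integrableOn) ?_ ?_
  · intro t ht _
    rw [← hCT] at ht
    obtain ⟨t', ht', rfl⟩ := ht
    have e1 := hT.setIntegral_preimage_emb hTe (μ[s.indicator (fun _ => (1 : ℝ)) | C]) t'
    have e2 := hT.setIntegral_preimage_emb hTe (s.indicator (fun _ => (1 : ℝ))) t'
    rw [e1, setIntegral_condExp hC ((integrable_const _).indicator hs) ht', ← e2]
    rfl
  · exact (stronglyMeasurable_condExp.comp_measurable hTC).aestronglyMeasurable

theorem condHF_comp (hC : C ≤ mX) {T : X → X} (hT : MeasurePreserving T μ μ)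
    (hTe : MeasurableEmbedding T) (hCT : C.comap T = C) {f : X → ι} (hf : Measurable f) :
    condHF μ C (f ∘ T) = condHF μ C f := by
  unfold condHF condH
  refine Finset.sum_congr rfl fun i _ => ?_
  refine (integral_congr_ae ?_).trans (hT.integral_comp hTe
    fun x => Real.negMulLog ((μ[(f ⁻¹' {i}).indicator (fun _ => (1 : ℝ)) | C]) x))
  filter_upwards [condExp_preimage_ae_eq hC hT hTe hCT (hf (measurableSet_singleton i))] with x hx
  exact congrArg Real.negMulLog hx.symm

variable [StandardBorelSpace X]

theorem measurable_condExpKernel_real (hC : C ≤ mX) {s : Set X} (hs : MeasurableSet s) :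
    Measurable fun x => (condExpKernel μ C x).real s :=
  ((measurable_condExpKernel hs).mono hC le_rfl).ennreal_toReal

theorem integrable_condExpKernel_real (hC : C ≤ mX) {s : Set X} (hs : MeasurableSet s) :
    Integrable (fun x => (condExpKernel μ C x).real s) μ :=
  .of_bound (measurable_condExpKernel_real hC hs).aestronglyMeasurable 1
    (.of_forall fun x => by
      rw [Real.norm_of_nonneg measureReal_nonneg]
      exact measureReal_le_one)

theorem integral_condExpKernel_real (hC : C ≤ mX) {s : Set X} (hs : MeasurableSet s) :
    ∫ x, (condExpKernel μ C x).real s ∂μ = μ.real s := by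
  rw [integral_congr_ae (condExpKernel_ae_eq_condExp hC hs), integral_condExp hC,
    integral_indicator_const _ hs]
  simp

theorem integrable_negMulLog_condExpKernel (hC : C ≤ mX) {s : Set X} (hs : MeasurableSet s) :
    Integrable (fun x => Real.negMulLog ((condExpKernel μ C x).real s)) μ :=
  .of_bound (Real.continuous_negMulLog.measurable.comp
    (measurable_condExpKernel_real hC hs)).aestronglyMeasurable 1
    (.of_forall fun x => by
      rw [Real.norm_of_nonneg (Real.negMulLog_nonneg measureReal_nonneg measureReal_le_one)]
      have := Real.negMulLog_le_one_sub_self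
        (measureReal_nonneg (μ := condExpKernel μ C x) (s := s))
      have h0 := measureReal_nonneg (μ := condExpKernel μ C x) (s := s)
      linarith)

theorem integrable_levelH (hC : C ≤ mX) {f : X → ι} (hf : Measurable f) :
    Integrable (fun x => levelH (condExpKernel μ C x) f) μ :=
  integrable_finsetSum _ fun _ _ =>
    integrable_negMulLog_condExpKernel hC (hf (measurableSet_singleton _))

/-- `H_μ(f | C)` is the average of the entropies of `f` for the conditional measures given `C`;
through this, pointwise inequalities for `levelH` pass to `condHF`. -/
theorem condHF_eq_integral (hC : C ≤ mX) {f : X → ι} (hf : Measurable f) :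
    condHF μ C f = ∫ x, levelH (condExpKernel μ C x) f ∂μ := by
  unfold condHF condH levelH
  rw [integral_finsetSum _ fun _ _ =>
    integrable_negMulLog_condExpKernel hC (hf (measurableSet_singleton _))]
  refine Finset.sum_congr rfl fun i _ => integral_congr_ae ?_
  filter_upwards [condExpKernel_ae_eq_condExp (μ := μ) hC (hf (measurableSet_singleton i))] with x hx
  rw [hx]

theorem condHF_mono (hC : C ≤ mX) {f : X → ι} {g : X → κ} (hf : Measurable f) (hg : Measurable g)
    (hfg : f.FactorsThrough g) : condHF μ C f ≤ condHF μ C g := by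
  rw [condHF_eq_integral hC hf, condHF_eq_integral hC hg]
  exact integral_mono (integrable_levelH hC hf) (integrable_levelH hC hg)
    fun x => levelH_mono _ hg hfg

theorem condHF_prod_le (hC : C ≤ mX) {f : X → ι} {w : X → κ} (hf : Measurable f)
    (hw : Measurable w) :
    condHF μ C (fun x => (f x, w x)) ≤ condHF μ C f + condHF μ C w := by
  rw [condHF_eq_integral hC hf, condHF_eq_integral hC hw, condHF_eq_integral hC (hf.prodMk hw),
    ← integral_add (integrable_levelH hC hf) (integrable_levelH hC hw)]
  exact integral_mono (integrable_levelH hC (hf.prodMk hw))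
    ((integrable_levelH hC hf).add (integrable_levelH hC hw)) fun x => levelH_prod_le _ hf hw

theorem condHF_nonneg (hC : C ≤ mX) {f : X → ι} (hf : Measurable f) : 0 ≤ condHF μ C f := by
  rw [condHF_eq_integral hC hf]
  exact integral_nonneg fun x => Finset.sum_nonneg fun i _ =>
    Real.negMulLog_nonneg measureReal_nonneg measureReal_le_one

theorem condHF_of_subsingleton [Subsingleton ι] (hC : C ≤ mX) {f : X → ι} (hf : Measurable f) :
    condHF μ C f = 0 := by
  rw [condHF_eq_integral hC hf]
  have : ∀ x, levelH (condExpKernel μ C x) f = 0 := by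
    intro x
    refine Finset.sum_eq_zero fun i _ => ?_
    have : f ⁻¹' {i} = univ := by
      ext y
      simp [eq_iff_true_of_subsingleton]
    simp [this]
  simp [this]

/-- Coding `f` with the help of the side information `w`, using positive weights `r (·, j)` of
total mass at most one, costs at least the entropy of `f` given `C` and `w`. -/
theorem condHF_prod_le_code (hC : C ≤ mX) {f : X → ι} {w : X → κ} (hf : Measurable f)
    (hw : Measurable w) (r : ι → κ → ℝ) (hr : ∀ i j, 0 < r i j) (hr1 : ∀ j, ∑ i, r i j ≤ 1) :
    condHF μ C (fun x => (f x, w x)) ≤ condHF μ C w + ∫ x, -Real.log (r (f x) (w x)) ∂μ := by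
  have hfw := hf.prodMk hw
  have h1 : ∀ i j, Integrable (fun x => (condExpKernel μ C x).real
      ((fun x => (f x, w x)) ⁻¹' {(i, j)}) * (-Real.log (r i j))) μ := fun i j =>
    (integrable_condExpKernel_real hC (hfw (measurableSet_singleton _))).mul_const _
  have h2 : Integrable (fun x => ∑ i, ∑ j, (condExpKernel μ C x).real
      ((fun x => (f x, w x)) ⁻¹' {(i, j)}) * (-Real.log (r i j))) μ :=
    integrable_finsetSum _ fun i _ => integrable_finsetSum _ fun j _ => h1 i j
  have h3 : ∫ x, -Real.log (r (f x) (w x)) ∂μ = ∫ x, ∑ i, ∑ j, (condExpKernel μ C x).real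
      ((fun x => (f x, w x)) ⁻¹' {(i, j)}) * (-Real.log (r i j)) ∂μ := by
    rw [integral_finsetSum _ fun i _ => integrable_finsetSum _ fun j _ => h1 i j,
      integral_fintype_comp hfw (fun p => -Real.log (r p.1 p.2)), Fintype.sum_prod_type]
    refine Finset.sum_congr rfl fun i _ => ?_
    rw [integral_finsetSum _ fun j _ => h1 i j]
    refine Finset.sum_congr rfl fun j _ => ?_
    rw [integral_mul_const, integral_condExpKernel_real hC (hfw (measurableSet_singleton _))]
  rw [h3, condHF_eq_integral hC hfw, condHF_eq_integral hC hw,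
    ← integral_add (integrable_levelH hC hw) h2]
  exact integral_mono (integrable_levelH hC hfw) ((integrable_levelH hC hw).add h2)
    fun x => levelH_prod_le_code _ hf hw r hr hr1

end CondEntropy

/-! ### Functions of zero relative entropy -/

section ZeroEntropy

/-- `T` is a measure-preserving map, invertible modulo null sets (an injection with measurable
images), and `C` is a `T`-invariant sub-σ-algebra. -/
structure InvariantSub {X : Type*} {mX : MeasurableSpace X} (μ : Measure X) (T : X → X)
    (C : MeasurableSpace X) : Prop where
  le : C ≤ mX
  mp : @MeasurePreserving X X mX mX T μ μ
  emb : @MeasurableEmbedding X X mX mX T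
  comap_eq : C.comap T = C

/-- `f` has zero entropy relative to `C`. By subadditivity this says that the infimum (equivalently
the limit) of `H_μ(⋁_{i<n} T^{-i} f | C) / n` vanishes. -/
def ZeroEnt {X : Type*} {mX : MeasurableSpace X} (μ : Measure X) (T : X → X) (C : MeasurableSpace X)
    {ι : Type*} [Fintype ι] (f : X → ι) : Prop :=
  ∀ ε : ℝ, 0 < ε → ∃ n : ℕ, 0 < n ∧ condHF μ C (word T f n) ≤ n * ε

variable {X : Type*} {C : MeasurableSpace X} [mX : MeasurableSpace X] {μ : Measure X} {T : X → X}

theorem InvariantSub.iterate (h : InvariantSub μ T C) (n : ℕ) : InvariantSub μ T^[n] C := by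
  refine ⟨h.le, h.mp.iterate n, ?_, ?_⟩
  · induction n with
    | zero => exact MeasurableEmbedding.id
    | succ n ih => rw [Function.iterate_succ]; exact ih.comp h.emb
  · induction n with
    | zero => exact MeasurableSpace.comap_id
    | succ n ih => rw [Function.iterate_succ, ← MeasurableSpace.comap_comp, ih, h.comap_eq]

variable [IsProbabilityMeasure μ]
variable {ι κ κ' : Type*} [Fintype ι] [Fintype κ] [Fintype κ'] [MeasurableSpace ι]
  [MeasurableSingletonClass ι] [MeasurableSpace κ] [MeasurableSingletonClass κ]
  [MeasurableSpace κ'] [MeasurableSingletonClass κ']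

theorem condHF_comp_iterate (h : InvariantSub μ T C) {f : X → ι} (hf : Measurable f) (n : ℕ) :
    condHF μ C (f ∘ T^[n]) = condHF μ C f :=
  have hn := h.iterate n
  condHF_comp hn.le hn.mp hn.emb hn.comap_eq hf

variable [StandardBorelSpace X]

theorem hPartCond_nonneg (h : InvariantSub μ T C) {f : X → ι} (hf : Measurable f) :
    0 ≤ hPartCond μ T (fun i => f ⁻¹' {i}) C := by
  rw [hPartCond_eq_iInf]
  exact Real.iInf_nonneg fun n => mul_nonneg (by positivity)
    (condHF_nonneg h.le (measurable_word h.mp.measurable hf _))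

theorem zeroEnt_iff (h : InvariantSub μ T C) {f : X → ι} (hf : Measurable f) :
    ZeroEnt μ T C f ↔ hPartCond μ T (fun i => f ⁻¹' {i}) C = 0 := by
  have hnn : ∀ n : ℕ, 0 ≤ (1 / (n + 1 : ℝ)) * condHF μ C (word T f (n + 1)) := fun n =>
    mul_nonneg (by positivity) (condHF_nonneg h.le (measurable_word h.mp.measurable hf _))
  have hbdd : BddBelow (range fun n : ℕ => (1 / (n + 1 : ℝ)) * condHF μ C (word T f (n + 1))) :=
    ⟨0, by rintro _ ⟨n, rfl⟩; exact hnn n⟩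
  constructor
  · intro hz
    refine le_antisymm (le_of_forall_pos_le_add fun ε hε => ?_) (hPartCond_nonneg h hf)
    obtain ⟨n, hn, hle⟩ := hz ε hε
    obtain ⟨m, rfl⟩ := Nat.exists_eq_succ_of_ne_zero hn.ne'
    rw [hPartCond_eq_iInf, zero_add]
    refine (ciInf_le hbdd m).trans ?_
    rw [one_div, inv_mul_le_iff₀ (by positivity)]
    simpa using hle
  · intro h0 ε hε
    rw [hPartCond_eq_iInf] at h0
    obtain ⟨n, hn⟩ := exists_lt_of_ciInf_lt (h0.trans_lt hε)
    refine ⟨n + 1, Nat.succ_pos _, ?_⟩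
    rw [one_div, inv_mul_lt_iff₀ (by positivity)] at hn
    simpa using hn.le

theorem condHF_word_add (h : InvariantSub μ T C) {f : X → ι} (hf : Measurable f) (a b : ℕ) :
    condHF μ C (word T f (a + b)) ≤ condHF μ C (word T f a) + condHF μ C (word T f b) := by
  have hw := measurable_word h.mp.measurable hf
  rw [← condHF_comp_iterate h (hw b) a]
  refine le_trans ?_ (condHF_prod_le h.le (hw a) ((hw b).comp (h.mp.measurable.iterate a)))
  refine condHF_mono h.le (hw _) ((hw a).prodMk ((hw b).comp (h.mp.measurable.iterate a))) ?_
  intro x y hxy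
  simp only [Prod.mk.injEq, funext_iff, word, Function.comp, Fin.forall_iff,
    ← Function.iterate_add_apply] at hxy
  ext i
  simp only [word]
  rcases lt_or_ge (i : ℕ) a with hi | hi
  · exact hxy.1 i hi
  · have := hxy.2 (i - a) (by omega)
    rwa [Nat.sub_add_cancel hi] at this

theorem condHF_word_mul (h : InvariantSub μ T C) {f : X → ι} (hf : Measurable f) (k n : ℕ) :
    condHF μ C (word T f (k * n)) ≤ n * condHF μ C (word T f k) := by
  induction n with
  | zero =>
    have : Subsingleton (Fin (k * 0) → ι) := by rw [mul_zero]; infer_instance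
    rw [condHF_of_subsingleton h.le (measurable_word h.mp.measurable hf _)]
    simp
  | succ n ih =>
    have := condHF_word_add h hf (k * n) k
    rw [mul_add_one]
    push_cast
    linarith

/-- Coding block after block: if `F` can be coded at average cost `∫ -log r(F, G)` when `G` is
known, then `m` successive values of `F` cost at most `m` times that much more than the `G`-name. -/
theorem condHF_word_code (h : InvariantSub μ T C) {F : X → ι} {G : X → κ} (hF : Measurable F)
    (hG : Measurable G) (r : ι → κ → ℝ) (hr : ∀ i j, 0 < r i j) (hr1 : ∀ j, ∑ i, r i j ≤ 1)
    (m : ℕ) : condHF μ C (word T F m) ≤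
      condHF μ C (word T G m) + m * ∫ x, -Real.log (r (F x) (G x)) ∂μ := by
  have hwF := measurable_word h.mp.measurable hF
  have hwG := measurable_word h.mp.measurable hG
  have key : ∀ l ≤ m, condHF μ C (fun x => (word T F l x, word T G m x)) ≤
      condHF μ C (word T G m) + l * ∫ x, -Real.log (r (F x) (G x)) ∂μ := by
    intro l
    induction l with
    | zero =>
      intro _
      rw [Nat.cast_zero, zero_mul, add_zero]
      refine condHF_mono h.le ((hwF 0).prodMk (hwG m)) (hwG m) ?_
      intro x y hxy
      exact Prod.ext (Subsingleton.elim _ _) hxy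
    | succ l ih =>
      intro hl
      have h1 := ih (by omega)
      have h2 := condHF_prod_le_code (μ := μ) h.le (hF.comp (h.mp.measurable.iterate l))
        ((hwF l).prodMk (hwG m)) (fun i p => r i (p.2 ⟨l, hl⟩)) (fun i p => hr _ _)
        (fun p => hr1 _)
      have h3 : ∫ x, -Real.log (r ((F ∘ T^[l]) x) (word T G m x ⟨l, hl⟩)) ∂μ =
          ∫ x, -Real.log (r (F x) (G x)) ∂μ :=
        (h.iterate l).mp.integral_comp (h.iterate l).emb fun x => -Real.log (r (F x) (G x))
      rw [h3] at h2
      have h4 : condHF μ C (fun x => (word T F (l + 1) x, word T G m x)) ≤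
          condHF μ C (fun x => ((F ∘ T^[l]) x, (word T F l x, word T G m x))) := by
        refine condHF_mono h.le ((hwF _).prodMk (hwG m))
          ((hF.comp (h.mp.measurable.iterate l)).prodMk ((hwF l).prodMk (hwG m))) ?_
        intro x y hxy
        simp only [Prod.mk.injEq] at hxy ⊢
        refine ⟨?_, hxy.2.2⟩
        ext i
        rcases Nat.lt_succ_iff_lt_or_eq.1 i.2 with hi | hi
        · exact congrFun hxy.2.1 ⟨i, hi⟩
        · simpa [word, hi] using hxy.1
      push_cast
      linarith
  refine le_trans ?_ (key m le_rfl)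
  exact condHF_mono h.le (hwF m) ((hwF m).prodMk (hwG m)) fun x y hxy => (Prod.mk.inj hxy).1

/-- If the `f`-name of length `n` can be coded, for some `n`, at cost at most `n ε` with the help of a
zero-entropy function `G`, then `f` has entropy at most `2 ε`: its names of some length `N` have
conditional entropy at most `2 ε N`. -/
theorem zeroEnt_of_block_code (h : InvariantSub μ T C) {f : X → ι} (hf : Measurable f)
    {ε : ℝ} (hε : 0 < ε) {n : ℕ} (hn : 0 < n) {F : X → κ'} {G : X → κ} (hF : Measurable F)
    (hG : Measurable G) (hG0 : ZeroEnt μ T C G) (hfF : (word T f n).FactorsThrough F)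
    (r : κ' → κ → ℝ) (hr : ∀ i j, 0 < r i j) (hr1 : ∀ j, ∑ i, r i j ≤ 1)
    (hc : ∫ x, -Real.log (r (F x) (G x)) ∂μ ≤ n * ε) :
    ∃ N : ℕ, 0 < N ∧ condHF μ C (word T f N) ≤ N * (2 * ε) := by
  obtain ⟨k, hk, hle⟩ := hG0 ε hε
  refine ⟨n * k, Nat.mul_pos hn hk, ?_⟩
  have hn' := h.iterate n
  have h1 : condHF μ C (word T f (n * k)) ≤ condHF μ C (word T^[n] F k) := by
    refine condHF_mono h.le (measurable_word h.mp.measurable hf _)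
      (measurable_word hn'.mp.measurable hF _) ?_
    intro x y hxy
    ext i
    have hi : (i : ℕ) / n < k := (Nat.div_lt_iff_lt_mul hn).2 (i.2.trans_eq (mul_comm n k))
    have h2 := hfF (congrFun hxy ⟨i / n, hi⟩)
    have h3 := congrFun h2 ⟨i % n, Nat.mod_lt _ hn⟩
    simp only [word, ← Function.iterate_mul, ← Function.iterate_add_apply,
      Nat.mod_add_div] at h3
    exact h3
  have h2 := condHF_word_code hn' hF hG r hr hr1 k
  have h3 : condHF μ C (word T^[n] G k) ≤ condHF μ C (word T G (k * n)) := by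
    refine condHF_mono h.le (measurable_word hn'.mp.measurable hG _)
      (measurable_word h.mp.measurable hG _) ?_
    intro x y hxy
    ext i
    have := congrFun hxy ⟨n * i, by rw [mul_comm]; exact Nat.mul_lt_mul_of_pos_right i.2 hn⟩
    simpa only [word, Function.iterate_mul] using this
  have h4 := condHF_word_mul h hG k n
  have h5 : (n : ℝ) * condHF μ C (word T G k) ≤ n * (k * ε) :=
    mul_le_mul_of_nonneg_left hle (by positivity)
  have h6 : (k : ℝ) * ∫ x, -Real.log (r (F x) (G x)) ∂μ ≤ k * (n * ε) :=
    mul_le_mul_of_nonneg_left hc (by positivity)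
  push_cast
  linarith

theorem ZeroEnt.of_factorsThrough (h : InvariantSub μ T C) {f : X → ι} {g : X → κ}
    (hf : Measurable f) (hg : Measurable g) (hfg : f.FactorsThrough g)
    (hz : ZeroEnt μ T C g) : ZeroEnt μ T C f := by
  intro ε hε
  obtain ⟨n, hn, hle⟩ := hz ε hε
  refine ⟨n, hn, le_trans ?_ hle⟩
  refine condHF_mono h.le (measurable_word h.mp.measurable hf _)
    (measurable_word h.mp.measurable hg _) ?_
  intro x y hxy
  ext i
  exact hfg (congrFun hxy i)

theorem ZeroEnt.prod (h : InvariantSub μ T C) {f : X → ι} {g : X → κ}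
    (hf : Measurable f) (hg : Measurable g) (hfz : ZeroEnt μ T C f) (hgz : ZeroEnt μ T C g) :
    ZeroEnt μ T C (fun x => (f x, g x)) := by
  intro ε hε
  obtain ⟨k, hk, hk'⟩ := hfz (ε / 2) (by positivity)
  obtain ⟨l, hl, hl'⟩ := hgz (ε / 2) (by positivity)
  refine ⟨k * l, Nat.mul_pos hk hl, ?_⟩
  have hwf := measurable_word h.mp.measurable hf (k * l)
  have hwg := measurable_word h.mp.measurable hg (k * l)
  have h1 : condHF μ C (word T (fun x => (f x, g x)) (k * l)) ≤
      condHF μ C (word T f (k * l)) + condHF μ C (word T g (k * l)) := by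
    refine le_trans ?_ (condHF_prod_le h.le hwf hwg)
    refine condHF_mono h.le (measurable_word h.mp.measurable (hf.prodMk hg) _)
      (hwf.prodMk hwg) ?_
    intro x y hxy
    simp only [Prod.mk.injEq] at hxy
    ext i
    · exact congrFun hxy.1 i
    · exact congrFun hxy.2 i
  have h2 := condHF_word_mul h hf k l
  have h3 := condHF_word_mul h hg l k
  rw [mul_comm l k] at h3
  have h5 : (l : ℝ) * condHF μ C (word T f k) ≤ l * (k * (ε / 2)) :=
    mul_le_mul_of_nonneg_left hk' (by positivity)
  have h6 : (k : ℝ) * condHF μ C (word T g l) ≤ k * (l * (ε / 2)) :=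
    mul_le_mul_of_nonneg_left hl' (by positivity)
  push_cast
  linarith

theorem zeroEnt_of_subsingleton [Subsingleton ι] (h : InvariantSub μ T C) {f : X → ι}
    (hf : Measurable f) : ZeroEnt μ T C f := by
  intro ε hε
  refine ⟨1, one_pos, ?_⟩
  rw [condHF_of_subsingleton h.le (measurable_word h.mp.measurable hf _)]
  positivity

theorem ZeroEnt.pi (h : InvariantSub μ T C) {J : Type*} [Fintype J] [DecidableEq J]
    {f : J → X → ι} [Nonempty ι]
    (hf : ∀ j, Measurable (f j)) (hz : ∀ j, ZeroEnt μ T C (f j)) :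
    ZeroEnt μ T C (fun x j => f j x) := by
  classical
  let e : ι := Classical.arbitrary ι
  let g : Finset J → X → J → ι := fun s x j => if j ∈ s then f j x else e
  have hg : ∀ s, Measurable (g s) := by
    intro s
    refine measurable_pi_lambda _ fun j => ?_
    by_cases hj : j ∈ s
    · simpa [g, hj] using hf j
    · simp [g, hj]
  have key : ∀ s, ZeroEnt μ T C (g s) := by
    intro s
    induction s using Finset.induction_on with
    | empty =>
      refine ZeroEnt.of_factorsThrough h (hg _) (measurable_const (a := ())) ?_
        (zeroEnt_of_subsingleton h measurable_const)
      intro x y _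
      simp [g]
    | insert a s ha ih =>
      refine ZeroEnt.of_factorsThrough h (hg _) ((hf a).prodMk (hg s)) ?_
        (ZeroEnt.prod h (hf a) (hg s) (hz a) ih)
      intro x y hxy
      simp only [Prod.mk.injEq] at hxy
      ext j
      have := congrFun hxy.2 j
      by_cases hj : j = a
      · subst hj
        simpa [g] using hxy.1
      · simpa [g, hj] using this
  have := key Finset.univ
  simpa [g] using this

end ZeroEntropy

/-! ### Sets of zero entropy and the relative Pinsker σ-algebra -/

section ZeroSets

open Classical in
/-- The two-valued function coding membership in `s`. -/
noncomputable def bit {X : Type*} (s : Set X) : X → Bool := fun x => decide (x ∈ s)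

/-- Weights for guessing a bit `a` from a noisy copy `b` that is wrong with probability `ε`. -/
noncomputable def noisy (ε : ℝ) (a b : Bool) : ℝ := if a = b then 1 - ε else ε

/-- The average cost of `noisy ε` when the copy is wrong on a set of measure `ε`. -/
noncomputable def noisyCost (ε : ℝ) : ℝ := -Real.log (1 - ε) + ε * (-Real.log ε)

theorem tendsto_noisyCost : Tendsto noisyCost (𝓝 0) (𝓝 0) := by
  have h1 : ContinuousAt (fun ε : ℝ => -Real.log (1 - ε) + Real.negMulLog ε) 0 := by
    refine ContinuousAt.add ?_ Real.continuous_negMulLog.continuousAt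
    exact ((continuousAt_const.sub continuousAt_id).log (by norm_num)).neg
  have h2 : noisyCost = fun ε : ℝ => -Real.log (1 - ε) + Real.negMulLog ε := by
    ext ε
    simp [noisyCost, Real.negMulLog]
  rw [h2]
  simpa [ContinuousAt] using h1

theorem exists_noisyCost_le {η : ℝ} (hη : 0 < η) :
    ∃ ε : ℝ, 0 < ε ∧ ε < 1 / 2 ∧ noisyCost ε ≤ η := by
  have h1 : ∀ᶠ ε in 𝓝[>] (0 : ℝ), noisyCost ε < η :=
    (tendsto_noisyCost.mono_left nhdsWithin_le_nhds).eventually (gt_mem_nhds hη)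
  have h2 : ∀ᶠ ε in 𝓝[>] (0 : ℝ), ε ∈ Ioo (0 : ℝ) (1 / 2) :=
    Ioo_mem_nhdsGT (by norm_num)
  obtain ⟨ε, h3, h4⟩ := (h1.and h2).exists
  exact ⟨ε, h4.1, h4.2, h3.le⟩

theorem noisyCost_pos {ε : ℝ} (h0 : 0 < ε) (h1 : ε < 1 / 2) : 0 < noisyCost ε := by
  have h2 : Real.log (1 - ε) < 0 := Real.log_neg (by linarith) (by linarith)
  have h3 : Real.log ε < 0 := Real.log_neg h0 (by linarith)
  unfold noisyCost
  nlinarith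

theorem noisy_pos {ε : ℝ} (h0 : 0 < ε) (h1 : ε < 1 / 2) (a b : Bool) : 0 < noisy ε a b := by
  unfold noisy
  split_ifs <;> linarith

theorem sum_noisy (ε : ℝ) (b : Bool) : ∑ a, noisy ε a b = 1 := by
  cases b <;> simp [noisy]

variable {X : Type*} {C : MeasurableSpace X} [mX : MeasurableSpace X]

theorem measurable_bit {s : Set X} (hs : MeasurableSet s) : Measurable (bit s) := by
  refine measurable_to_bool ?_
  convert hs
  ext x
  simp [bit]

theorem measurableSet_mismatch {f g : X → Bool} (hf : Measurable f) (hg : Measurable g) :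
    MeasurableSet {x | f x ≠ g x} :=
  (measurableSet_eq_fun hf hg).compl

/-- A finite partition is the level-set partition of its labelling function. -/
theorem FinPart.exists_label (α : FinPart X mX) :
    ∃ f : X → Fin α.k, Measurable f ∧ α.atom = fun i => f ⁻¹' {i} := by
  have hex : ∀ x, ∃ i, x ∈ α.atom i := fun x => by
    simpa using (α.cover.symm ▸ mem_univ x : x ∈ ⋃ i, α.atom i)
  choose f hf using hex
  have : α.atom = fun i => f ⁻¹' {i} := by
    ext i x
    constructor
    · intro hx
      by_contra hne
      exact (disjoint_left.1 (α.disj _ _ hne)) (hf x) hx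
    · rintro rfl
      exact hf x
  refine ⟨f, measurable_to_countable' fun i => ?_, this⟩
  rw [← congrFun this i]
  exact α.meas i

variable {μ : Measure X} [IsProbabilityMeasure μ]

theorem integral_noisy_le {ε : ℝ} (h0 : 0 < ε) (h1 : ε < 1 / 2) {f g : X → Bool}
    (hf : Measurable f) (hg : Measurable g) (hfg : μ.real {x | f x ≠ g x} ≤ ε) :
    ∫ x, -Real.log (noisy ε (f x) (g x)) ∂μ ≤ noisyCost ε := by
  have hm := measurableSet_mismatch hf hg
  have hi : Integrable ({x | f x ≠ g x}.indicator fun _ => -Real.log ε) μ :=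
    (integrable_const _).indicator hm
  have h2 : Real.log (1 - ε) < 0 := Real.log_neg (by linarith) (by linarith)
  have h3 : Real.log ε < 0 := Real.log_neg h0 (by linarith)
  calc ∫ x, -Real.log (noisy ε (f x) (g x)) ∂μ
      ≤ ∫ x, (-Real.log (1 - ε) + {x | f x ≠ g x}.indicator (fun _ => -Real.log ε) x) ∂μ := by
        refine integral_mono ?_ ((integrable_const _).add hi) ?_
        · rw [show (fun x => -Real.log (noisy ε (f x) (g x))) =
            (fun p : Bool × Bool => -Real.log (noisy ε p.1 p.2)) ∘ fun x => (f x, g x) from rfl]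
          exact (Integrable.of_finite (μ := μ.map fun x => (f x, g x))).comp_measurable
            (hf.prodMk hg)
        · intro x
          by_cases hx : f x = g x
          · simp [noisy, hx]
          · simp only [noisy, hx, if_false, indicator, mem_ofPred_eq, ne_eq, not_false_eq_true,
              if_true]
            linarith
    _ = -Real.log (1 - ε) + μ.real {x | f x ≠ g x} * (-Real.log ε) := by
        rw [integral_add (integrable_const _) hi, integral_indicator_const _ hm]
        simp
    _ ≤ noisyCost ε := by
        unfold noisyCost
        have := mul_le_mul_of_nonneg_right hfg (neg_pos.2 h3).le
        linarith

variable {T : X → X}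

theorem ZeroEnt.comp_iterate {ι : Type*} [Fintype ι] [MeasurableSpace ι]
    [MeasurableSingletonClass ι] (h : InvariantSub μ T C) {f : X → ι} (hf : Measurable f)
    (hz : ZeroEnt μ T C f) (i : ℕ) : ZeroEnt μ T C (f ∘ T^[i]) := by
  intro ε hε
  obtain ⟨n, hn, hle⟩ := hz ε hε
  refine ⟨n, hn, ?_⟩
  have : word T (f ∘ T^[i]) n = word T f n ∘ T^[i] := by
    ext x j
    simp only [word, Function.comp, ← Function.iterate_add_apply, add_comm]
  rw [this, condHF_comp_iterate h (measurable_word h.mp.measurable hf n)]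
  exact hle

variable [StandardBorelSpace X]

/-- Suppose that every translate `T^{-i} D` agrees, up to measure `ε`, with a set glued from
zero-entropy sets along the pieces of one finite partition `c` that does not depend on `i`.
Then the entropy of `D` is small: a long name of `D` can be coded by announcing the piece of `c`
once and correcting a proportion `ε` of the predicted symbols. -/
theorem exists_condHF_word_bit_le (h : InvariantSub μ T C) {D : Set X} (hD : MeasurableSet D)
    {ε : ℝ} (h0 : 0 < ε) (h1 : ε < 1 / 2) {J : Type*} [Fintype J] [DecidableEq J]
    [MeasurableSpace J] [MeasurableSingletonClass J] {c : X → J} (hc : Measurable c)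
    (E : ℕ → J → Set X) (hE : ∀ i j, MeasurableSet (E i j))
    (hEz : ∀ i j, ZeroEnt μ T C (bit (E i j)))
    (happ : ∀ i, μ.real {x | bit D (T^[i] x) ≠ bit (E i (c x)) x} ≤ ε) :
    ∃ N : ℕ, 0 < N ∧ condHF μ C (word T (bit D) N) ≤ N * (2 * (2 * noisyCost ε)) := by
  have hη := noisyCost_pos h0 h1
  have : Nonempty X := nonempty_of_isProbabilityMeasure μ
  have : Nonempty J := ⟨c (Classical.arbitrary X)⟩
  have hJ : (0 : ℝ) < Fintype.card J := by exact_mod_cast Fintype.card_pos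
  have hDm := measurable_bit hD
  obtain ⟨n, hn⟩ := exists_nat_gt (Real.log (Fintype.card J) / noisyCost ε)
  have hlog : 0 ≤ Real.log (Fintype.card J) :=
    Real.log_nonneg (by exact_mod_cast Fintype.card_pos)
  have hn0 : 0 < n := by
    have : (0 : ℝ) < n := (div_nonneg hlog hη.le).trans_lt hn
    exact_mod_cast this
  rw [div_lt_iff₀ hη] at hn
  let G : X → (Fin n → J → Bool) := fun x i j => bit (E i j) x
  have hG : Measurable G := measurable_pi_lambda _ fun i => measurable_pi_lambda _ fun j =>
    measurable_bit (hE i j)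
  have hGz : ZeroEnt μ T C G :=
    ZeroEnt.pi h (fun i => measurable_pi_lambda _ fun j => measurable_bit (hE i j)) fun i =>
      ZeroEnt.pi h (fun j => measurable_bit (hE i j)) fun j => hEz i j
  let F : X → J × (Fin n → Bool) := fun x => (c x, word T (bit D) n x)
  have hF : Measurable F := hc.prodMk (measurable_word h.mp.measurable hDm n)
  let r : J × (Fin n → Bool) → (Fin n → J → Bool) → ℝ := fun p b =>
    (Fintype.card J : ℝ)⁻¹ * ∏ i, noisy ε (p.2 i) (b i p.1)
  have hprod : ∀ p b, 0 < ∏ i, noisy ε ((p : J × (Fin n → Bool)).2 i)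
      ((b : Fin n → J → Bool) i p.1) := fun p b => Finset.prod_pos fun i _ => noisy_pos h0 h1 _ _
  have hr : ∀ p b, 0 < r p b := fun p b => mul_pos (inv_pos.2 hJ) (hprod p b)
  have hr1 : ∀ b, ∑ p, r p b ≤ 1 := by
    intro b
    have : ∀ j : J, ∑ s : Fin n → Bool, ∏ i, noisy ε (s i) (b i j) = 1 := by
      intro j
      have := Finset.prod_univ_sum (fun _ : Fin n => (Finset.univ : Finset Bool))
        (fun i a => noisy ε a (b i j))
      rw [Fintype.piFinset_univ] at this
      rw [← this]
      exact Finset.prod_eq_one fun i _ => sum_noisy ε _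
    simp only [r, Fintype.sum_prod_type, ← Finset.mul_sum, this]
    simp [hJ.ne']
  have hcost : ∫ x, -Real.log (r (F x) (G x)) ∂μ ≤ n * (2 * noisyCost ε) := by
    have hEc : ∀ i, Measurable fun x => bit (E i (c x)) x := by
      intro i
      have : Measurable fun p : X × J => bit (E i p.2) p.1 :=
        measurable_from_prod_countable_left fun j => measurable_bit (hE i j)
      exact this.comp (measurable_id.prodMk hc)
    have hDi : ∀ i, Measurable fun x => bit D (T^[i] x) := fun i =>
      hDm.comp (h.mp.measurable.iterate i)
    have hint : ∀ i : ℕ,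
        Integrable (fun x => -Real.log (noisy ε (bit D (T^[i] x)) (bit (E i (c x)) x))) μ := by
      intro i
      exact (Integrable.of_finite (f := fun p : Bool × Bool => -Real.log (noisy ε p.1 p.2))
        (μ := μ.map fun x => (bit D (T^[i] x), bit (E i (c x)) x))).comp_measurable
        ((hDi i).prodMk (hEc i))
    have e1 : ∀ x, -Real.log (r (F x) (G x)) = Real.log (Fintype.card J) +
        ∑ i : Fin n, -Real.log (noisy ε (bit D (T^[(i : ℕ)] x)) (bit (E i (c x)) x)) := by
      intro x
      simp only [r]
      rw [Real.log_mul (inv_pos.2 hJ).ne' (hprod _ _).ne', Real.log_inv,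
        Real.log_prod fun i _ => (noisy_pos h0 h1 _ _).ne', neg_add, neg_neg,
        Finset.sum_neg_distrib]
      rfl
    simp only [e1]
    have hint' : ∀ i ∈ (Finset.univ : Finset (Fin n)), Integrable (fun x =>
        -Real.log (noisy ε (bit D (T^[(i : ℕ)] x)) (bit (E i (c x)) x))) μ := fun i _ => hint i
    rw [integral_add (integrable_const _) (integrable_finsetSum _ hint'), integral_finsetSum _ hint']
    have e2 : ∑ i : Fin n, ∫ x, -Real.log (noisy ε (bit D (T^[(i : ℕ)] x)) (bit (E i (c x)) x)) ∂μ ≤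
        ∑ _i : Fin n, noisyCost ε :=
      Finset.sum_le_sum fun i _ => integral_noisy_le h0 h1 (hDi i) (hEc i) (happ i)
    simp only [Finset.sum_const, Finset.card_univ, Fintype.card_fin, nsmul_eq_mul] at e2
    simp only [integral_const, probReal_univ, one_smul]
    linarith
  exact zeroEnt_of_block_code h hDm (mul_pos two_pos hη) hn0 hF hG hGz
    (fun x y hxy => (Prod.mk.inj hxy).2) r hr hr1 hcost

theorem zeroEnt_bit_of_approx (h : InvariantSub μ T C) {D : Set X} (hD : MeasurableSet D)
    (happ : ∀ ε : ℝ, 0 < ε → ∃ E : Set X, MeasurableSet E ∧ ZeroEnt μ T C (bit E) ∧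
      μ.real {x | bit D x ≠ bit E x} ≤ ε) : ZeroEnt μ T C (bit D) := by
  intro η hη
  obtain ⟨ε, h0, h1, h2⟩ := exists_noisyCost_le (η := η / 4) (by positivity)
  obtain ⟨E, hE, hEz, hm⟩ := happ ε h0
  obtain ⟨N, hN, hle⟩ := exists_condHF_word_bit_le h hD h0 h1 (J := Unit)
    (measurable_const (a := ())) (fun i _ => T^[i] ⁻¹' E)
    (fun i _ => h.mp.measurable.iterate i hE)
    (fun i _ => hEz.comp_iterate h (measurable_bit hE) i) (by
      intro i
      refine le_trans (le_of_eq ?_) hm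
      exact (h.mp.iterate i).measureReal_preimage
        (measurableSet_mismatch (measurable_bit hD) (measurable_bit hE)).nullMeasurableSet)
  exact ⟨N, hN, hle.trans (mul_le_mul_of_nonneg_left (by linarith) (by positivity))⟩

theorem ZeroEnt.bit_congr (h : InvariantSub μ T C) {s t : Set X} (hs : MeasurableSet s)
    (ht : MeasurableSet t) (hst : μ ((s \ t) ∪ (t \ s)) = 0) (hz : ZeroEnt μ T C (bit t)) :
    ZeroEnt μ T C (bit s) := by
  refine zeroEnt_bit_of_approx h hs fun ε hε => ⟨t, ht, hz, ?_⟩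
  have : {x | bit s x ≠ bit t x} ⊆ (s \ t) ∪ (t \ s) := by
    intro x
    simp only [bit, mem_ofPred_eq, ne_eq, decide_eq_decide, mem_union, Set.mem_sdiff]
    tauto
  rw [measureReal_def, measure_mono_null this hst]
  simpa using hε.le

theorem ZeroEnt.bit_compl (h : InvariantSub μ T C) {s : Set X} (hs : MeasurableSet s)
    (hz : ZeroEnt μ T C (bit s)) : ZeroEnt μ T C (bit sᶜ) := by
  refine hz.of_factorsThrough h (measurable_bit hs.compl) (measurable_bit hs) ?_
  intro x y hxy
  simp only [bit, decide_eq_decide, mem_compl_iff] at hxy ⊢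
  exact not_congr hxy

theorem ZeroEnt.bit_union (h : InvariantSub μ T C) {s t : Set X} (hs : MeasurableSet s)
    (ht : MeasurableSet t) (hsz : ZeroEnt μ T C (bit s)) (htz : ZeroEnt μ T C (bit t)) :
    ZeroEnt μ T C (bit (s ∪ t)) := by
  refine (hsz.prod h (measurable_bit hs) (measurable_bit ht) htz).of_factorsThrough h
    (measurable_bit (hs.union ht)) ((measurable_bit hs).prodMk (measurable_bit ht)) ?_
  intro x y hxy
  simp only [bit, decide_eq_decide, mem_union, Prod.mk.injEq] at hxy ⊢
  exact or_congr hxy.1 hxy.2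

theorem ZeroEnt.bit_iUnion (h : InvariantSub μ T C) {s : ℕ → Set X}
    (hs : ∀ n, MeasurableSet (s n)) (hz : ∀ n, ZeroEnt μ T C (bit (s n))) :
    ZeroEnt μ T C (bit (⋃ n, s n)) := by
  have hacc : ∀ n, MeasurableSet (accumulate s n) ∧ ZeroEnt μ T C (bit (accumulate s n)) := by
    intro n
    induction n with
    | zero => simpa [accumulate] using ⟨hs 0, hz 0⟩
    | succ n ih =>
      rw [accumulate_succ]
      exact ⟨ih.1.union (hs _), ih.2.bit_union h ih.1 (hs _) (hz _)⟩
  refine zeroEnt_bit_of_approx h (.iUnion hs) fun ε hε => ?_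
  have ht : Tendsto (fun n => μ.real (accumulate s n)) atTop (𝓝 (μ.real (⋃ n, s n))) :=
    (ENNReal.tendsto_toReal (measure_ne_top _ _)).comp tendsto_measure_iUnion_accumulate
  obtain ⟨n, hn⟩ := (ht.eventually (lt_mem_nhds (sub_lt_self _ hε))).exists
  refine ⟨_, (hacc n).1, (hacc n).2, ?_⟩
  have hsub : accumulate s n ⊆ ⋃ n, s n := accumulate_subset_iUnion n
  have : {x | bit (⋃ n, s n) x ≠ bit (accumulate s n) x} ⊆ (⋃ n, s n) \ accumulate s n := by
    intro x
    simp only [bit, mem_ofPred_eq, ne_eq, decide_eq_decide, Set.mem_sdiff]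
    have := @hsub x
    tauto
  refine (measureReal_mono this).trans ?_
  rw [measureReal_sdiff hsub (hacc n).1]
  linarith

/-- The sets with zero relative entropy form a σ-algebra, which is the relative Pinsker
σ-algebra. -/
theorem measurableSet_relPinsker_iff (h : InvariantSub μ T C) {s : Set X} :
    MeasurableSet[relPinsker μ T C] s ↔ MeasurableSet s ∧ ZeroEnt μ T C (bit s) := by
  constructor
  · intro hs
    induction s, hs using MeasurableSpace.generateFrom_induction with
    | hC t ht _ =>
      obtain ⟨α, hα, i, rfl⟩ := ht
      obtain ⟨f, hf, hαf⟩ := α.exists_label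
      refine ⟨α.meas i, ?_⟩
      rw [hαf, ← zeroEnt_iff h hf] at hα
      refine hα.of_factorsThrough h (measurable_bit (α.meas i)) hf ?_
      intro x y hxy
      simp [bit, hαf, hxy]
    | empty =>
      refine ⟨.empty, (zeroEnt_of_subsingleton h (measurable_const (a := ()))).of_factorsThrough h
        (measurable_bit .empty) measurable_const ?_⟩
      intro x y _
      simp [bit]
    | compl t _ ih => exact ⟨ih.1.compl, ih.2.bit_compl h ih.1⟩
    | iUnion s _ ih =>
      exact ⟨.iUnion fun n => (ih n).1, ZeroEnt.bit_iUnion h (fun n => (ih n).1) fun n => (ih n).2⟩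
  · rintro ⟨hs, hz⟩
    have hb := measurable_bit hs
    refine MeasurableSpace.measurableSet_generateFrom ?_
    let g : X → Fin 2 := fun x => if bit s x then 1 else 0
    have hg : Measurable g := (Measurable.of_discrete (f := fun b : Bool =>
      if b then (1 : Fin 2) else 0)).comp hb
    refine ⟨⟨2, fun i => g ⁻¹' {i}, fun i => hg (measurableSet_singleton i), ?_, ?_⟩, ?_, 1, ?_⟩
    · intro i j hij
      exact Disjoint.preimage _ (by simpa using hij)
    · ext x
      simp
    · refine (zeroEnt_iff h hg).1 (hz.of_factorsThrough h hg hb ?_)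
      intro x y hxy
      simp [g, hxy]
    · ext x
      by_cases hx : x ∈ s <;> simp [g, bit, hx]

theorem hPartCond_eq_zero_of_atoms (h : InvariantSub μ T C) (α : FinPart X mX)
    (hα : ∀ i, ZeroEnt μ T C (bit (α.atom i))) : hPartCond μ T α.atom C = 0 := by
  obtain ⟨f, hf, hαf⟩ := α.exists_label
  rw [hαf, ← zeroEnt_iff h hf]
  refine (ZeroEnt.pi h (fun i => measurable_bit (α.meas i)) hα).of_factorsThrough h hf
    (measurable_pi_lambda _ fun i => measurable_bit (α.meas i)) ?_
  intro x y hxy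
  have := congrFun hxy (f x)
  simp only [bit, hαf, mem_preimage, mem_singleton_iff, decide_eq_decide, true_iff] at this
  exact this.symm

end ZeroSets

/-! ### Disintegrations and relative products -/

section RelativeProduct

variable {X Y : Type*} [mX : MeasurableSpace X] [mY : MeasurableSpace Y]

/-- The kernel `κ` disintegrates `μ` over the factor map `p : (X, μ) → (Y, ν)`: the measure `κ y`
lives on the fibre over `y`, and the `κ y` average to `μ`. Both facts are expressed by saying that
`ν ⊗ₘ κ` is the graph measure of `p`. -/
structure IsDisintegration (μ : Measure X) (ν : Measure Y) (p : X → Y) (κ : Kernel Y X) : Prop where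
  mp : MeasurePreserving p μ ν
  compProd_eq : ν ⊗ₘ κ = μ.map fun x => (p x, x)

/-- The relative product `∫ κ y × κ y dν(y)`. -/
noncomputable def relProd (ν : Measure Y) (κ : Kernel Y X) : Measure (X × X) :=
  ν.bind fun y => (κ y).prod (κ y)

variable {μ : Measure X} {ν : Measure Y} {p : X → Y} {κ : Kernel Y X} [IsMarkovKernel κ]

theorem relProd_eq_comp : relProd ν κ = ν.bind (κ ×ₖ κ) := by
  unfold relProd
  congr 1
  ext1 y
  rw [Kernel.prod_apply]

instance [IsProbabilityMeasure ν] : IsProbabilityMeasure (relProd ν κ) := by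
  rw [relProd_eq_comp]
  infer_instance

theorem relProd_apply {E : Set (X × X)} (hE : MeasurableSet E) :
    relProd ν κ E = ∫⁻ y, (κ y).prod (κ y) E ∂ν := by
  rw [relProd_eq_comp, Measure.bind_apply hE (Kernel.aemeasurable _)]
  simp only [Kernel.prod_apply]

theorem relProd_swap {E : Set (X × X)} (hE : MeasurableSet E) :
    relProd ν κ (Prod.swap ⁻¹' E) = relProd ν κ E := by
  rw [relProd_apply hE, relProd_apply (measurable_swap hE)]
  refine lintegral_congr fun y => ?_
  rw [← Measure.map_apply measurable_swap hE, Measure.prod_swap]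

theorem measurable_fibre (hp : Measurable p) {E : Set (X × X)} (hE : MeasurableSet E) :
    Measurable fun x => κ (p x) (Prod.mk x ⁻¹' E) :=
  Kernel.measurable_kernel_prodMk_left (κ := κ.comap p hp) hE

variable [IsProbabilityMeasure ν]

namespace IsDisintegration

theorem of_fibre (hp : MeasurePreserving p μ ν)
    (hfib : ∀ᵐ y ∂ν, ∀ᵐ x ∂κ y, p x = y)
    (hμ : ∀ s, MeasurableSet s → μ s = ∫⁻ y, κ y s ∂ν) : IsDisintegration μ ν p κ := by
  refine ⟨hp, Measure.ext_prod fun {s t} hs ht => ?_⟩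
  rw [Measure.compProd_apply_prod hs ht,
    Measure.map_apply (hp.measurable.prodMk measurable_id') (hs.prod ht)]
  have : (fun x => (p x, x)) ⁻¹' (s ×ˢ t) = p ⁻¹' s ∩ t := rfl
  rw [this, hμ _ ((hp.measurable hs).inter ht), ← lintegral_indicator hs]
  refine lintegral_congr_ae ?_
  filter_upwards [hfib] with y hy
  by_cases hys : y ∈ s
  · rw [indicator_of_mem hys]
    refine measure_congr ?_
    filter_upwards [hy] with x hx
    exact propext ⟨fun hxt => ⟨mem_preimage.2 (hx ▸ hys), hxt⟩, fun hxt => hxt.2⟩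
  · rw [indicator_of_notMem hys]
    refine (measure_mono_null ?_ (ae_iff.1 hy)).symm
    rintro x ⟨hx, _⟩ rfl
    exact hys hx

theorem lintegral_eq (h : IsDisintegration μ ν p κ) {f : Y → X → ENNReal} (hf : Measurable (Function.uncurry f)) :
    ∫⁻ y, ∫⁻ x, f y x ∂κ y ∂ν = ∫⁻ x, f (p x) x ∂μ := by
  have h1 := Measure.lintegral_compProd (μ := ν) (κ := κ) hf
  rw [h.compProd_eq, lintegral_map hf (h.mp.measurable.prodMk measurable_id')] at h1
  exact h1.symm

theorem relProd_eq (h : IsDisintegration μ ν p κ) {E : Set (X × X)} (hE : MeasurableSet E) :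
    relProd ν κ E = ∫⁻ x, κ (p x) (Prod.mk x ⁻¹' E) ∂μ := by
  rw [relProd_apply hE, ← h.lintegral_eq (f := fun y x => κ y (Prod.mk x ⁻¹' E))]
  · exact lintegral_congr fun y => Measure.prod_apply hE
  · have : MeasurableSet ((fun q : (Y × X) × X => (q.1.2, q.2)) ⁻¹' E) :=
      (by fun_prop : Measurable fun q : (Y × X) × X => (q.1.2, q.2)) hE
    exact Kernel.measurable_kernel_prodMk_left (κ := κ.comap Prod.fst measurable_fst) this

theorem setLIntegral_apply (h : IsDisintegration μ ν p κ) {F : Set Y} (hF : MeasurableSet F) {A : Set X} (hA : MeasurableSet A) :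
    ∫⁻ x in p ⁻¹' F, κ (p x) A ∂μ = μ (p ⁻¹' F ∩ A) := by
  rw [h.mp.setLIntegral_comp_preimage hF (κ.measurable_coe hA),
    ← Measure.compProd_apply_prod hF hA, h.compProd_eq,
    Measure.map_apply (h.mp.measurable.prodMk measurable_id') (hF.prod hA)]
  rfl

theorem ae_same_fibre (h : IsDisintegration μ ν p κ) [StandardBorelSpace Y] : ∀ᵐ q ∂relProd ν κ, p q.1 = p q.2 := by
  have hm : MeasurableSet {q : X × X | p q.1 = p q.2} :=
    measurableSet_eq_fun (h.mp.measurable.comp measurable_fst) (h.mp.measurable.comp measurable_snd)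
  have hm' : MeasurableSet {q : Y × X | q.1 = p q.2} :=
    measurableSet_eq_fun measurable_fst (h.mp.measurable.comp measurable_snd)
  have h0 : (ν ⊗ₘ κ) {q : Y × X | q.1 = p q.2}ᶜ = 0 := by
    rw [h.compProd_eq, Measure.map_apply (h.mp.measurable.prodMk measurable_id') hm'.compl]
    simp
  rw [ae_iff]
  change relProd ν κ {q : X × X | p q.1 = p q.2}ᶜ = 0
  rw [h.relProd_eq hm.compl]
  rw [Measure.compProd_apply hm'.compl] at h0
  rw [← h0, ← h.mp.lintegral_comp]
  · rfl
  · exact Kernel.measurable_kernel_prodMk_left hm'.compl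

/-- Equivariance of the disintegration. -/
theorem ae_map_eq (h : IsDisintegration μ ν p κ) [StandardBorelSpace X] {T : X → X} {S : Y → Y} (hT : MeasurePreserving T μ μ)
    (hS : MeasurePreserving S ν ν) (hSe : MeasurableEmbedding S) (hpT : p ∘ T = S ∘ p) :
    ∀ᵐ y ∂ν, κ (S y) = (κ y).map T := by
  have hpm := h.mp.measurable
  have key : ν ⊗ₘ (κ.comap S hS.measurable) = ν ⊗ₘ (κ.map T) := by
    have e2 : ν ⊗ₘ (κ.map T) = μ.map fun x => (p x, T x) := by
      rw [Measure.compProd_map hT.measurable, h.compProd_eq,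
        Measure.map_map (measurable_id.prodMap hT.measurable) (hpm.prodMk measurable_id')]
      rfl
    refine Measure.ext_prod fun {F A} hF hA => ?_
    have hF' := hSe.measurableSet_image.2 hF
    have hFe : S ⁻¹' (S '' F) = F := hSe.injective.preimage_image F
    rw [e2, Measure.compProd_apply_prod hF hA,
      Measure.map_apply (hpm.prodMk hT.measurable) (hF.prod hA)]
    have h1 := hS.setLIntegral_comp_preimage hF' (κ.measurable_coe hA)
    rw [hFe] at h1
    refine h1.trans ?_
    rw [← Measure.compProd_apply_prod hF' hA, h.compProd_eq,
      Measure.map_apply (hpm.prodMk measurable_id') (hF'.prod hA),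
      ← hT.measure_preimage ((hpm.prodMk measurable_id') (hF'.prod hA)).nullMeasurableSet]
    congr 1
    ext x
    have : p (T x) = S (p x) := congrFun hpT x
    simp [this, hSe.injective.eq_iff]
  have := Kernel.ae_eq_of_compProd_eq key
  filter_upwards [this] with y hy
  rw [← Kernel.map_apply _ hT.measurable, ← hy, Kernel.comap_apply]

theorem measurePreserving_relProd (h : IsDisintegration μ ν p κ) [StandardBorelSpace X] {T : X → X} {S : Y → Y}
    (hT : MeasurePreserving T μ μ)
    (hS : MeasurePreserving S ν ν) (hSe : MeasurableEmbedding S) (hpT : p ∘ T = S ∘ p) :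
    MeasurePreserving (Prod.map T T) (relProd ν κ) (relProd ν κ) := by
  have hTT : Measurable (Prod.map T T) := hT.measurable.prodMap hT.measurable
  refine ⟨hTT, Measure.ext fun E hE => ?_⟩
  rw [Measure.map_apply hTT hE, relProd_apply hE, relProd_apply (hTT hE),
    ← hS.lintegral_comp (f := fun y => (κ y).prod (κ y) E)]
  · refine lintegral_congr_ae ?_
    filter_upwards [h.ae_map_eq hT hS hSe hpT] with y hy
    rw [hy, Measure.map_prod_map _ _ hT.measurable hT.measurable, Measure.map_apply hTT hE]
  · have := (κ ×ₖ κ).measurable_coe hE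
    simpa only [Kernel.prod_apply] using this

/-- Both coordinates of the relative product lie in the same fibre of `p`, so a condition on
`p` can be moved from the first coordinate to the second. -/
theorem setLIntegral_section [StandardBorelSpace Y] (h : IsDisintegration μ ν p κ) {B : Set (X × X)}
    (hB : MeasurableSet B) {c : ENNReal}
    (hc : ∀ᵐ x ∂μ, κ (p x) (Prod.mk x ⁻¹' (Prod.swap ⁻¹' B)) = c) {A : Set X}
    (hA : MeasurableSet A) {F : Set Y} (hF : MeasurableSet F) :
    ∫⁻ x in p ⁻¹' F, κ (p x) (Prod.mk x ⁻¹' B ∩ A) ∂μ =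
      ∫⁻ x in p ⁻¹' F, c * κ (p x) A ∂μ := by
  have hp := h.mp.measurable
  have hpF := hp hF
  have hm1 : MeasurableSet (B ∩ (p ⁻¹' F) ×ˢ A) := hB.inter (hpF.prod hA)
  have hm2 : MeasurableSet (B ∩ univ ×ˢ (p ⁻¹' F ∩ A)) := hB.inter (.prod .univ (hpF.inter hA))
  have e1 : ∫⁻ x in p ⁻¹' F, κ (p x) (Prod.mk x ⁻¹' B ∩ A) ∂μ =
      relProd ν κ (B ∩ (p ⁻¹' F) ×ˢ A) := by
    rw [h.relProd_eq hm1, ← lintegral_indicator hpF]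
    refine lintegral_congr fun x => ?_
    by_cases hx : x ∈ p ⁻¹' F
    · rw [indicator_of_mem hx]
      congr 1
      ext x'
      have : p x ∈ F := hx
      simp [this]
    · rw [indicator_of_notMem hx, eq_comm]
      convert measure_empty (μ := κ (p x))
      ext x'
      have : p x ∉ F := hx
      simp [this]
  have e2 : relProd ν κ (B ∩ (p ⁻¹' F) ×ˢ A) = relProd ν κ (B ∩ univ ×ˢ (p ⁻¹' F ∩ A)) := by
    refine measure_congr ?_
    filter_upwards [h.ae_same_fibre] with q hq
    refine propext ?_
    change q ∈ B ∩ (p ⁻¹' F) ×ˢ A ↔ q ∈ B ∩ univ ×ˢ (p ⁻¹' F ∩ A)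
    simp [hq]
  have e3 : relProd ν κ (B ∩ univ ×ˢ (p ⁻¹' F ∩ A)) = ∫⁻ _x in p ⁻¹' F ∩ A, c ∂μ := by
    rw [← relProd_swap hm2, h.relProd_eq (measurable_swap hm2),
      ← lintegral_indicator (hpF.inter hA)]
    refine lintegral_congr_ae ?_
    filter_upwards [hc] with x hx
    by_cases hx' : x ∈ p ⁻¹' F ∩ A
    · rw [indicator_of_mem hx', ← hx]
      congr 1
      ext x'
      have h1 : p x ∈ F := hx'.1
      simp [h1, hx'.2]
    · rw [indicator_of_notMem hx']
      convert measure_empty (μ := κ (p x))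
      ext x'
      have : ¬ (p x ∈ F ∧ x ∈ A) := hx'
      simp only [mem_preimage, mem_inter_iff, mem_prod, Prod.fst_swap, Prod.snd_swap, mem_univ,
        true_and, mem_empty_iff_false]
      tauto
  rw [e1, e2, e3, lintegral_const, Measure.restrict_apply_univ,
    lintegral_const_mul c (f := fun x => κ (p x) A) ((κ.measurable_coe hA).comp hp), h.setLIntegral_apply hF hA]

end IsDisintegration

/-- If the relative product is ergodic then it either does not charge the diagonal, in which case
the fibre measures are non-atomic, or is carried by it, in which case the fibre measures are
point masses and every measurable set is `p`-measurable modulo null sets. -/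
theorem ae_noAtom_or_ae_eq_preimage [StandardBorelSpace X] {T : X → X} (h : IsDisintegration μ ν p κ)
    (hT : Function.Injective T) (herg : Ergodic (Prod.map T T) (relProd ν κ)) :
    (∀ᵐ y ∂ν, ∀ x, κ y {x} = 0) ∨
      ∀ A : Set X, MeasurableSet A → ∃ F, MeasurableSet F ∧ A =ᵐ[μ] (p ⁻¹' F : Set X) := by
  have hΔ : MeasurableSet (diagonal X) := measurableSet_diagonal
  have hinv : Prod.map T T ⁻¹' diagonal X = diagonal X := by
    ext q
    simp [hT.eq_iff]
  rcases herg.measure_self_or_compl_eq_zero hΔ hinv with h0 | h0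
  · left
    rw [relProd_apply hΔ, lintegral_eq_zero_iff] at h0
    · filter_upwards [h0] with y hy x
      have h1 : (κ y).prod (κ y) ({x} ×ˢ {x}) = 0 := by
        refine measure_mono_null ?_ hy
        rintro ⟨a, b⟩ ⟨ha, hb⟩
        exact ha.trans hb.symm
      rw [Measure.prod_prod] at h1
      exact mul_self_eq_zero.1 h1
    · have := (κ ×ₖ κ).measurable_coe hΔ
      simpa only [Kernel.prod_apply] using this
  · right
    intro A hA
    refine ⟨{y | κ y A = 1}, κ.measurable_coe hA (measurableSet_singleton 1), ?_⟩
    rw [h.relProd_eq hΔ.compl, lintegral_eq_zero_iff (measurable_fibre h.mp.measurable hΔ.compl)]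
      at h0
    filter_upwards [h0] with x hx
    have hx' : κ (p x) {x}ᶜ = 0 := by
      refine measure_mono_null ?_ hx
      intro x' hx'
      simpa [eq_comm] using hx'
    refine propext ?_
    change x ∈ A ↔ κ (p x) A = 1
    rw [← prob_compl_eq_zero_iff hA]
    constructor
    · intro hxA
      exact measure_mono_null (compl_subset_compl.2 (singleton_subset_iff.2 hxA)) hx'
    · intro hAc
      by_contra hxA
      have h1 : κ (p x) univ ≤ κ (p x) {x}ᶜ + κ (p x) Aᶜ := by
        rw [← compl_union_self ({x} : Set X)]
        exact (measure_union_le _ _).trans (add_le_add_right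
          (measure_mono (singleton_subset_iff.2 hxA)) _)
      simp [hx', hAc] at h1

end RelativeProduct

/-! ### Approximation by finite unions of rectangles -/

section Approximation

variable {X X' : Type*} [MeasurableSpace X] [MeasurableSpace X']

/-- A set in a product whose sections are constant along a finite partition `c` of the first
coordinate; equivalently, a finite union of measurable rectangles. -/
def IsFibrewise (E : Set (X × X')) : Prop :=
  ∃ (k : ℕ) (c : X → Fin k) (A : Fin k → Set X'), Measurable c ∧ (∀ j, MeasurableSet (A j)) ∧
    E = {q | q.2 ∈ A (c q.1)}

theorem IsFibrewise.measurableSet {E : Set (X × X')} (hE : IsFibrewise E) : MeasurableSet E := by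
  obtain ⟨k, c, A, hc, hA, rfl⟩ := hE
  have : {q : X × X' | q.2 ∈ A (c q.1)} = ⋃ j, (c ⁻¹' {j}) ×ˢ A j := by
    ext q
    simp
  rw [this]
  exact .iUnion fun j => (hc (measurableSet_singleton j)).prod (hA j)

theorem isFibrewise_prod {s : Set X} {t : Set X'} (hs : MeasurableSet s) (ht : MeasurableSet t) :
    IsFibrewise (s ×ˢ t) := by
  classical
  refine ⟨2, fun x => if x ∈ s then 1 else 0, ![∅, t],
    Measurable.ite hs measurable_const measurable_const, ?_, ?_⟩
  · simp [Fin.forall_fin_two, ht]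
  · ext q
    by_cases hq : q.1 ∈ s <;> simp [hq]

theorem IsFibrewise.compl {E : Set (X × X')} (hE : IsFibrewise E) : IsFibrewise Eᶜ := by
  obtain ⟨k, c, A, hc, hA, rfl⟩ := hE
  exact ⟨k, c, fun j => (A j)ᶜ, hc, fun j => (hA j).compl, rfl⟩

theorem IsFibrewise.union {E E' : Set (X × X')} (hE : IsFibrewise E) (hE' : IsFibrewise E') :
    IsFibrewise (E ∪ E') := by
  obtain ⟨k, c, A, hc, hA, rfl⟩ := hE
  obtain ⟨k', c', A', hc', hA', rfl⟩ := hE'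
  refine ⟨k * k', fun x => finProdFinEquiv (c x, c' x),
    fun j => A (finProdFinEquiv.symm j).1 ∪ A' (finProdFinEquiv.symm j).2, ?_, ?_, ?_⟩
  · exact (Measurable.of_discrete (f := finProdFinEquiv)).comp (hc.prodMk hc')
  · exact fun j => (hA _).union (hA' _)
  · ext q
    simp only [Equiv.symm_apply_apply, mem_union, mem_ofPred_eq]

theorem exists_isFibrewise_symmDiff_le (m : Measure (X × X')) [IsFiniteMeasure m]
    {B : Set (X × X')} (hB : MeasurableSet B) {δ : ℝ} (hδ : 0 < δ) :
    ∃ E, IsFibrewise E ∧ m.real (symmDiff B E) ≤ δ := by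
  let P : Set (X × X') → Prop := fun B => ∀ δ : ℝ, 0 < δ →
    ∃ E, IsFibrewise E ∧ m.real (symmDiff B E) ≤ δ
  have hP_union : ∀ s t, P s → P t → P (s ∪ t) := by
    intro s t hs ht δ hδ
    obtain ⟨E, hE, h1⟩ := hs (δ / 2) (by positivity)
    obtain ⟨E', hE', h2⟩ := ht (δ / 2) (by positivity)
    refine ⟨_, hE.union hE', ?_⟩
    have : symmDiff (s ∪ t) (E ∪ E') ⊆ symmDiff s E ∪ symmDiff t E' := by
      intro q
      simp only [mem_symmDiff, mem_union]
      tauto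
    have := (measureReal_mono (μ := m) this).trans (measureReal_union_le _ _)
    linarith
  suffices MeasurableSet B ∧ P B from this.2 δ hδ
  rw [← generateFrom_prod (α := X) (β := X')] at hB
  induction B, hB using MeasurableSpace.generateFrom_induction with
  | hC t ht _ =>
    obtain ⟨s, hs, t, ht, rfl⟩ := ht
    refine ⟨hs.prod ht, fun δ hδ => ⟨_, isFibrewise_prod hs ht, ?_⟩⟩
    simpa using hδ.le
  | empty =>
    refine ⟨.empty, fun δ hδ => ⟨_, isFibrewise_prod .empty .empty, ?_⟩⟩
    simpa using hδ.le
  | compl t _ ih =>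
    refine ⟨ih.1.compl, fun δ hδ => ?_⟩
    obtain ⟨E, hE, h1⟩ := ih.2 δ hδ
    exact ⟨_, hE.compl, by rwa [compl_symmDiff_compl]⟩
  | iUnion s _ ih =>
    have hm := fun n => (ih n).1
    have hacc : ∀ n, P (accumulate s n) := by
      intro n
      induction n with
      | zero => simpa [accumulate] using (ih 0).2
      | succ n hn =>
        rw [accumulate_succ]
        exact hP_union _ _ hn (ih _).2
    refine ⟨.iUnion hm, fun δ hδ => ?_⟩
    have ht : Tendsto (fun n => m.real (accumulate s n)) atTop (𝓝 (m.real (⋃ n, s n))) :=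
      (ENNReal.tendsto_toReal (measure_ne_top _ _)).comp tendsto_measure_iUnion_accumulate
    obtain ⟨n, hn⟩ := (ht.eventually (lt_mem_nhds (sub_lt_self _ (half_pos hδ)))).exists
    obtain ⟨E, hE, h1⟩ := hacc n (δ / 2) (half_pos hδ)
    refine ⟨E, hE, ?_⟩
    have hsub : accumulate s n ⊆ ⋃ n, s n := accumulate_subset_iUnion n
    have : symmDiff (⋃ n, s n) E ⊆
        ((⋃ n, s n) \ accumulate s n) ∪ symmDiff (accumulate s n) E := by
      intro q
      have := @hsub q
      simp only [mem_symmDiff, mem_union, Set.mem_sdiff]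
      tauto
    have h2 := (measureReal_mono (μ := m) this).trans (measureReal_union_le _ _)
    rw [measureReal_sdiff hsub (.biUnion (to_countable _) fun i _ => hm i)] at h2
    linarith

end Approximation

/-! ### Ergodicity of the relative product -/

section RelativeErgodicity

variable {X Y : Type*} {C : MeasurableSpace X} [mX : MeasurableSpace X] [mY : MeasurableSpace Y]

theorem measurableEmbedding_iterate {S : Y → Y} (hS : MeasurableEmbedding S) (n : ℕ) :
    MeasurableEmbedding S^[n] := by
  induction n with
  | zero => exact MeasurableEmbedding.id
  | succ n ih => rw [Function.iterate_succ]; exact ih.comp hS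

theorem exists_measureReal_band_le {μ : Measure X} [IsProbabilityMeasure μ] {g : X → ℝ}
    (hg : Measurable g) {t : ℝ} (ht : μ {x | g x = t} = 0) {ε : ℝ} (hε : 0 < ε) :
    ∃ s : ℝ, 0 < s ∧ μ.real {x | |g x - t| ≤ s} ≤ ε := by
  have hm : Measurable fun x => |g x - t| := (hg.sub_const t).abs
  have hset : ∀ n : ℕ, MeasurableSet {x | |g x - t| ≤ 1 / ((n : ℝ) + 1)} := fun n =>
    measurableSet_le hm measurable_const
  have hlim : Tendsto (fun n : ℕ => μ {x | |g x - t| ≤ 1 / ((n : ℝ) + 1)}) atTop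
      (𝓝 (μ (⋂ n : ℕ, {x | |g x - t| ≤ 1 / ((n : ℝ) + 1)}))) := by
    refine tendsto_measure_iInter_atTop (fun n => (hset n).nullMeasurableSet) ?_
      ⟨0, measure_ne_top _ _⟩
    intro n m hnm x hx
    have hx' : |g x - t| ≤ 1 / ((m : ℝ) + 1) := hx
    have hnm' : (n : ℝ) ≤ m := by exact_mod_cast hnm
    exact hx'.trans (one_div_le_one_div_of_le (by positivity) (by linarith))
  have h0 : μ (⋂ n : ℕ, {x | |g x - t| ≤ 1 / ((n : ℝ) + 1)}) = 0 := by
    refine measure_mono_null ?_ ht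
    intro x hx
    rw [mem_iInter] at hx
    have : |g x - t| ≤ 0 := ge_of_tendsto' tendsto_one_div_add_atTop_nhds_zero_nat hx
    exact sub_eq_zero.1 (abs_nonpos_iff.1 this)
  rw [h0] at hlim
  have hlim' := (ENNReal.tendsto_toReal ENNReal.zero_ne_top).comp hlim
  obtain ⟨n, hn⟩ := (hlim'.eventually (gt_mem_nhds (show ENNReal.toReal 0 < ε by simpa using hε))).exists
  exact ⟨1 / ((n : ℝ) + 1), by positivity, hn.le⟩

section

variable {μ : Measure X} [IsProbabilityMeasure μ] {p : X → Y}

/-- A measurable function `f` whose superlevel sets are `p`-measurable modulo null sets at all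
uncharged levels is determined by its integrals over `p`-measurable sets. -/
theorem ae_eq_of_superlevel (hp : Measurable p) {f : X → ENNReal} {g : Y → ENNReal}
    (hf : Measurable f) (hg : Measurable g) (hf1 : ∀ x, f x ≠ ⊤) (hg1 : ∀ y, g y ≠ ⊤)
    (hfi : ∫⁻ x, f x ∂μ ≠ ⊤)
    (hD : ∀ t : ℝ, μ {x | (f x).toReal = t} = 0 →
      ∃ F, MeasurableSet F ∧ {x | t < (f x).toReal} =ᵐ[μ] (p ⁻¹' F : Set X))
    (hint : ∀ F, MeasurableSet F → ∫⁻ x in p ⁻¹' F, f x ∂μ = ∫⁻ x in p ⁻¹' F, g (p x) ∂μ) :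
    ∀ᵐ x ∂μ, f x = g (p x) := by
  have hgood : Dense {t : ℝ | 0 < μ {x | (f x).toReal = t}}ᶜ :=
    (Measure.countable_meas_level_set_pos hf.ennreal_toReal).dense_compl ℝ
  obtain ⟨Q, hQ, hQc, hQd⟩ := hgood.exists_countable_dense_subset
  have hgi : ∫⁻ x, g (p x) ∂μ ≠ ⊤ := by
    have := hint univ .univ
    rw [preimage_univ, Measure.restrict_univ] at this
    rwa [← this]
  have hgp := hg.comp hp
  have hf2 := hf.ennreal_toReal
  have key : ∀ t ∈ Q, μ {x | t < (f x).toReal ∧ (g (p x)).toReal < t} = 0 ∧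
      μ {x | (f x).toReal ≤ t ∧ t < (g (p x)).toReal} = 0 := by
    intro t ht
    obtain ⟨F, hF, hDF⟩ := hD t (by simpa using hQ ht)
    have hDF' := hDF.mem_iff
    have hG1 : MeasurableSet {y | (g y).toReal < t} :=
      measurableSet_lt hg.ennreal_toReal measurable_const
    have hG2 : MeasurableSet {y | t < (g y).toReal} :=
      measurableSet_lt measurable_const hg.ennreal_toReal
    constructor
    · have hW : {x | t < (f x).toReal ∧ (g (p x)).toReal < t} =ᵐ[μ]
          (p ⁻¹' (F ∩ {y | (g y).toReal < t}) : Set X) :=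
        hDF.inter (ae_eq_refl (p ⁻¹' {y | (g y).toReal < t} : Set X))
      have hWm : MeasurableSet {x | t < (f x).toReal ∧ (g (p x)).toReal < t} :=
        (measurableSet_lt measurable_const hf2).inter (hp hG1)
      by_contra hne
      have h1 := setLIntegral_strict_mono (f := fun x => g (p x)) hWm hne hf
        ((setLIntegral_le_lintegral _ _).trans_lt hgi.lt_top).ne (.of_forall fun x hx =>
          (ENNReal.toReal_lt_toReal (hg1 _) (hf1 x)).1 (hx.2.trans hx.1))
      rw [setLIntegral_congr hW, setLIntegral_congr hW, hint _ (hF.inter hG1)] at h1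
      exact lt_irrefl _ h1
    · have hW : {x | (f x).toReal ≤ t ∧ t < (g (p x)).toReal} =ᵐ[μ]
          (p ⁻¹' (Fᶜ ∩ {y | t < (g y).toReal}) : Set X) := by
        refine Filter.EventuallyEq.inter (s := {x | (f x).toReal ≤ t}) ?_
          (ae_eq_refl (p ⁻¹' {y | t < (g y).toReal} : Set X))
        have hc : {x | (f x).toReal ≤ t} = {x | t < (f x).toReal}ᶜ := by
          ext x
          simp
        rw [hc]
        exact hDF.compl
      have hWm : MeasurableSet {x | (f x).toReal ≤ t ∧ t < (g (p x)).toReal} :=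
        (measurableSet_le hf2 measurable_const).inter (hp hG2)
      by_contra hne
      have h1 := setLIntegral_strict_mono (g := fun x => g (p x)) hWm hne hgp
        ((setLIntegral_le_lintegral _ _).trans_lt hfi.lt_top).ne (.of_forall fun x hx =>
          (ENNReal.toReal_lt_toReal (hf1 x) (hg1 _)).1 (hx.1.trans_lt hx.2))
      rw [setLIntegral_congr hW, setLIntegral_congr hW, hint _ (hF.compl.inter hG2)] at h1
      exact lt_irrefl _ h1
  have hall : ∀ᵐ x ∂μ, ∀ t ∈ Q, ¬ (t < (f x).toReal ∧ (g (p x)).toReal < t) ∧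
      ¬ ((f x).toReal ≤ t ∧ t < (g (p x)).toReal) := by
    rw [ae_ball_iff hQc]
    intro t ht
    refine Filter.Eventually.and ?_ ?_
    · rw [ae_iff]
      simpa only [not_not] using (key t ht).1
    · rw [ae_iff]
      simpa only [not_not] using (key t ht).2
  filter_upwards [hall] with x hx
  rw [← ENNReal.toReal_eq_toReal_iff' (hf1 x) (hg1 _)]
  by_contra hne
  rcases lt_or_gt_of_ne hne with hlt | hlt
  · obtain ⟨t, htQ, h1, h2⟩ := hQd.exists_between hlt
    exact (hx t htQ).2 ⟨h1.le, h2⟩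
  · obtain ⟨t, htQ, h1, h2⟩ := hQd.exists_between hlt
    exact (hx t htQ).1 ⟨h2, h1⟩

end

variable [StandardBorelSpace X] {μ : Measure X} {ν : Measure Y}
  [IsProbabilityMeasure μ] [IsProbabilityMeasure ν] {p : X → Y} {κ : Kernel Y X}
  [IsMarkovKernel κ] {T : X → X} {S : Y → Y}

/-- Let `B` be an invariant set of the relative product and `g x` the conditional measure of
`B_x ∩ A`. At any level `t` that `g` does not charge, the set `{g > t}` has zero relative entropy,
provided that the factor `p` does. Invariance of `B` turns `g ∘ T^i` into the conditional measure of
`B_x ∩ T^{-i} A`, so replacing `B` once by a finite union of rectangles approximates all the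
translates of `{g > t}` simultaneously by sets glued from `p`-measurable ones. -/
theorem zeroEnt_superlevel (h : IsDisintegration μ ν p κ) (hI : InvariantSub μ T C)
    (hS : MeasurePreserving S ν ν) (hSe : MeasurableEmbedding S) (hpT : p ∘ T = S ∘ p)
    (hz : ∀ F : Set Y, MeasurableSet F → ZeroEnt μ T C (bit (p ⁻¹' F)))
    {B : Set (X × X)} (hB : MeasurableSet B) (hBT : Prod.map T T ⁻¹' B = B)
    {A : Set X} (hA : MeasurableSet A) {t : ℝ}
    (ht : μ {x | (κ (p x)).real (Prod.mk x ⁻¹' B ∩ A) = t} = 0) :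
    ZeroEnt μ T C (bit {x | t < (κ (p x)).real (Prod.mk x ⁻¹' B ∩ A)}) := by
  have hp := h.mp.measurable
  have hBA : MeasurableSet (B ∩ Prod.snd ⁻¹' A) := hB.inter (measurable_snd hA)
  have hg : Measurable fun x => (κ (p x)).real (Prod.mk x ⁻¹' B ∩ A) :=
    (measurable_fibre hp hBA).ennreal_toReal
  have hD := measurableSet_lt (measurable_const (a := t)) hg
  intro η hη
  obtain ⟨ε, h0, h1, h2⟩ := exists_noisyCost_le (η := η / 4) (by positivity)
  obtain ⟨s, hs, hband⟩ := exists_measureReal_band_le hg ht (half_pos h0)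
  obtain ⟨E, hE, hBE⟩ := exists_isFibrewise_symmDiff_le (relProd ν κ) hB (δ := s * (ε / 2))
    (by positivity)
  have hEm := hE.measurableSet
  have hBEm := hB.symmDiff hEm
  -- the error in one fibre, and its distribution
  let d : X → ENNReal := fun x => κ (p x) (Prod.mk x ⁻¹' (symmDiff B E))
  have hd : Measurable d := measurable_fibre hp hBEm
  have hdm : μ.real {x | s ≤ (d x).toReal} ≤ ε / 2 := by
    have hmk := mul_meas_ge_le_lintegral (μ := μ) hd (ENNReal.ofReal s)
    rw [← h.relProd_eq hBEm] at hmk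
    have hmk' := ENNReal.toReal_mono (measure_ne_top _ _) hmk
    rw [ENNReal.toReal_mul, ENNReal.toReal_ofReal hs.le] at hmk'
    have hset : {x | ENNReal.ofReal s ≤ d x} = {x | s ≤ (d x).toReal} := by
      ext x
      exact ENNReal.ofReal_le_iff_le_toReal (measure_ne_top _ _)
    rw [hset] at hmk'
    exact le_of_mul_le_mul_left (hmk'.trans hBE) hs
  obtain ⟨k, c, A', hc, hA', rfl⟩ := hE
  have hTi := fun i => hI.mp.measurable.iterate i
  let F : ℕ → Fin k → Set Y := fun i j => {y | t < (κ y).real (A' j ∩ T^[i] ⁻¹' A)}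
  have hF : ∀ i j, MeasurableSet (F i j) := fun i j => measurableSet_lt measurable_const
    (κ.measurable_coe ((hA' j).inter (hTi i hA))).ennreal_toReal
  obtain ⟨N, hN, hle⟩ := exists_condHF_word_bit_le hI hD h0 h1 hc (fun i j => p ⁻¹' F i j)
    (fun i j => hp (hF i j)) (fun i j => hz _ (hF i j)) (by
      intro i
      have hB' : ∀ x, T^[i] ⁻¹' (Prod.mk (T^[i] x) ⁻¹' B) = Prod.mk x ⁻¹' B := by
        intro x
        have e1 : (Prod.map T T)^[i] ⁻¹' B = B := Function.IsFixedPt.preimage_iterate hBT i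
        conv_rhs => rw [← e1, Prod.map_iterate]
        rfl
      have hequi := h.mp.quasiMeasurePreserving.ae (h.ae_map_eq (hI.mp.iterate i) (hS.iterate i)
        (measurableEmbedding_iterate hSe i) (by
          ext x
          exact (Function.Semiconj.iterate_right (f := p) (ga := T) (gb := S)
            (fun x => congrFun hpT x) i) x))
      have hsub : {x | bit {x | t < (κ (p x)).real (Prod.mk x ⁻¹' B ∩ A)} (T^[i] x) ≠
          bit (p ⁻¹' F i (c x)) x} ≤ᵐ[μ]
          (T^[i] ⁻¹' {x | |(κ (p x)).real (Prod.mk x ⁻¹' B ∩ A) - t| ≤ s} ∪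
            {x | s ≤ (d x).toReal} : Set X) := by
        filter_upwards [hequi] with x hx hne
        have hpx : p (T^[i] x) = S^[i] (p x) :=
          (Function.Semiconj.iterate_right (f := p) (ga := T) (gb := S)
            (fun x => congrFun hpT x) i) x
        have e2 : (κ (p (T^[i] x))).real (Prod.mk (T^[i] x) ⁻¹' B ∩ A) =
            (κ (p x)).real (Prod.mk x ⁻¹' B ∩ T^[i] ⁻¹' A) := by
          rw [hpx, hx, measureReal_def, Measure.map_apply (hTi i)
            ((measurable_prodMk_left hB).inter hA), preimage_inter, hB' x, measureReal_def]
        have e3 : |(κ (p x)).real (Prod.mk x ⁻¹' B ∩ T^[i] ⁻¹' A) -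
            (κ (p x)).real (A' (c x) ∩ T^[i] ⁻¹' A)| ≤ (d x).toReal := by
          refine (abs_measureReal_sub_le_measureReal_symmDiff
            ((measurable_prodMk_left hB).inter (hTi i hA)).nullMeasurableSet
            ((hA' _).inter (hTi i hA)).nullMeasurableSet).trans ?_
          refine measureReal_mono ?_
          intro x'
          simp only [mem_symmDiff, mem_inter_iff, mem_preimage, mem_ofPred_eq]
          tauto
        by_contra hcon
        apply hne
        change ¬ (_ ∨ _) at hcon
        simp only [not_or, mem_preimage, mem_ofPred_eq, not_le, e2] at hcon
        simp only [bit, mem_ofPred_eq, decide_eq_decide, e2, mem_preimage, F]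
        obtain ⟨h3, h4⟩ := hcon
        rw [abs_le] at e3
        rw [lt_abs] at h3
        constructor <;> intro h5 <;> rcases h3 with h3 | h3 <;> linarith
      calc μ.real _ ≤ μ.real (T^[i] ⁻¹' {x | |(κ (p x)).real (Prod.mk x ⁻¹' B ∩ A) - t| ≤ s} ∪
            {x | s ≤ (d x).toReal}) := ENNReal.toReal_mono (measure_ne_top _ _)
              (measure_mono_ae hsub)
        _ ≤ _ := measureReal_union_le _ _
        _ ≤ ε / 2 + ε / 2 := by
          refine add_le_add ?_ hdm
          rw [(hI.mp.iterate i).measureReal_preimage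
            (measurableSet_le (hg.sub_const t).abs measurable_const).nullMeasurableSet]
          exact hband
        _ = ε := add_halves ε)
  exact ⟨N, hN, hle.trans (mul_le_mul_of_nonneg_left (by linarith) (by positivity))⟩


variable [StandardBorelSpace Y]

/-- The relative product over a factor `p` is ergodic as soon as the zero-entropy sets are exactly
the `p`-measurable ones. -/
theorem relProd_ergodic (h : IsDisintegration μ ν p κ) (hI : InvariantSub μ T C)
    (hT : Ergodic T μ) (hS : MeasurePreserving S ν ν) (hSe : MeasurableEmbedding S)
    (hpT : p ∘ T = S ∘ p)
    (hz : ∀ F : Set Y, MeasurableSet F → ZeroEnt μ T C (bit (p ⁻¹' F)))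
    (hz' : ∀ D : Set X, MeasurableSet D → ZeroEnt μ T C (bit D) →
      ∃ F, MeasurableSet F ∧ D =ᵐ[μ] (p ⁻¹' F : Set X)) :
    Ergodic (Prod.map T T) (relProd ν κ) := by
  have hp := h.mp.measurable
  refine ⟨h.measurePreserving_relProd hI.mp hS hSe hpT, ⟨fun B hB hBT => ?_⟩⟩
  have hBs : MeasurableSet (Prod.swap ⁻¹' B) := measurable_swap hB
  -- the conditional measure of the sections is an invariant function, hence constant
  obtain ⟨c, hc⟩ : ∃ c : ENNReal, ∀ᵐ x ∂μ, κ (p x) (Prod.mk x ⁻¹' (Prod.swap ⁻¹' B)) = c := by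
    refine hT.ae_eq_const_of_ae_eq_comp₀ (measurable_fibre hp hBs).nullMeasurable ?_
    filter_upwards [h.mp.quasiMeasurePreserving.ae (h.ae_map_eq hI.mp hS hSe hpT)] with x hx
    have hpx : p (T x) = S (p x) := congrFun hpT x
    simp only [Function.comp_apply]
    rw [hpx, hx, Measure.map_apply hI.mp.measurable (measurable_prodMk_left hBs)]
    congr 1
    conv_rhs => rw [← hBT]
    rfl
  have hc1 : c ≠ ⊤ := by
    obtain ⟨x, hx⟩ := hc.exists
    rw [← hx]
    exact measure_ne_top _ _
  have hsec : ∀ A, MeasurableSet A →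
      ∀ᵐ x ∂μ, κ (p x) (Prod.mk x ⁻¹' B ∩ A) = c * κ (p x) A := by
    intro A hA
    have hm : Measurable fun x => κ (p x) (Prod.mk x ⁻¹' B ∩ A) :=
      measurable_fibre hp (hB.inter (measurable_snd hA))
    refine ae_eq_of_superlevel hp (g := fun y => c * κ y A) hm
      ((κ.measurable_coe hA).const_mul c) (fun _ => measure_ne_top _ _)
      (fun _ => ENNReal.mul_ne_top hc1 (measure_ne_top _ _)) ?_ ?_ ?_
    · refine ((lintegral_mono fun x => prob_le_one).trans_lt ?_).ne (b := ⊤)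
      simp
    · intro t ht
      exact hz' _ (measurableSet_lt measurable_const hm.ennreal_toReal)
        (zeroEnt_superlevel h hI hS hSe hpT hz hB hBT hA ht)
    · exact fun F hF => h.setLIntegral_section hB hc hA hF
  have hrestr : (relProd ν κ).restrict B = c • relProd ν κ := by
    refine Measure.ext_prod fun {A' A} hA' hA => ?_
    rw [Measure.restrict_apply (hA'.prod hA), Measure.smul_apply, smul_eq_mul,
      h.relProd_eq ((hA'.prod hA).inter hB), h.relProd_eq (hA'.prod hA),
      ← lintegral_const_mul c (measurable_fibre hp (hA'.prod hA))]
    refine lintegral_congr_ae ?_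
    filter_upwards [hsec A hA] with x hx
    by_cases hxA : x ∈ A'
    · simp only [preimage_inter, mk_preimage_prod_right hxA]
      rw [inter_comm, hx]
    · simp only [preimage_inter, mk_preimage_prod_right_eq_empty hxA]
      simp
  have hcompl : c * relProd ν κ Bᶜ = 0 := by
    have := congrArg (fun m => m Bᶜ) hrestr
    simpa [Measure.restrict_apply hB.compl] using this.symm
  have hB0 : relProd ν κ B = c := by
    have := congrArg (fun m => m univ) hrestr
    simpa using this
  rw [eventuallyConst_set']
  rcases mul_eq_zero.1 hcompl with h0 | h0
  · left
    rw [h0] at hB0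
    exact ae_eq_empty.2 hB0
  · right
    exact ae_eq_univ.2 h0

end RelativeErgodicity

end

/-! ### The Pinsker factor -/

/-- **Theorem (properties of the Pinsker-factor disintegration under positive relative
entropy).** Let `π : (X,B,μ,T) → (Z,A,λ,R)` be a factor map between invertible Lebesgue
systems, `π₁ : (X,B,μ,T) → (Y,D,ν,S)` the Pinsker factor of `(X,B,μ,T)` with respect to `π`,
and `μ = ∫_Y μ_y dν(y)` the disintegration of `μ` over `(Y,D,ν,S)`. If `(X,B,μ,T)` is ergodic
and `h_μ(T|π) > 0`, then (1) `μ_y` is non-atomic for `ν`-a.e. `y`, and (2) the relative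
product `(X×X, B×B, μ×_Yμ, T×T)` is ergodic. -/
theorem pinsker_disintegration_nonatomic_and_relative_product_ergodic
    {X Y Z : Type*}
    [mX : MeasurableSpace X] [StandardBorelSpace X]
    [mY : MeasurableSpace Y] [StandardBorelSpace Y]
    [mZ : MeasurableSpace Z] [StandardBorelSpace Z]
    (μ : Measure X) (ν : Measure Y) (lam : Measure Z)
    [IsProbabilityMeasure μ] [IsProbabilityMeasure ν] [IsProbabilityMeasure lam]
    (T : X → X) (S : Y → Y) (R : Z → Z)
    (hTbij : Function.Bijective T) (hSbij : Function.Bijective S)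
    (hRbij : Function.Bijective R)
    (hT : MeasurePreserving T μ μ) (hS : MeasurePreserving S ν ν)
    (hR : MeasurePreserving R lam lam)
    (π : X → Z) (hπ : MeasurePreserving π μ lam) (hπT : π ∘ T = R ∘ π)
    (π₁ : X → Y) (hπ₁ : MeasurePreserving π₁ μ ν) (hπ₁T : π₁ ∘ T = S ∘ π₁)
    (hPinsker : EqModMeasure μ (MeasurableSpace.comap π₁ mY)
      (relPinsker μ T (MeasurableSpace.comap π mZ)))
    (μy : Y → Measure X) (hμyprob : ∀ y, IsProbabilityMeasure (μy y))
    (hfiber : ∀ᵐ y ∂ν, μy y (π₁ ⁻¹' {y}) = 1)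
    (hμymeas : ∀ s : Set X, MeasurableSet[mX] s → Measurable fun y => μy y s)
    (hdisint : ∀ s : Set X, MeasurableSet[mX] s → μ s = ∫⁻ y, μy y s ∂ν)
    (herg : Ergodic T μ)
    (hpos : 0 < hCond μ T (MeasurableSpace.comap π mZ)) :
    (∀ᵐ y ∂ν, ∀ x : X, μy y {x} = 0) ∧
    Ergodic (Prod.map T T) (ν.bind fun y => (μy y).prod (μy y)) := by
  have hTe : MeasurableEmbedding T := hT.measurable.measurableEmbedding hTbij.injective
  have hSe : MeasurableEmbedding S := hS.measurable.measurableEmbedding hSbij.injective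
  have hRe : MeasurableEmbedding R := hR.measurable.measurableEmbedding hRbij.injective
  have hI : InvariantSub μ T (MeasurableSpace.comap π mZ) := by
    refine ⟨hπ.measurable.comap_le, hT, hTe, ?_⟩
    rw [MeasurableSpace.comap_comp, hπT, ← MeasurableSpace.comap_comp, hRe.comap_eq]
  let κ : ProbabilityTheory.Kernel Y X := ⟨μy, Measure.measurable_of_measurable_coe _ hμymeas⟩
  have : ProbabilityTheory.IsMarkovKernel κ := ⟨hμyprob⟩
  have hdis : IsDisintegration μ ν π₁ κ := by
    refine .of_fibre hπ₁ ?_ hdisint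
    filter_upwards [hfiber] with y hy
    have hm := hπ₁.measurable (measurableSet_singleton y)
    exact (mem_ae_iff_prob_eq_one hm).2 hy
  have hz : ∀ F : Set Y, MeasurableSet F →
      ZeroEnt μ T (MeasurableSpace.comap π mZ) (bit (π₁ ⁻¹' F)) := by
    intro F hF
    obtain ⟨t, ht, hst⟩ := hPinsker.1 _ ⟨F, hF, rfl⟩
    obtain ⟨htm, htz⟩ := (measurableSet_relPinsker_iff hI).1 ht
    exact htz.bit_congr hI (hπ₁.measurable hF) htm hst
  have hz' : ∀ D : Set X, MeasurableSet D →
      ZeroEnt μ T (MeasurableSpace.comap π mZ) (bit D) →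
      ∃ F, MeasurableSet F ∧ D =ᵐ[μ] (π₁ ⁻¹' F : Set X) := by
    intro D hD hDz
    obtain ⟨_, ⟨F, hF, rfl⟩, hst⟩ :=
      hPinsker.2 _ ((measurableSet_relPinsker_iff hI).2 ⟨hD, hDz⟩)
    exact ⟨F, hF, measure_symmDiff_eq_zero_iff.1 hst⟩
  have hE : Ergodic (Prod.map T T) (relProd ν κ) :=
    relProd_ergodic hdis hI herg hS hSe hπ₁T hz hz'
  refine ⟨?_, hE⟩
  refine (ae_noAtom_or_ae_eq_preimage hdis hTbij.injective hE).resolve_right fun hall => ?_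
  refine hpos.ne' ?_
  have h0 : ∀ α : FinPart X mX, hPartCond μ T α.atom (MeasurableSpace.comap π mZ) = 0 := by
    refine fun α => hPartCond_eq_zero_of_atoms hI α fun i => ?_
    obtain ⟨F, hF, hAF⟩ := hall _ (α.meas i)
    exact (hz F hF).bit_congr hI (α.meas i) (hπ₁.measurable hF)
      (measure_symmDiff_eq_zero_iff.2 hAF)
  unfold hCond
  simp only [h0]
  exact Real.iSup_const_zero
end
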